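/- arXiv:1712.02953 — 2 statements merged into one kernel-verified Lean document; each statement's English description precedes it below -/
import Mathlib

section
/- Let 1 ≤ t < ∞ and let μ be a finite positive measure supported in a compact set K such that R^t(K,μ) is irreducible and abpe(R^t(K,μ)) = Ω, where Ω is open with K = closure(Ω). Let A : ℝ → ℝ be Lipschitz with graph LG, fix 0 < α < 1/‖A′‖_∞, suppose for each w ∈ ∂_I^{LG}K the upper cone Γ^+(w,α) is outer, and write μ = μ_a + μ_s with μ_a = (1/2π)·h·ℋ¹ restricted to ∂_I^{LG}K and μ_s singular with respect to ℋ¹ restricted to ∂_I^{LG}K. Let E = {w ∈ ∂_I^{LG}K : limsup_{δ→0} γ(Γ_δ^−(w,α) ∖ K)/δ > 0}. Then μ_a(E) = 0. -/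
/-!
Let `m` be Lebesgue measure on the line transported to the graph (`graphMeas`), and decompose
`μ = σ + k m` with `σ` singular to `m`; the measure `μ_a` is absolutely continuous with respect to
`m` (`hausdorff_ac`), so it lives on the part `k m`.

The heart of the argument is that if `g μ` annihilates `Rat(K)`, then the density `ψ = k g` vanishes
`m`-almost everywhere on `E` (`pointwise_zero`, `annih_ae_zero`). Let `w ∈ E` be a Lebesgue point.
At arbitrarily small scales `δ` there are a compact subset of the lower cone minus `K`, and a
function `f` analytic off it, bounded by `2`, with `f(z) ~ d / z` at infinity and `|d| ≥ c δ`. The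
upper cone being outer, there is also a disc of radius `ε δ` off `K` in the upper cone, with centre
`l` say. The test function `P(z) = f(z) - d / (z - l)` is analytic near `K`, hence
`∫ P g dμ = 0` by the Cauchy–Pompeiu formula (`annih_analytic`). It is dominated on `K` by
`δ² / (δ² + |z - w|²)`, so the singular part and the oscillation of `ψ` contribute only `o(δ)` to
this integral (`kern_tendsto`). What remains is `ψ(w) ∫ P dm`. The graph may be replaced by its
tangent of slope `s` at `w` up to `o(δ)` (`TestFn.graph_integral`), and since the tangent separates
the singularities of `f` from the pole `l`, residues give `∫ P dm = -2πi d / (1 + i s) + o(δ)`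
(`TestFn.integral_tangent`). As `|d| ≥ c δ`, this forces `ψ(w) = 0`.

Consequently every annihilator of `Rat(K)` vanishes on `E'`, a measurable version of `E` from which
a carrier of `σ` is removed, and `L^t` duality (`rtMem_of_annih`) puts `1_{E'}` in `R^t(K, μ)`. By
irreducibility `μ(E') = 0`, which is the claim, or `μ` is carried by `E'`. In the latter case there
are no nonzero annihilators, every bounded function lies in `R^t(K, μ)`, and this contradicts the
existence of bounded point evaluations (`not_evalBound`).
-/

open MeasureTheory Metric Filter Set Complex Topology Bornology
open scoped ENNReal NNReal Real

noncomputable section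

/-- Admissible-function quantity defining analytic capacity of a compact set. -/
def capAux (F : Set ℂ) : ℝ :=
  sSup {r : ℝ | ∃ f : ℂ → ℂ, DifferentiableOn ℂ f Fᶜ ∧ (∀ z ∈ Fᶜ, ‖f z‖ ≤ 1) ∧
    ∃ f0 d : ℂ, Tendsto f (cobounded ℂ) (𝓝 f0) ∧
      Tendsto (fun z => z * (f z - f0)) (cobounded ℂ) (𝓝 d) ∧ r = ‖d‖}

/-- Analytic capacity of an arbitrary set. -/
def anCap (E : Set ℂ) : ℝ :=
  sSup {r : ℝ | ∃ F : Set ℂ, IsCompact F ∧ F ⊆ E ∧ r = capAux F}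

/-- Nontangential approach region Γ_σ(z). -/
def ntRegion (σ : ℝ) (z : ℂ) : Set ℂ :=
  interior (convexHull ℝ ({z} ∪ ball (0 : ℂ) σ))

/-- Cauchy transform of the complex measure ρ dμ. -/
def cauchyT (μ : Measure ℂ) (ρ : ℂ → ℂ) (l : ℂ) : ℂ :=
  ∫ w, (w - l)⁻¹ * ρ w ∂μ

/-- The set U(ρ dμ) of absolute convergence of the Cauchy transform. -/
def cauchyDom (μ : Measure ℂ) (ρ : ℂ → ℂ) : Set ℂ :=
  {l | Integrable (fun w => (w - l)⁻¹ * ρ w) μ}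

/-- 1-dimensional radial maximal function of a (positive) measure. -/
def radialMax (m : Measure ℂ) (z : ℂ) : ℝ≥0∞ :=
  ⨆ (r : ℝ) (_ : 0 < r), m (ball z r) / ENNReal.ofReal r

/-- Normalized arclength measure `dθ/2π` on the unit circle. -/
def circleMeasure : Measure ℂ :=
  (ENNReal.ofReal (2 * Real.pi))⁻¹ •
    (Measure.map (fun θ : ℝ => Complex.exp ((θ : ℂ) * Complex.I))
      (volume.restrict (Ico (0:ℝ) (2 * Real.pi))))

/-- Rational functions with poles off K. -/
def RatOn (K : Set ℂ) : Set (ℂ → ℂ) :=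
  {f | ∃ p q : Polynomial ℂ, (∀ z ∈ K, q.eval z ≠ 0) ∧ f = fun z => p.eval z / q.eval z}

/-- The `L^t(μ)` norm, for a real exponent `t`. -/
def tnorm (t : ℝ) (μ : Measure ℂ) (f : ℂ → ℂ) : ℝ :=
  (∫ z, ‖f z‖ ^ t ∂μ) ^ (1 / t)

/-- `C` is a bound for the evaluation functional at `l` on `Rat(K) ⊆ L^t(μ)`. -/
def EvalBound (t : ℝ) (K : Set ℂ) (μ : Measure ℂ) (l : ℂ) (C : ℝ) : Prop :=
  ∀ f ∈ RatOn K, ‖f l‖ ≤ C * tnorm t μ f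

/-- The norm `M_λ` of the evaluation functional at `l` on `R^t(K,μ)`. -/
def evalNorm (t : ℝ) (K : Set ℂ) (μ : Measure ℂ) (l : ℂ) : ℝ :=
  sInf {C : ℝ | 0 ≤ C ∧ EvalBound t K μ l C}

/-- Analytic bounded point evaluations of `R^t(K,μ)`: points having a neighborhood of
bounded point evaluations with uniformly bounded evaluation functionals (equivalently,
on which all evaluations extend analytically). -/
def abpeSet (t : ℝ) (K : Set ℂ) (μ : Measure ℂ) : Set ℂ :=
  {l | ∃ δ : ℝ, 0 < δ ∧ ∃ C : ℝ, ∀ w ∈ ball l δ, EvalBound t K μ w C}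

/-- Membership in `R^t(K,μ)`, the closure of `Rat(K)` in `L^t(μ)`. -/
def RtMem (t : ℝ) (K : Set ℂ) (μ : Measure ℂ) (f : ℂ → ℂ) : Prop :=
  ∃ r : ℕ → ℂ → ℂ, (∀ n, r n ∈ RatOn K) ∧
    Tendsto (fun n => ∫ z, ‖r n z - f z‖ ^ t ∂μ) atTop (𝓝 0)

/-- `R^t(K,μ)` is irreducible: it contains no nontrivial characteristic function. -/
def RtIrred (t : ℝ) (K : Set ℂ) (μ : Measure ℂ) : Prop :=
  ∀ E : Set ℂ, MeasurableSet E → RtMem t K μ (E.indicator 1) → μ E = 0 ∨ μ Eᶜ = 0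

/-- The strong outer boundary `∂_so Ω`. -/
def strongOuter (Ω : Set ℂ) : Set ℂ :=
  {z | z ∈ frontier Ω ∧ ∃ δ : ℝ, 0 < δ ∧ δ < 1 ∧ ntRegion (1/2) z ∩ ball z δ ⊆ Ω}

/-- The open cone with vertical axis at `l` of aperture `α`. -/
def coneAt (l : ℂ) (α : ℝ) : Set ℂ := {z | |z.re - l.re| < α * |z.im - l.im|}

def coneUp (l : ℂ) (α : ℝ) : Set ℂ := {z | z ∈ coneAt l α ∧ l.im < z.im}

def coneDown (l : ℂ) (α : ℝ) : Set ℂ := {z | z ∈ coneAt l α ∧ z.im < l.im}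

def coneUpT (δ : ℝ) (l : ℂ) (α : ℝ) : Set ℂ := ball l δ ∩ coneUp l α

def coneDownT (δ : ℝ) (l : ℂ) (α : ℝ) : Set ℂ := ball l δ ∩ coneDown l α

/-- The graph of `A : ℝ → ℝ` inside `ℂ`. -/
def lipGraph (A : ℝ → ℝ) : Set ℂ := {z | z.im = A z.re}

/-- The upper cone at `l` is outer for `K`. -/
def upperOuter (K : Set ℂ) (l : ℂ) (α : ℝ) : Prop :=
  ∃ δl εl : ℝ, 0 < δl ∧ 0 < εl ∧ ∀ δ : ℝ, 0 < δ → δ < δl →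
    ∃ lδ : ℂ, ball lδ (εl * δ) ⊆ Kᶜ ∩ coneUpT δ l α

/-- The lower cone at `l` is outer for `K`. -/
def lowerOuter (K : Set ℂ) (l : ℂ) (α : ℝ) : Prop :=
  ∃ δl εl : ℝ, 0 < δl ∧ 0 < εl ∧ ∀ δ : ℝ, 0 < δ → δ < δl →
    ∃ lδ : ℂ, ball lδ (εl * δ) ⊆ Kᶜ ∩ coneDownT δ l α

/-- The type I boundary `∂_{I,α}^{LG} K`. -/
def typeI (K : Set ℂ) (A : ℝ → ℝ) (α : ℝ) : Set ℂ :=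
  {l | l ∈ lipGraph A ∧ l ∈ frontier K ∧ (upperOuter K l α ∨ lowerOuter K l α)}

def upperInner (Ω : Set ℂ) (l : ℂ) (α : ℝ) : Prop := ∃ δ : ℝ, 0 < δ ∧ coneUpT δ l α ⊆ Ω

def lowerInner (Ω : Set ℂ) (l : ℂ) (α : ℝ) : Prop := ∃ δ : ℝ, 0 < δ ∧ coneDownT δ l α ⊆ Ω

/-- The type II boundary `∂_{II,α}^{LG} K`. -/
def typeII (K : Set ℂ) (A : ℝ → ℝ) (Ω : Set ℂ) (α : ℝ) : Set ℂ :=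
  {l | l ∈ typeI K A α ∧ (upperInner Ω l α ∨ lowerInner Ω l α)}

/-- One-dimensional Hausdorff measure on `ℂ`. -/
def H1m : Measure ℂ := Measure.hausdorffMeasure 1

/-- Support of a positive measure. -/
def suppM (ν : Measure ℂ) : Set ℂ := {z | ∀ r : ℝ, 0 < r → 0 < ν (ball z r)}

/-! ### The Cauchy–Pompeiu formula and annihilating measures -/

/-- The Cauchy–Pompeiu formula at the origin, proved in polar coordinates. The numerator is
`u_x + i u_y = 2 ∂̄u`. -/
theorem pompeiu_zero (u : ℂ → ℂ) (hu : ContDiff ℝ 1 u) (hc : HasCompactSupport u) :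
    ∫ ζ : ℂ, (fderiv ℝ u ζ 1 + I * fderiv ℝ u ζ I) * ζ⁻¹ = -(2 * π) * u 0 := by
  obtain ⟨R, hR0, hR⟩ : ∃ R : ℝ, 0 < R ∧ ∀ z : ℂ, R < ‖z‖ → u z = 0 := by
    obtain ⟨R, hR⟩ := hc.isCompact.isBounded.subset_closedBall 0
    refine ⟨max R 1, by positivity, fun z hz => image_eq_zero_of_notMem_tsupport fun h => ?_⟩
    have := hR h
    simp only [mem_closedBall, dist_zero_right] at this
    exact absurd hz (not_lt.2 (this.trans (le_max_left _ _)))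
  have hR' : ∀ z : ℂ, R < ‖z‖ → fderiv ℝ u z = 0 := by
    intro z hz
    have : u =ᶠ[𝓝 z] fun _ => 0 := by
      filter_upwards [(isOpen_lt continuous_const continuous_norm).mem_nhds hz] with y hy
      exact hR y hy
    rw [this.fderiv_eq]; simp
  have hdiff : Differentiable ℝ u := hu.differentiable one_ne_zero
  have hDc : Continuous (fderiv ℝ u) := hu.continuous_fderiv one_ne_zero
  let e : ℝ → ℂ := fun θ => Complex.exp (θ * I)
  have hec : Continuous e := by fun_prop
  have hen : ∀ θ, ‖e θ‖ = 1 := fun θ => Complex.norm_exp_ofReal_mul_I θ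
  let P1 : ℝ × ℝ → ℂ := fun p => fderiv ℝ u (p.1 * e p.2) (e p.2)
  let P2 : ℝ × ℝ → ℂ := fun p => fderiv ℝ u (p.1 * e p.2) (I * e p.2)
  have hP1c : Continuous P1 := by
    exact (hDc.comp (by fun_prop)).clm_apply (by fun_prop)
  have hP2c : Continuous P2 := by
    exact (hDc.comp (by fun_prop)).clm_apply (by fun_prop)
  have hint : ∀ P : ℝ × ℝ → ℂ, Continuous P → (∀ p, R < p.1 → P p = 0) →
      IntegrableOn P (Ioi 0 ×ˢ Ioo (-π) π) := by
    intro P hP h0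
    have h1 : IntegrableOn P (Icc 0 R ×ˢ Icc (-π) π) :=
      hP.continuousOn.integrableOn_compact (isCompact_Icc.prod isCompact_Icc)
    have h2 : IntegrableOn P (Ioi R ×ˢ Ioo (-π) π) := by
      refine (integrableOn_zero (ε' := ℂ)).congr_fun (fun p hp => (h0 p hp.1).symm) ?_
      exact measurableSet_Ioi.prod measurableSet_Ioo
    refine (h1.union h2).mono_set ?_
    rintro ⟨r, θ⟩ ⟨h3, h4⟩
    rcases le_or_gt r R with h5 | h5
    · exact Or.inl ⟨⟨le_of_lt h3, h5⟩, Ioo_subset_Icc_self h4⟩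
    · exact Or.inr ⟨h5, h4⟩
  have hz : ∀ p : ℝ × ℝ, R < p.1 → R < ‖(p.1 : ℂ) * e p.2‖ := by
    intro p hp
    rw [norm_mul, hen, mul_one, Complex.norm_real]
    exact hp.trans_le (le_abs_self _)
  have hI1 := hint P1 hP1c (fun p hp => by simp [P1, hR' _ (hz p hp)])
  have hI2 := hint P2 hP2c (fun p hp => by simp [P2, hR' _ (hz p hp)])
  have hderr : ∀ θ r : ℝ, HasDerivAt (fun r : ℝ => u (r * e θ)) (P1 (r, θ)) r := by
    intro θ r
    have h1 : HasDerivAt (fun r : ℝ => (r : ℂ) * e θ) (e θ) r := by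
      simpa using (Complex.ofRealCLM.hasDerivAt (x := r)).mul_const (e θ)
    exact (hdiff _).hasFDerivAt.comp_hasDerivAt r h1
  have hdert : ∀ r θ : ℝ, HasDerivAt (fun θ : ℝ => u (r * e θ)) (r * P2 (r, θ)) θ := by
    intro r θ
    have h0 : HasDerivAt e (I * e θ) θ := by
      have : HasDerivAt (fun θ : ℝ => (θ : ℂ) * I) I θ := by
        simpa using (Complex.ofRealCLM.hasDerivAt (x := θ)).mul_const I
      simpa [e, mul_comm] using this.cexp
    have h1 : HasDerivAt (fun θ : ℝ => (r : ℂ) * e θ) (r * (I * e θ)) θ := h0.const_mul _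
    have h2 := (hdiff (r * e θ)).hasFDerivAt.comp_hasDerivAt θ h1
    have h3 : fderiv ℝ u (r * e θ) (r * (I * e θ)) = r * P2 (r, θ) := by
      simpa only [P2, Complex.real_smul] using (fderiv ℝ u (r * e θ)).map_smul r (I * e θ)
    rw [h3] at h2
    exact h2
  have hint1 : ∫ p in Ioi (0:ℝ) ×ˢ Ioo (-π) π, P1 p = -(2 * π) * u 0 := by
    have hI1' : Integrable P1 ((volume.restrict (Ioi (0:ℝ))).prod (volume.restrict (Ioo (-π) π))) := by
      rw [Measure.prod_restrict]; exact hI1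
    rw [Measure.volume_eq_prod, ← Measure.prod_restrict, integral_prod_symm _ hI1']
    have : ∀ θ : ℝ, ∫ r in Ioi (0:ℝ), P1 (r, θ) = - u 0 := by
      intro θ
      have hii : IntegrableOn (fun r => P1 (r, θ)) (Ioi 0) := by
        have h1 : IntegrableOn (fun r => P1 (r, θ)) (Icc 0 R) :=
          (Continuous.continuousOn (by fun_prop)).integrableOn_compact isCompact_Icc
        have h2 : IntegrableOn (fun r => P1 (r, θ)) (Ioi R) := by
          refine (integrableOn_zero (ε' := ℂ)).congr_fun (fun r hr => ?_) measurableSet_Ioi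
          simp [P1, hR' _ (hz (r, θ) hr)]
        refine (h1.union h2).mono_set fun r hr => ?_
        rcases le_or_gt r R with h5 | h5
        · exact Or.inl ⟨le_of_lt hr, h5⟩
        · exact Or.inr h5
      rw [integral_Ioi_of_hasDerivAt_of_tendsto' (fun r _ => hderr θ r) hii (m := 0)]
      · simp
      · refine tendsto_const_nhds.congr' ?_
        filter_upwards [eventually_gt_atTop R] with r hr
        exact (hR _ (hz (r, θ) hr)).symm
    simp only [this]
    simp only [integral_const, measureReal_restrict_apply_univ, Real.volume_real_Ioo]
    rw [max_eq_left (by linarith [Real.pi_pos]), Complex.real_smul]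
    push_cast; ring
  have hint2 : ∫ p in Ioi (0:ℝ) ×ˢ Ioo (-π) π, P2 p = 0 := by
    have hI2' : Integrable P2 ((volume.restrict (Ioi (0:ℝ))).prod (volume.restrict (Ioo (-π) π))) := by
      rw [Measure.prod_restrict]; exact hI2
    rw [Measure.volume_eq_prod, ← Measure.prod_restrict, integral_prod _ hI2']
    refine setIntegral_eq_zero_of_forall_eq_zero fun r hr => ?_
    have h1 : ∫ θ in (-π)..π, (r:ℂ) * P2 (r, θ) = 0 := by
      rw [intervalIntegral.integral_eq_sub_of_hasDerivAt (fun θ _ => hdert r θ)]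
      · simp [e]
      · exact (Continuous.intervalIntegrable (by fun_prop) _ _)
    rw [intervalIntegral.integral_const_mul] at h1
    have hr0 : (r:ℂ) ≠ 0 := by exact_mod_cast (ne_of_gt hr)
    have h2 := (mul_eq_zero.1 h1).resolve_left hr0
    rwa [intervalIntegral.integral_of_le (by linarith [Real.pi_pos]), integral_Ioc_eq_integral_Ioo] at h2
  rw [← Complex.integral_comp_polarCoord_symm]
  have key : ∀ p ∈ polarCoord.target, p.1 • ((fderiv ℝ u (Complex.polarCoord.symm p) 1 +
      I * fderiv ℝ u (Complex.polarCoord.symm p) I) * (Complex.polarCoord.symm p)⁻¹) =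
      P1 p + I * P2 p := by
    rintro ⟨r, θ⟩ ⟨hr, -⟩
    have hr0 : (r:ℂ) ≠ 0 := by exact_mod_cast (ne_of_gt hr)
    have he : (Real.cos θ + Real.sin θ * I : ℂ) = e θ := by
      simp [e, Complex.exp_mul_I]
    simp only [Complex.polarCoord_symm_apply, he, P1, P2]
    set D := fderiv ℝ u (r * e θ)
    have h1 : D (e θ) = Real.cos θ * D 1 + Real.sin θ * D I := by
      rw [← he]
      have : (Real.cos θ + Real.sin θ * I : ℂ) = Real.cos θ • (1:ℂ) + Real.sin θ • I := by simp
      rw [this, map_add, map_smul, map_smul]; simp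
    have h2 : D (I * e θ) = Real.cos θ * D I - Real.sin θ * D 1 := by
      rw [← he]
      have : (I * (Real.cos θ + Real.sin θ * I) : ℂ) = Real.cos θ • I - Real.sin θ • (1:ℂ) := by
        simp only [Complex.real_smul]; ring_nf; simp; ring
      rw [this, map_sub, map_smul, map_smul]; simp
    have he0 : e θ ≠ 0 := Complex.exp_ne_zero _
    have h3 : (e θ)⁻¹ = Real.cos θ - Real.sin θ * I := by
      refine inv_eq_of_mul_eq_one_right ?_
      rw [← he]
      have := Complex.cos_sq_add_sin_sq (θ:ℂ)
      push_cast
      ring_nf; rw [Complex.I_sq]; linear_combination this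
    rw [Complex.real_smul, mul_inv, h1, h2, h3]
    field_simp
    ring_nf; rw [Complex.I_sq]; ring
  rw [setIntegral_congr_fun polarCoord.open_target.measurableSet key]
  change ∫ p in Ioi (0:ℝ) ×ˢ Ioo (-π) π, P1 p + I * P2 p = _
  rw [integral_add hI1 (hI2.const_mul I), integral_const_mul, hint1, hint2]; simp

theorem pompeiu (u : ℂ → ℂ) (hu : ContDiff ℝ 1 u) (hc : HasCompactSupport u) (z : ℂ) :
    ∫ ζ : ℂ, (fderiv ℝ u ζ 1 + I * fderiv ℝ u ζ I) * (ζ - z)⁻¹ = -(2 * π) * u z := by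
  have h := pompeiu_zero (fun ζ => u (ζ + z)) (by fun_prop)
    (hc.comp_homeomorph (Homeomorph.addRight z))
  simp only [fderiv_comp_add_right, zero_add] at h
  rw [← h, ← integral_add_right_eq_self _ z]
  simp

theorem cutoff_exists (K F : Set ℂ) (hK : IsCompact K) (hF : IsCompact F) (hd : Disjoint K F)
    (f : ℂ → ℂ) (hf : DifferentiableOn ℂ f Fᶜ) :
    ∃ u : ℂ → ℂ, ContDiff ℝ 1 u ∧ HasCompactSupport u ∧ ∀ᶠ z in 𝓝ˢ K, u z = f z := by
  obtain ⟨V, hVc, hKV, hVF⟩ := exists_compact_between hK hF.isClosed.isOpen_compl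
    (subset_compl_iff_disjoint_right.2 hd)
  obtain ⟨θ, h1, h0, -⟩ := exists_contMDiffMap_one_nhds_of_subset_interior (n := 1) (modelWithCornersSelf ℝ ℂ)
    hK.isClosed hKV
  have hθ : ContDiff ℝ 1 (θ : ℂ → ℝ) := θ.contMDiff.contDiff
  have hts : tsupport θ ⊆ V := by
    refine closure_minimal (fun x hx => ?_) hVc.isClosed
    by_contra hxV
    exact hx (h0 x hxV)
  refine ⟨fun z => (θ z : ℂ) * f z, ?_, ?_, ?_⟩
  · rw [contDiff_iff_contDiffAt]
    intro z
    by_cases hz : z ∈ tsupport θ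
    · have h2 : ContDiffAt ℝ 1 f z :=
        ((hf.analyticAt (hF.isClosed.isOpen_compl.mem_nhds (hVF (hts hz)))).contDiffAt).restrict_scalars ℝ
      have h3 : ContDiffAt ℝ 1 (fun z => (θ z : ℂ)) z :=
        (Complex.ofRealCLM.contDiff.comp hθ).contDiffAt
      exact h3.mul h2
    · have : (fun z => (θ z : ℂ) * f z) =ᶠ[𝓝 z] fun _ => 0 := by
        filter_upwards [notMem_tsupport_iff_eventuallyEq.1 hz] with y hy
        simp [hy]
      exact contDiffAt_const.congr_of_eventuallyEq this
  · refine HasCompactSupport.intro hVc fun z hz => ?_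
    simp [h0 z hz]
  · filter_upwards [h1] with z hz
    simp [hz]

/-- If `g μ` annihilates all Cauchy kernels with pole off `K`, it annihilates every function
analytic near `K`: such a function, once cut off, is the Cauchy transform of its `∂̄`-derivative,
which vanishes near `K`, and Fubini's theorem applies. -/
theorem annih_analytic (μ : Measure ℂ) [IsFiniteMeasure μ] (K : Set ℂ) (hK : IsCompact K)
    (hμ : μ Kᶜ = 0) (g : ℂ → ℂ) (hg : Integrable g μ)
    (hann : ∀ ζ ∉ K, ∫ z, (z - ζ)⁻¹ * g z ∂μ = 0)
    (F : Set ℂ) (hF : IsCompact F) (hd : Disjoint K F)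
    (f : ℂ → ℂ) (hf : DifferentiableOn ℂ f Fᶜ) :
    ∫ z, f z * g z ∂μ = 0 := by
  obtain ⟨u, hu, huc, hfu⟩ := cutoff_exists K F hK hF hd f hf
  have hae : ∀ᵐ z ∂μ, z ∈ K := by
    rw [ae_iff]; exact hμ
  let D : ℂ → ℂ := fun ζ => fderiv ℝ u ζ 1 + I * fderiv ℝ u ζ I
  have hDcont : Continuous D := by
    have := hu.continuous_fderiv one_ne_zero
    fun_prop
  have hDc : HasCompactSupport D := by
    refine huc.fderiv (𝕜 := ℝ) |>.mono' ?_
    intro ζ hζ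
    apply subset_tsupport
    intro h
    apply hζ
    simp [D, h]
  have hDK : ∀ᶠ z in 𝓝ˢ K, D z = 0 := by
    rw [eventually_nhdsSet_iff_forall] at hfu ⊢
    intro z hz
    have hzF : z ∈ Fᶜ := fun h => hd.le_bot ⟨hz, h⟩
    filter_upwards [(hfu z hz).eventually_nhds, hF.isClosed.isOpen_compl.mem_nhds hzF] with y hy hyF
    have h1 : HasDerivAt f (deriv f y) y :=
      (hf.differentiableAt (hF.isClosed.isOpen_compl.mem_nhds hyF)).hasDerivAt
    have h2 : fderiv ℝ u y = fderiv ℝ f y := Filter.EventuallyEq.fderiv_eq hy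
    have h3 := (h1.hasFDerivAt.restrictScalars ℝ).fderiv
    simp only [D, h2, h3]
    simp
    linear_combination (deriv f y) * Complex.I_sq
  obtain ⟨W, hWo, hKW, hW⟩ := eventually_nhdsSet_iff_exists.1 hDK
  have hrep : ∀ z, -(2 * π) * u z = ∫ ζ, D ζ * (ζ - z)⁻¹ := fun z => (pompeiu u hu huc z).symm
  obtain ⟨r, hr, hdist⟩ : ∃ r > 0, ∀ z ∈ K, ∀ ζ ∉ W, r ≤ ‖ζ - z‖ := by
    obtain ⟨r, hr, h⟩ := hK.exists_thickening_subset_open hWo hKW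
    refine ⟨r, hr, fun z hz ζ hζ => ?_⟩
    by_contra hlt
    push Not at hlt
    exact hζ (h (mem_thickening_iff.2 ⟨z, hz, by rwa [dist_eq_norm]⟩))
  have hDint : Integrable D := hDcont.integrable_of_hasCompactSupport hDc
  have hmain : ∫ z, (-(2 * π) * u z) * g z ∂μ = 0 := by
    have e1 : ∀ z, (-(2 * π) * u z) * g z = ∫ ζ, D ζ * (ζ - z)⁻¹ * g z := by
      intro z
      rw [hrep, integral_mul_const]
    simp_rw [e1]
    rw [integral_integral_swap]
    · have : ∀ ζ, ∫ z, D ζ * (ζ - z)⁻¹ * g z ∂μ = 0 := by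
        intro ζ
        by_cases hζ : ζ ∈ W
        · simp [hW ζ hζ]
        · have h2 := hann ζ (fun h => hζ (hKW h))
          have : ∀ z, D ζ * (ζ - z)⁻¹ * g z = (-D ζ) * ((z - ζ)⁻¹ * g z) := by
            intro z
            rw [← neg_sub z ζ, inv_neg]; ring
          simp_rw [this]
          rw [integral_const_mul, h2, mul_zero]
      simp [this]
    · have hb : Integrable (fun p : ℂ × ℂ => r⁻¹ * (‖g p.1‖ * ‖D p.2‖)) (μ.prod volume) :=
        (hg.norm.mul_prod hDint.norm).const_mul _
      refine hb.mono ?_ ?_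
      · have h1 : AEStronglyMeasurable (fun p : ℂ × ℂ => g p.1) (μ.prod volume) :=
          hg.aestronglyMeasurable.comp_fst
        have h2 : Measurable (fun p : ℂ × ℂ => D p.2 * (p.2 - p.1)⁻¹) := by
          have := hDcont.measurable
          fun_prop
        exact h2.aestronglyMeasurable.mul h1
      · have hae' : ∀ᵐ p ∂(μ.prod (volume : Measure ℂ)), p.1 ∈ K :=
          Measure.quasiMeasurePreserving_fst.ae hae
        filter_upwards [hae'] with p hp
        simp only [Function.uncurry]
        by_cases hW' : p.2 ∈ W
        · simp [hW _ hW']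
        · have := hdist _ hp _ hW'
          have h3 : ‖p.2 - p.1‖⁻¹ ≤ r⁻¹ := by gcongr
          rw [norm_mul, norm_mul, norm_inv, Real.norm_of_nonneg (by positivity)]
          calc ‖D p.2‖ * ‖p.2 - p.1‖⁻¹ * ‖g p.1‖ ≤ ‖D p.2‖ * r⁻¹ * ‖g p.1‖ := by gcongr
            _ = _ := by ring
  have h4 : ∫ z, (-(2 * π) * u z) * g z ∂μ = (-(2 * π)) * ∫ z, f z * g z ∂μ := by
    rw [← integral_const_mul]
    refine integral_congr_ae ?_
    filter_upwards [hae] with z hz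
    rw [hfu.self_of_nhdsSet z hz]; ring
  rw [h4] at hmain
  refine (mul_eq_zero.1 hmain).resolve_left ?_
  simp [Real.pi_ne_zero]

/-! ### Expansions at infinity and contour integrals -/

/-- First-order expansion at infinity with explicit constants, from the Schwarz lemma applied to
`v ↦ f (w + 1 / v)` on the disc of radius `1 / δ`. -/
theorem laurent_bound {f : ℂ → ℂ} {F : Set ℂ} {w d : ℂ} {δ : ℝ} (hδ : 0 < δ)
    (hFc : IsCompact F) (hF : F ⊆ closedBall w δ) (hf : DifferentiableOn ℂ f Fᶜ)
    (hb : ∀ z ∈ Fᶜ, ‖f z‖ ≤ 2)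
    (h0 : Tendsto f (cobounded ℂ) (𝓝 0))
    (hd : Tendsto (fun z => z * f z) (cobounded ℂ) (𝓝 d)) :
    ‖d‖ ≤ 2 * δ ∧ ∀ z, δ < ‖z - w‖ → ‖f z - d / (z - w)‖ ≤ 4 * δ ^ 2 / ‖z - w‖ ^ 2 := by
  let h : ℂ → ℂ := fun v => if v = 0 then 0 else f (w + v⁻¹)
  have hh0 : h 0 = 0 := by simp [h]
  have hh : ∀ v, v ≠ 0 → h v = f (w + v⁻¹) := fun v hv => by simp [h, hv]
  have hmem : ∀ v ∈ ball (0:ℂ) δ⁻¹, v ≠ 0 → w + v⁻¹ ∈ Fᶜ := by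
    intro v hv hv0 hF'
    have h1 := hF hF'
    simp only [mem_closedBall, dist_eq_norm, add_sub_cancel_left, norm_inv] at h1
    simp only [mem_ball, dist_zero_right] at hv
    have h2 : 0 < ‖v‖ := norm_pos_iff.2 hv0
    have := (inv_lt_inv₀ (by positivity) h2).2 hv
    rw [inv_inv] at this
    linarith
  have hinf : Tendsto (fun v : ℂ => w + v⁻¹) (𝓝[≠] 0) (cobounded ℂ) :=
    (tendsto_const_add_cobounded w).comp tendsto_inv₀_nhdsNE_zero
  have hcont : ContinuousAt h 0 := by
    rw [continuousAt_iff_punctured_nhds, hh0]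
    refine (h0.comp hinf).congr' ?_
    filter_upwards [self_mem_nhdsWithin] with v hv
    exact (hh v hv).symm
  have hball : ball (0:ℂ) δ⁻¹ ∈ 𝓝 (0:ℂ) := ball_mem_nhds _ (by positivity)
  have hdiff : DifferentiableOn ℂ h (ball 0 δ⁻¹) := by
    rw [← Complex.differentiableOn_compl_singleton_and_continuousAt_iff hball]
    refine ⟨fun v hv => ?_, hcont⟩
    have hv0 : v ≠ 0 := hv.2
    have h1 : DifferentiableAt ℂ f (w + v⁻¹) :=
      hf.differentiableAt (hFc.isClosed.isOpen_compl.mem_nhds (hmem v hv.1 hv0))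
    have h2 : DifferentiableAt ℂ (fun v => f (w + v⁻¹)) v :=
      DifferentiableAt.comp v h1 ((differentiableAt_inv hv0).const_add w)
    refine (h2.congr_of_eventuallyEq ?_).differentiableWithinAt
    filter_upwards [isOpen_ne.mem_nhds hv0] with y hy
    exact hh y hy
  have hderiv : deriv h 0 = d := by
    have h1 : Tendsto (slope h 0) (𝓝[≠] 0) (𝓝 (deriv h 0)) :=
      hasDerivAt_iff_tendsto_slope.1 (hdiff.differentiableAt hball).hasDerivAt
    have h2 : Tendsto (fun z => (z - w) * f z) (cobounded ℂ) (𝓝 d) := by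
      have := hd.sub (h0.const_mul w)
      simpa [sub_mul] using this
    refine tendsto_nhds_unique h1 ((h2.comp hinf).congr' ?_)
    filter_upwards [self_mem_nhdsWithin] with v hv
    simp [slope_def_field, hh v hv, hh0]
    field_simp
  have hmaps : MapsTo h (ball 0 δ⁻¹) (closedBall (h 0) 2) := by
    intro v hv
    rw [hh0, mem_closedBall, dist_zero_right]
    by_cases hv0 : v = 0
    · simp [hv0, hh0]
    · rw [hh v hv0]; exact hb _ (hmem v hv hv0)
  have hk : ∀ v ∈ ball (0:ℂ) δ⁻¹, ‖dslope h 0 v‖ ≤ 2 * δ := by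
    intro v hv
    have := Complex.norm_dslope_le_div_of_mapsTo_ball hdiff hmaps hv
    simpa using this
  have hk0 : dslope h 0 0 = d := by rw [dslope_same, hderiv]
  have hdn : ‖d‖ ≤ 2 * δ := by
    rw [← hk0]; exact hk 0 (mem_ball_self (by positivity))
  refine ⟨hdn, fun z hz => ?_⟩
  have hkd : DifferentiableOn ℂ (dslope h 0) (ball 0 δ⁻¹) :=
    (Complex.differentiableOn_dslope hball).2 hdiff
  have hkmaps : MapsTo (dslope h 0) (ball 0 δ⁻¹) (closedBall (dslope h 0 0) (4 * δ)) := by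
    intro v hv
    rw [hk0, mem_closedBall, dist_eq_norm]
    calc _ ≤ ‖dslope h 0 v‖ + ‖d‖ := norm_sub_le _ _
      _ ≤ _ := by linarith [hk v hv]
  have hzpos : 0 < ‖z - w‖ := hδ.trans hz
  have hzw : z - w ≠ 0 := norm_pos_iff.1 hzpos
  set v := (z - w)⁻¹ with hv
  have hv0 : v ≠ 0 := inv_ne_zero hzw
  have hvb : v ∈ ball (0:ℂ) δ⁻¹ := by
    rw [mem_ball, dist_zero_right, hv, norm_inv]
    exact (inv_lt_inv₀ hzpos hδ).2 hz
  have h5 := Complex.norm_dslope_le_div_of_mapsTo_ball hkd hkmaps hvb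
  have h6 : f z - d / (z - w) = v * v * dslope (dslope h 0) 0 v := by
    rw [dslope_of_ne _ hv0, slope_def_field, hk0, dslope_of_ne _ hv0, slope_def_field, hh0, hh v hv0]
    have : w + v⁻¹ = z := by rw [hv, inv_inv]; ring
    rw [this, div_eq_mul_inv d, ← hv]
    field_simp
    ring
  rw [h6, norm_mul, norm_mul, hv, norm_inv]
  calc _ ≤ ‖z - w‖⁻¹ * ‖z - w‖⁻¹ * (4 * δ / δ⁻¹) := by gcongr
    _ = _ := by field_simp

/-- Cauchy's theorem in the upper half-plane, obtained from growing squares resting on the real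
axis. -/
theorem halfplane_integral {h : ℂ → ℂ} {C : ℝ} (hc : ContinuousOn h {v | 0 ≤ v.im})
    (hd : DifferentiableOn ℂ h {v | 0 < v.im})
    (hb : ∀ v : ℂ, 0 ≤ v.im → ‖h v‖ ≤ C / (1 + ‖v‖ ^ 2)) :
    Integrable (fun x : ℝ => h x) ∧ ∫ x : ℝ, h x = 0 := by
  have hC : 0 ≤ C := by
    have := hb 0 (by simp)
    simp at this
    exact (norm_nonneg _).trans this
  have hcr : Continuous (fun x : ℝ => h x) :=
    hc.comp_continuous (by fun_prop) (fun x => by simp)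
  have hint : Integrable (fun x : ℝ => h x) := by
    refine (integrable_inv_one_add_sq.const_mul C).mono hcr.aestronglyMeasurable ?_
    refine Eventually.of_forall fun x => ?_
    have := hb x (by simp)
    rw [Real.norm_of_nonneg (by positivity)]
    simpa [div_eq_mul_inv] using this
  refine ⟨hint, ?_⟩
  have h1 : Tendsto (fun R : ℝ => ∫ x in (-R)..R, h x) atTop (𝓝 (∫ x : ℝ, h x)) :=
    intervalIntegral_tendsto_integral hint tendsto_neg_atTop_atBot tendsto_id
  refine tendsto_nhds_unique h1 ?_
  have hbd : ∀ R : ℝ, 1 ≤ R → ‖∫ x in (-R)..R, h x‖ ≤ 4 * C / R := by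
    intro R hR
    have hR0 : 0 < R := by linarith
    have hre := Complex.integral_boundary_rect_eq_zero_of_continuousOn_of_differentiableOn h
      (-R : ℂ) (R + R * I) (hc.mono ?_) (hd.mono ?_)
    rotate_left
    · intro v hv
      have := hv.2
      simp [uIcc_of_le hR0.le] at this
      exact this.1
    · intro v hv
      have := hv.2
      simp [hR0.le] at this
      exact this.1
    simp at hre
    have hbb : ∀ v : ℂ, 0 ≤ v.im → R ≤ ‖v‖ → ‖h v‖ ≤ C / R ^ 2 := by
      intro v hv hRv
      refine (hb v hv).trans ?_
      gcongr
      nlinarith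
    have b1 : ‖∫ x in (-R)..R, h (x + R * I)‖ ≤ C / R ^ 2 * |R - (-R)| := by
      refine intervalIntegral.norm_integral_le_of_norm_le_const fun x _ => hbb _ (by simp [hR0.le]) ?_
      simpa [abs_of_pos hR0] using Complex.abs_im_le_norm (x + R * I)
    have b2 : ‖∫ y in (0:ℝ)..R, h (R + y * I)‖ ≤ C / R ^ 2 * |R - 0| := by
      refine intervalIntegral.norm_integral_le_of_norm_le_const fun x hx => hbb _ ?_ ?_
      · rw [uIoc_of_le hR0.le] at hx; simp [hx.1.le]
      simpa [abs_of_pos hR0] using Complex.abs_re_le_norm (R + x * I)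
    have b3 : ‖∫ y in (0:ℝ)..R, h (-R + y * I)‖ ≤ C / R ^ 2 * |R - 0| := by
      refine intervalIntegral.norm_integral_le_of_norm_le_const fun x hx => hbb _ ?_ ?_
      · rw [uIoc_of_le hR0.le] at hx; simp [hx.1.le]
      simpa [abs_of_pos hR0] using Complex.abs_re_le_norm (-R + x * I)
    have e : ∫ x in (-R)..R, h x = (∫ x in (-R)..R, h (x + R * I))
        - I * (∫ y in (0:ℝ)..R, h (R + y * I)) + I * (∫ y in (0:ℝ)..R, h (-R + y * I)) := by
      linear_combination hre
    rw [e]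
    refine (norm_add_le _ _).trans ((add_le_add (norm_sub_le _ _) le_rfl).trans ?_)
    simp only [norm_mul, Complex.norm_I, one_mul]
    have a1 : |R - (-R)| = 2 * R := by rw [abs_of_pos] <;> linarith
    have a2 : |R - 0| = R := by rw [abs_of_pos] <;> linarith
    rw [a1] at b1; rw [a2] at b2 b3
    calc _ ≤ C / R ^ 2 * (2 * R) + C / R ^ 2 * R + C / R ^ 2 * R := by gcongr
      _ = _ := by field_simp; ring
  refine squeeze_zero_norm' (a := fun R => 4 * C / R) ?_ ?_
  · filter_upwards [eventually_ge_atTop 1] with R hR using hbd R hR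
  · exact tendsto_const_nhds.div_atTop tendsto_id

/-- `halfplane_integral` with the quadratic decay required only far from the origin. -/
theorem halfplane_integral' {h : ℂ → ℂ} {C₁ C₂ R : ℝ}
    (hd : ∀ v : ℂ, 0 ≤ v.im → DifferentiableAt ℂ h v)
    (hb : ∀ v : ℂ, 0 ≤ v.im → ‖h v‖ ≤ C₁)
    (hb' : ∀ v : ℂ, 0 ≤ v.im → R < ‖v‖ → ‖h v‖ ≤ C₂ / ‖v‖ ^ 2) :
    Integrable (fun x : ℝ => h x) ∧ ∫ x : ℝ, h x = 0 := by
  have hC1 : 0 ≤ C₁ := (norm_nonneg _).trans (hb 0 (by simp))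
  refine halfplane_integral (C := C₁ * (1 + (max R 1) ^ 2) + 2 * |C₂|)
    (fun v hv => (hd v hv).continuousAt.continuousWithinAt)
    (fun v hv => (hd v (le_of_lt hv)).differentiableWithinAt) fun v hv => ?_
  rw [le_div_iff₀ (by positivity)]
  rcases le_or_gt ‖v‖ (max R 1) with h1 | h1
  · have h2 : ‖h v‖ * (1 + ‖v‖ ^ 2) ≤ C₁ * (1 + (max R 1) ^ 2) := by
      gcongr
      exact hb v hv
    have := abs_nonneg C₂
    linarith
  · have h2 : 1 < ‖v‖ := (le_max_right _ _).trans_lt h1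
    have h3 := hb' v hv ((le_max_left _ _).trans_lt h1)
    have h4 : ‖h v‖ * ‖v‖ ^ 2 ≤ |C₂| := by
      rw [← le_div_iff₀ (by positivity)]
      refine h3.trans ?_
      gcongr
      exact le_abs_self _
    have h5 : 0 ≤ C₁ * (1 + (max R 1) ^ 2) := by positivity
    nlinarith [norm_nonneg (h v), mul_nonneg (norm_nonneg (h v)) (sq_nonneg (‖v‖ - 1))]

theorem ne_zero_of_im_pos {z : ℂ} (h : 0 < z.im) : z ≠ 0 := by
  rintro rfl; simp at h

theorem differentiableAt_inv_add {v a : ℂ} (h : v + a ≠ 0) :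
    DifferentiableAt ℂ (fun v : ℂ => (v + a)⁻¹) v :=
  (differentiableAt_id.add_const a).inv h

theorem norm_inv_add_le {v a : ℂ} (hv : 0 ≤ v.im) (ha : 0 < a.im) : ‖(v + a)⁻¹‖ ≤ a.im⁻¹ := by
  rw [norm_inv]
  gcongr
  have := Complex.abs_im_le_norm (v + a)
  rw [Complex.add_im] at this
  linarith [le_abs_self (v.im + a.im)]

theorem norm_inv_add_le' {v a : ℂ} (hv : 2 * ‖a‖ < ‖v‖) : ‖(v + a)⁻¹‖ ≤ 2 * ‖v‖⁻¹ := by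
  have h1 : ‖v‖ / 2 ≤ ‖v + a‖ := by
    have := norm_sub_le (v + a) a
    simp at this
    linarith
  have h0 : 0 < ‖v‖ := lt_of_le_of_lt (by positivity) hv
  rw [norm_inv]
  calc _ ≤ (‖v‖ / 2)⁻¹ := by gcongr
    _ = _ := by field_simp

theorem integral_inv_sub_inv {a b : ℂ} (ha : 0 < a.im) (hb : 0 < b.im) :
    Integrable (fun x : ℝ => ((x:ℂ) + a)⁻¹ - ((x:ℂ) + b)⁻¹) ∧
    ∫ x : ℝ, (((x:ℂ) + a)⁻¹ - ((x:ℂ) + b)⁻¹) = 0 := by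
  have hne : ∀ v c : ℂ, 0 ≤ v.im → 0 < c.im → v + c ≠ 0 := fun v c hv hc =>
    ne_zero_of_im_pos (by rw [Complex.add_im]; linarith)
  refine halfplane_integral' (h := fun v => (v + a)⁻¹ - (v + b)⁻¹) (C₁ := a.im⁻¹ + b.im⁻¹)
    (C₂ := ‖b - a‖ * 4) (R := 2 * ‖a‖ + 2 * ‖b‖) ?_ ?_ ?_
  · intro v hv
    exact (differentiableAt_inv_add (hne v a hv ha)).sub (differentiableAt_inv_add (hne v b hv hb))
  · intro v hv
    exact (norm_sub_le _ _).trans (add_le_add (norm_inv_add_le hv ha) (norm_inv_add_le hv hb))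
  · intro v hv hR
    have h1 := hne v a hv ha
    have h2 := hne v b hv hb
    have : (v + a)⁻¹ - (v + b)⁻¹ = (b - a) * ((v + a)⁻¹ * (v + b)⁻¹) := by field_simp; ring
    rw [this, norm_mul, norm_mul]
    have k1 := norm_inv_add_le' (v := v) (a := a) (by linarith [norm_nonneg b])
    have k2 := norm_inv_add_le' (v := v) (a := b) (by linarith [norm_nonneg a])
    calc _ ≤ ‖b - a‖ * ((2 * ‖v‖⁻¹) * (2 * ‖v‖⁻¹)) := by gcongr
      _ = _ := by rw [div_eq_mul_inv, ← inv_pow]; ring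

/-- A residue computation: `φ - β / (v + i)` is analytic in the upper half-plane with quadratic decay,
so only the difference of the two Cauchy kernels `β / (x + i)` and `β / (x - p)` contributes. -/
theorem line_integral {φ : ℂ → ℂ} {β p : ℂ} {R B M : ℝ} (hp : 0 < p.im)
    (hφ : ∀ v : ℂ, 0 ≤ v.im → DifferentiableAt ℂ φ v)
    (hb : ∀ v : ℂ, 0 ≤ v.im → ‖φ v‖ ≤ M)
    (hl : ∀ v : ℂ, 0 ≤ v.im → R < ‖v‖ → ‖φ v - β / v‖ ≤ B / ‖v‖ ^ 2) :
    ∫ x : ℝ, (φ x - β / (x - p)) = -(2 * π * I) * β := by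
  have hne : ∀ v c : ℂ, 0 ≤ v.im → 0 < c.im → v + c ≠ 0 := fun v c hv hc =>
    ne_zero_of_im_pos (by rw [Complex.add_im]; linarith)
  have hI : (0:ℝ) < I.im := by simp
  have s1 := halfplane_integral' (h := fun v => φ v - β * (v + I)⁻¹) (C₁ := M + ‖β‖)
    (C₂ := B + 2 * ‖β‖) (R := max R 2) ?_ ?_ ?_
  rotate_left
  · intro v hv
    exact (hφ v hv).sub ((differentiableAt_inv_add (hne v I hv hI)).const_mul β)
  · intro v hv
    refine (norm_sub_le _ _).trans (add_le_add (hb v hv) ?_)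
    rw [norm_mul]
    have := norm_inv_add_le (v := v) hv hI
    simp only [Complex.I_im, inv_one] at this
    exact mul_le_of_le_one_right (norm_nonneg _) this
  · intro v hv hR
    have hv2 : 2 < ‖v‖ := (le_max_right _ _).trans_lt hR
    have hv0 : v ≠ 0 := norm_pos_iff.1 (by linarith)
    have h2 := hne v I hv hI
    have e : φ v - β * (v + I)⁻¹ = (φ v - β / v) + β * I * (v⁻¹ * (v + I)⁻¹) := by
      field_simp; ring
    rw [e]
    refine (norm_add_le _ _).trans ?_
    rw [add_div]
    refine add_le_add (hl v hv ((le_max_left _ _).trans_lt hR)) ?_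
    have k := norm_inv_add_le' (v := v) (a := I) (by simpa using hv2)
    rw [norm_mul, norm_mul, norm_mul, Complex.norm_I, mul_one, norm_inv v]
    calc _ ≤ ‖β‖ * (‖v‖⁻¹ * (2 * ‖v‖⁻¹)) := by gcongr
      _ = _ := by rw [div_eq_mul_inv, ← inv_pow]; ring
  have s2 := integral_inv_sub_inv (a := I) (b := p) hI hp
  have s2i : Integrable (fun x : ℝ => ((x:ℂ) - I)⁻¹ - ((x:ℂ) - p)⁻¹) := by
    refine (s2.1.comp_neg.neg).congr (Eventually.of_forall fun x => ?_)
    simp only [Pi.neg_apply, Complex.ofReal_neg]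
    rw [show -(x:ℂ) + I = -(x - I) by ring, show -(x:ℂ) + p = -(x - p) by ring, inv_neg, inv_neg]
    ring
  have s2v : ∫ x : ℝ, (((x:ℂ) - I)⁻¹ - ((x:ℂ) - p)⁻¹) = 0 := by
    have := s2.2
    rw [← integral_neg_eq_self] at this
    rw [← neg_eq_zero, ← integral_neg, ← this]
    refine integral_congr_ae (Eventually.of_forall fun x => ?_)
    simp only [Complex.ofReal_neg]
    rw [show -(x:ℂ) + I = -(x - I) by ring, show -(x:ℂ) + p = -(x - p) by ring, inv_neg, inv_neg]
    ring
  have hxx : ∀ x : ℝ, ((x:ℂ) + I)⁻¹ - ((x:ℂ) - I)⁻¹ = (-2 * I) * (((1 + x ^ 2)⁻¹ : ℝ) : ℂ) := by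
    intro x
    have h1 : (x:ℂ) + I ≠ 0 := hne x I (by simp) hI
    have h2 : (x:ℂ) - I ≠ 0 := by
      intro h; have := congrArg Complex.im h; simp at this
    have h3 : (1 + (x:ℂ) ^ 2) = (x + I) * (x - I) := by ring_nf; rw [Complex.I_sq]; ring
    push_cast
    rw [h3]
    field_simp
    ring
  have s3i : Integrable (fun x : ℝ => ((x:ℂ) + I)⁻¹ - ((x:ℂ) - I)⁻¹) := by
    simp_rw [hxx]
    exact (integrable_inv_one_add_sq.ofReal).const_mul _
  have s3v : ∫ x : ℝ, (((x:ℂ) + I)⁻¹ - ((x:ℂ) - I)⁻¹) = -(2 * π * I) := by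
    simp_rw [hxx]
    rw [integral_const_mul, integral_complex_ofReal, integral_univ_inv_one_add_sq]
    ring
  have e : ∀ x : ℝ, φ x - β / (x - p) = (φ x - β * ((x:ℂ) + I)⁻¹) +
      (β * (((x:ℂ) + I)⁻¹ - ((x:ℂ) - I)⁻¹) + β * (((x:ℂ) - I)⁻¹ - ((x:ℂ) - p)⁻¹)) := by
    intro x; rw [div_eq_mul_inv]; ring
  simp_rw [e]
  have hadd : Integrable (fun x : ℝ => β * (((x:ℂ) + I)⁻¹ - ((x:ℂ) - I)⁻¹) +
      β * (((x:ℂ) - I)⁻¹ - ((x:ℂ) - p)⁻¹)) := (s3i.const_mul β).add (s2i.const_mul β)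
  rw [integral_add s1.1 hadd,
    integral_add (s3i.const_mul β) (s2i.const_mul β), integral_const_mul, integral_const_mul, s1.2,
    s2v, s3v]
  ring

/-! ### Duality of `L^t` -/

/-- For a continuous functional `φ` on `L^p`, `p < ∞`, the set function `S ↦ φ (1_S)` is a complex
measure. -/
theorem lp_complexMeasure {μ : Measure ℂ} [IsFiniteMeasure μ] {p : ℝ≥0∞} [Fact (1 ≤ p)]
    (hp : p ≠ ∞) (φ : Lp ℂ p μ →L[ℂ] ℂ) :
    ∃ c : ComplexMeasure ℂ, ∀ S (hS : MeasurableSet S),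
      c S = φ (indicatorConstLp p hS (measure_ne_top μ S) 1) := by
  classical
  set ν : Set ℂ → ℂ := fun S => if hS : MeasurableSet S then
    φ (indicatorConstLp p hS (measure_ne_top μ S) 1) else 0 with hν
  have hνS : ∀ S (hS : MeasurableSet S), ν S = φ (indicatorConstLp p hS (measure_ne_top μ S) 1) :=
    fun S hS => by simp [hν, hS]
  have h0 : ν ∅ = 0 := by rw [hνS _ MeasurableSet.empty, indicatorConstLp_empty, map_zero]
  refine ⟨⟨ν, h0, fun S hS => by simp [hν, hS], ?_⟩, hνS⟩
  intro f hf hd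
  have hfin : ∀ s : Finset ℕ, ∑ i ∈ s, ν (f i) = ν (⋃ i ∈ s, f i) := by
    intro s
    induction s using Finset.induction_on with
    | empty => simp [h0]
    | insert a s ha ih =>
      rw [Finset.sum_insert ha, ih, Finset.set_biUnion_insert, hνS _ (hf a),
        hνS _ (Finset.measurableSet_biUnion _ fun i _ => hf i),
        hνS _ ((hf a).union (Finset.measurableSet_biUnion _ fun i _ => hf i)),
        indicatorConstLp_disjoint_union, map_add]
      rw [Set.disjoint_iUnion₂_right]
      intro i hi
      exact hd (by rintro rfl; exact ha hi)
  change Tendsto _ _ _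
  rw [SummationFilter.unconditional_filter]
  simp_rw [hfin]
  rw [hνS _ (MeasurableSet.iUnion hf)]
  simp_rw [fun s : Finset ℕ => hνS _ (Finset.measurableSet_biUnion s fun i _ => hf i)]
  refine (φ.continuous.tendsto _).comp (tendsto_indicatorConstLp_set hp ?_)
  have hsub : ∀ s : Finset ℕ, (⋃ i ∈ s, f i) ⊆ ⋃ i, f i := fun s =>
    iUnion₂_subset fun i _ => subset_iUnion f i
  have e : ∀ s : Finset ℕ, μ (symmDiff (⋃ i ∈ s, f i) (⋃ i, f i)) = μ (⋃ i, f i) - ∑ i ∈ s, μ (f i) := by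
    intro s
    rw [Set.symmDiff_def]
    rw [Set.sdiff_eq_empty.2 (hsub s),
      Set.empty_union, measure_sdiff (hsub s)
      (Finset.measurableSet_biUnion s fun i _ => hf i).nullMeasurableSet (measure_ne_top _ _),
      measure_biUnion_finset (fun i _ j _ hij => hd hij) fun i _ => hf i]
  simp_rw [e]
  have := (ENNReal.summable (f := fun i => μ (f i))).hasSum
  rw [← measure_iUnion hd hf] at this
  have h2 := ENNReal.Tendsto.sub (tendsto_const_nhds (x := μ (⋃ i, f i))) this
    (Or.inl (measure_ne_top μ _))
  rw [tsub_self] at h2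
  simpa using h2

/-- The Radon–Nikodym density of `S ↦ φ (1_S)` with respect to `μ`. -/
theorem lp_repr_sets {μ : Measure ℂ} [IsFiniteMeasure μ] {p : ℝ≥0∞} [Fact (1 ≤ p)]
    (hp : p ≠ ∞) (φ : Lp ℂ p μ →L[ℂ] ℂ) :
    ∃ g : ℂ → ℂ, Measurable g ∧ Integrable g μ ∧ ∀ S (hS : MeasurableSet S),
      φ (indicatorConstLp p hS (measure_ne_top μ S) 1) = ∫ z in S, g z ∂μ := by
  obtain ⟨c, hc⟩ := lp_complexMeasure hp φ
  have hac : ∀ S, MeasurableSet S → μ S = 0 → c S = 0 := by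
    intro S hS h0
    rw [hc S hS]
    have : indicatorConstLp p hS (measure_ne_top μ S) (1:ℂ) = 0 := by
      rw [← norm_eq_zero, norm_indicatorConstLp (zero_lt_one.trans_le Fact.out).ne' hp]
      have h1 : μ.real S = 0 := by simp [Measure.real, h0]
      have h2 : p.toReal ≠ 0 := (ENNReal.toReal_pos (zero_lt_one.trans_le Fact.out).ne' hp).ne'
      rw [h1, Real.zero_rpow (by positivity)]
      simp
    rw [this, map_zero]
  have hre : c.re ≪ᵥ μ.toENNRealVectorMeasure := by
    refine VectorMeasure.AbsolutelyContinuous.mk fun S hS h0 => ?_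
    rw [Measure.toENNRealVectorMeasure_apply_measurable hS] at h0
    exact congrArg Complex.re (hac S hS h0)
  have him : c.im ≪ᵥ μ.toENNRealVectorMeasure := by
    refine VectorMeasure.AbsolutelyContinuous.mk fun S hS h0 => ?_
    rw [Measure.toENNRealVectorMeasure_apply_measurable hS] at h0
    exact congrArg Complex.im (hac S hS h0)
  have h1 := SignedMeasure.withDensityᵥ_rnDeriv_eq _ _ hre
  have h2 := SignedMeasure.withDensityᵥ_rnDeriv_eq _ _ him
  have i1 := SignedMeasure.integrable_rnDeriv c.re μ
  have i2 := SignedMeasure.integrable_rnDeriv c.im μ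
  refine ⟨fun z => (c.re.rnDeriv μ z : ℂ) + (c.im.rnDeriv μ z : ℂ) * I, ?_,
    i1.ofReal.add (i2.ofReal.mul_const _), fun S hS => ?_⟩
  · have := SignedMeasure.measurable_rnDeriv c.re μ
    have := SignedMeasure.measurable_rnDeriv c.im μ
    fun_prop
  · rw [← hc S hS, integral_add i1.ofReal.restrict (i2.ofReal.mul_const _).restrict,
      integral_mul_const]
    have e1 : (c S).re = ∫ z in S, c.re.rnDeriv μ z ∂μ := by
      rw [← withDensityᵥ_apply i1 hS, h1]; rfl
    have e2 : (c S).im = ∫ z in S, c.im.rnDeriv μ z ∂μ := by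
      rw [← withDensityᵥ_apply i2 hS, h2]; rfl
    rw [integral_complex_ofReal, integral_complex_ofReal, ← e1, ← e2, Complex.re_add_im]

theorem tendsto_eLpNorm_of_bounded {μ : Measure ℂ} [IsFiniteMeasure μ] {p : ℝ≥0∞}
    (hp1 : 1 ≤ p) (hp : p ≠ ∞) {s : ℕ → ℂ → ℂ} {f : ℂ → ℂ} {B : ℝ} (hs : ∀ n, Measurable (s n))
    (hf : Measurable f) (hB : ∀ n z, ‖s n z‖ ≤ B) (hfB : ∀ z, ‖f z‖ ≤ B)
    (hl : ∀ z, Tendsto (fun n => s n z) atTop (𝓝 (f z))) :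
    Tendsto (fun n => eLpNorm (s n - f) p μ) atTop (𝓝 0) := by
  have hp0 : p ≠ 0 := (zero_lt_one.trans_le hp1).ne'
  have hpr : 0 < p.toReal := ENNReal.toReal_pos hp0 hp
  simp_rw [eLpNorm_eq_lintegral_rpow_enorm_toReal hp0 hp]
  have h1 : Tendsto (fun n => ∫⁻ z, ‖(s n - f) z‖ₑ ^ p.toReal ∂μ) atTop
      (𝓝 (∫⁻ z, (0:ℝ≥0∞) ∂μ)) := by
    refine tendsto_lintegral_of_dominated_convergence
      (fun _ => (ENNReal.ofReal (2 * B)) ^ p.toReal) (fun n => ?_) (fun n => ?_) ?_ ?_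
    · have := hs n
      simp only [Pi.sub_apply]
      fun_prop
    · refine Eventually.of_forall fun z => ?_
      simp only [Pi.sub_apply]
      gcongr
      rw [← ofReal_norm]
      apply ENNReal.ofReal_le_ofReal
      linarith [norm_sub_le (s n z) (f z), hB n z, hfB z]
    · rw [lintegral_const]
      exact ENNReal.mul_ne_top (ENNReal.rpow_ne_top_of_nonneg hpr.le ENNReal.ofReal_ne_top)
        (measure_ne_top _ _)
    · refine Eventually.of_forall fun z => ?_
      have h3 : Tendsto (fun n => ‖s n z - f z‖ₑ) atTop (𝓝 0) := by
        have := ((hl z).sub_const (f z)).enorm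
        simpa using this
      have := (ENNReal.continuous_rpow_const (y := p.toReal)).tendsto 0
      rw [ENNReal.zero_rpow_of_pos hpr] at this
      exact this.comp h3
  rw [lintegral_zero] at h1
  have := (ENNReal.continuous_rpow_const (y := 1 / p.toReal)).tendsto 0
  rw [ENNReal.zero_rpow_of_pos (by positivity)] at this
  exact this.comp h1

theorem memLp_of_bdd {μ : Measure ℂ} [IsFiniteMeasure μ] {p : ℝ≥0∞} {f : ℂ → ℂ} {B : ℝ}
    (hf : Measurable f) (hfB : ∀ z, ‖f z‖ ≤ B) : MemLp f p μ :=
  MemLp.of_bound hf.aestronglyMeasurable B (Eventually.of_forall hfB)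

/-- Continuous functionals on `L^p(μ)`, for `μ` finite and `p < ∞`, are given on bounded
functions by integration against an `L¹` density. -/
theorem lp_repr {μ : Measure ℂ} [IsFiniteMeasure μ] {p : ℝ≥0∞} [Fact (1 ≤ p)]
    (hp : p ≠ ∞) (φ : Lp ℂ p μ →L[ℂ] ℂ) :
    ∃ g : ℂ → ℂ, Measurable g ∧ Integrable g μ ∧ ∀ (f : ℂ → ℂ) (hf : MemLp f p μ), Measurable f →
      (∃ B, ∀ z, ‖f z‖ ≤ B) → φ (hf.toLp f) = ∫ z, f z * g z ∂μ := by
  obtain ⟨g, hgm, hgi, hg⟩ := lp_repr_sets hp φ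
  refine ⟨g, hgm, hgi, ?_⟩
  have hsimp : ∀ s : SimpleFunc ℂ ℂ, ∀ hs : MemLp s p μ, φ (hs.toLp s) = ∫ z, s z * g z ∂μ := by
    intro s
    induction s using SimpleFunc.induction with
    | const c hS =>
      rename_i S
      intro hs
      have e1 : hs.toLp _ = c • indicatorConstLp p hS (measure_ne_top μ S) (1:ℂ) := by
        rw [indicatorConstLp, ← MemLp.toLp_const_smul]
        congr 1
        ext z
        by_cases hz : z ∈ S <;> simp [hz]
      rw [e1, map_smul, hg, smul_eq_mul, ← integral_const_mul, ← integral_indicator hS]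
      congr 1
      ext z
      by_cases hz : z ∈ S <;> simp [hz]
    | add hfg hf hg' =>
      rename_i s1 s2
      intro hs
      have m1 : MemLp s1 p μ := SimpleFunc.memLp_of_isFiniteMeasure _ _ _
      have m2 : MemLp s2 p μ := SimpleFunc.memLp_of_isFiniteMeasure _ _ _
      have e1 : hs.toLp _ = m1.toLp s1 + m2.toLp s2 := by
        rw [← MemLp.toLp_add]; rfl
      have ib : ∀ s : SimpleFunc ℂ ℂ, Integrable (fun z => s z * g z) μ := by
        intro s
        obtain ⟨C, hC⟩ := s.exists_forall_norm_le
        exact hgi.bdd_mul s.measurable.aestronglyMeasurable (c := C) (Eventually.of_forall hC)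
      rw [e1, map_add, hf, hg', ← integral_add (ib _) (ib _)]
      congr 1
      ext z
      simp [add_mul]
  intro f hf hfm ⟨B, hB⟩
  have hB0 : 0 ≤ B := (norm_nonneg _).trans (hB 0)
  set s := fun n => hfm.stronglyMeasurable.approxBounded B n with hs
  have hsB : ∀ n z, ‖s n z‖ ≤ B := fun n z => hfm.stronglyMeasurable.norm_approxBounded_le hB0 n z
  have hsl : ∀ z, Tendsto (fun n => s n z) atTop (𝓝 (f z)) := fun z =>
    hfm.stronglyMeasurable.tendsto_approxBounded_of_norm_le (hB z)
  have hsm : ∀ n, MemLp (s n) p μ := fun n => memLp_of_bdd (s n).measurable (hsB n)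
  have t1 : Tendsto (fun n => φ ((hsm n).toLp (s n))) atTop (𝓝 (φ (hf.toLp f))) := by
    refine (φ.continuous.tendsto _).comp ?_
    rw [Lp.tendsto_Lp_iff_tendsto_eLpNorm'']
    exact tendsto_eLpNorm_of_bounded Fact.out hp (fun n => (s n).measurable) hfm hsB hB hsl
  have t2 : Tendsto (fun n => ∫ z, s n z * g z ∂μ) atTop (𝓝 (∫ z, f z * g z ∂μ)) := by
    refine tendsto_integral_of_dominated_convergence (fun z => B * ‖g z‖)
      (fun n => ((s n).measurable.mul hgm).aestronglyMeasurable) (hgi.norm.const_mul B)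
      (fun n => Eventually.of_forall fun z => ?_)
      (Eventually.of_forall fun z => (hsl z).mul_const _)
    rw [norm_mul]
    gcongr
    exact hsB n z
  simp_rw [hsimp] at t1
  exact tendsto_nhds_unique t1 t2

/-! ### `R^t(K, μ)` is determined by its annihilator -/

theorem hahn_banach_submodule {V : Type*} [NormedAddCommGroup V] [NormedSpace ℂ V]
    (W : Submodule ℂ V) (x : V) (hx : x ∉ closure (W : Set V)) :
    ∃ φ : V →L[ℂ] ℂ, (∀ w ∈ W, φ w = 0) ∧ φ x ≠ 0 := by
  have hcv : Convex ℝ (closure (W : Set V)) := (Submodule.convex (W.restrictScalars ℝ)).closure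
  obtain ⟨f, u, h1, h2⟩ := RCLike.geometric_hahn_banach_closed_point (𝕜 := ℂ) hcv isClosed_closure hx
  have hu : 0 < u := by
    have := h1 0 (subset_closure W.zero_mem)
    simpa using this
  refine ⟨f, fun w hw => ?_, fun h => ?_⟩
  · by_contra hne
    have := h1 (((u : ℂ) / f w) • w) (subset_closure (W.smul_mem _ hw))
    rw [map_smul, smul_eq_mul, div_mul_cancel₀ _ hne] at this
    simp at this
  · rw [h] at h2
    simp at h2
    linarith

theorem ratOn_measurable {K : Set ℂ} {r : ℂ → ℂ} (hr : r ∈ RatOn K) : Measurable r := by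
  obtain ⟨p, q, -, rfl⟩ := hr
  exact p.continuous.measurable.div q.continuous.measurable

theorem ratOn_bdd {K : Set ℂ} (hK : IsCompact K) {r : ℂ → ℂ} (hr : r ∈ RatOn K) :
    ∃ B, 0 ≤ B ∧ ∀ z ∈ K, ‖r z‖ ≤ B := by
  obtain ⟨p, q, hq, rfl⟩ := hr
  have hc : ContinuousOn (fun z => p.eval z / q.eval z) K :=
    p.continuous.continuousOn.div q.continuous.continuousOn hq
  obtain ⟨B, hB⟩ := hK.exists_bound_of_continuousOn hc
  exact ⟨max B 0, le_max_right _ _, fun z hz => (hB z hz).trans (le_max_left _ _)⟩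

theorem ratOn_indicator {K : Set ℂ} (hK : IsCompact K) {r : ℂ → ℂ} (hr : r ∈ RatOn K) :
    Measurable (K.indicator r) ∧ ∃ B, ∀ z, ‖K.indicator r z‖ ≤ B := by
  obtain ⟨B, hB0, hB⟩ := ratOn_bdd hK hr
  refine ⟨(ratOn_measurable hr).indicator hK.measurableSet, B, fun z => ?_⟩
  by_cases hz : z ∈ K
  · simpa [hz] using hB z hz
  · simpa [hz] using hB0

theorem indicator_ae {K : Set ℂ} {μ : Measure ℂ} (hsupp : μ Kᶜ = 0) (r : ℂ → ℂ) :
    K.indicator r =ᵐ[μ] r := by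
  have : ∀ᵐ z ∂μ, z ∈ K := hsupp
  filter_upwards [this] with z hz
  simp [hz]

/-- The (image in `L^p` of the) space of rational functions with poles off `K`. -/
def ratSubmodule (K : Set ℂ) (μ : Measure ℂ) (hsupp : μ Kᶜ = 0) (p : ℝ≥0∞) :
    Submodule ℂ (Lp ℂ p μ) where
  carrier := {F | ∃ r ∈ RatOn K, F =ᵐ[μ] r}
  zero_mem' := ⟨fun _ => 0, ⟨0, 1, by simp, by simp⟩, Lp.coeFn_zero _ _ _⟩
  add_mem' := by
    rintro F G ⟨r, ⟨p₁, q₁, h₁, rfl⟩, hF⟩ ⟨s, ⟨p₂, q₂, h₂, rfl⟩, hG⟩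
    refine ⟨_, ⟨p₁ * q₂ + p₂ * q₁, q₁ * q₂, fun z hz => ?_, rfl⟩, ?_⟩
    · rw [Polynomial.eval_mul]
      exact mul_ne_zero (h₁ z hz) (h₂ z hz)
    · have hK : ∀ᵐ z ∂μ, z ∈ K := hsupp
      filter_upwards [hK, hF, hG, Lp.coeFn_add F G] with z hz e1 e2 e3
      have := h₁ z hz
      have := h₂ z hz
      rw [e3, Pi.add_apply, e1, e2]
      simp only [Polynomial.eval_mul, Polynomial.eval_add]
      field_simp
  smul_mem' := by
    rintro c F ⟨r, ⟨p₁, q₁, h₁, rfl⟩, hF⟩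
    refine ⟨_, ⟨Polynomial.C c * p₁, q₁, h₁, rfl⟩, ?_⟩
    filter_upwards [hF, Lp.coeFn_smul c F] with z e1 e3
    rw [e3, Pi.smul_apply, e1, smul_eq_mul, Polynomial.eval_mul, Polynomial.eval_C, mul_div_assoc]

theorem integral_rpow_eq {t : ℝ} (ht : 1 ≤ t) {μ : Measure ℂ} {h : ℂ → ℂ}
    (hh : MemLp h (ENNReal.ofReal t) μ) :
    ∫ z, ‖h z‖ ^ t ∂μ = (eLpNorm h (ENNReal.ofReal t) μ).toReal ^ t := by
  have hp0 : ENNReal.ofReal t ≠ 0 := by simp; linarith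
  have hi : 0 ≤ ∫ z, ‖h z‖ ^ t ∂μ := integral_nonneg fun z => by positivity
  rw [hh.eLpNorm_eq_integral_rpow_norm hp0 ENNReal.ofReal_ne_top,
    ENNReal.toReal_ofReal (show 0 ≤ t by linarith),
    ENNReal.toReal_ofReal (by positivity), ← Real.rpow_mul hi, inv_mul_cancel₀ (by linarith),
    Real.rpow_one]

/-- Duality: a bounded function annihilated by every `L¹` annihilator of `Rat(K)` belongs to
`R^t(K,μ)`. -/
theorem rtMem_of_annih {t : ℝ} (ht : 1 ≤ t) {K : Set ℂ} (hKc : IsCompact K) {μ : Measure ℂ}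
    [IsFiniteMeasure μ] (hsupp : μ Kᶜ = 0) {f₀ : ℂ → ℂ} (hf : Measurable f₀) {B : ℝ}
    (hB : ∀ z, ‖f₀ z‖ ≤ B)
    (hann : ∀ g : ℂ → ℂ, Measurable g → Integrable g μ →
      (∀ r ∈ RatOn K, ∫ z, r z * g z ∂μ = 0) → ∫ z, f₀ z * g z ∂μ = 0) :
    RtMem t K μ f₀ := by
  set p := ENNReal.ofReal t with hp
  have hp1 : 1 ≤ p := by rw [hp]; simpa using ht
  have : Fact (1 ≤ p) := ⟨hp1⟩
  have hpt : p ≠ ∞ := ENNReal.ofReal_ne_top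
  have hfm : MemLp f₀ p μ := memLp_of_bdd hf hB
  set W := ratSubmodule K μ hsupp p with hW
  have hcl : hfm.toLp f₀ ∈ closure (W : Set (Lp ℂ p μ)) := by
    by_contra hx
    obtain ⟨φ, h1, h2⟩ := hahn_banach_submodule W _ hx
    obtain ⟨g, hgm, hgi, hg⟩ := lp_repr hpt φ
    refine h2 ?_
    rw [hg f₀ hfm hf ⟨B, hB⟩]
    refine hann g hgm hgi fun r hr => ?_
    obtain ⟨im, C, hC⟩ := ratOn_indicator hKc hr
    have hm : MemLp (K.indicator r) p μ := memLp_of_bdd im hC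
    have e1 := h1 (hm.toLp _) ⟨r, hr, hm.coeFn_toLp.trans (indicator_ae hsupp r)⟩
    rw [hg _ hm im ⟨C, hC⟩] at e1
    rw [← e1]
    refine integral_congr_ae ?_
    filter_upwards [indicator_ae hsupp r] with z hz
    rw [hz]
  obtain ⟨F, hF, hlim⟩ := mem_closure_iff_seq_limit.1 hcl
  choose r hr hFr using hF
  refine ⟨r, hr, ?_⟩
  rw [Lp.tendsto_Lp_iff_tendsto_eLpNorm'] at hlim
  have e : ∀ n, ∫ z, ‖r n z - f₀ z‖ ^ t ∂μ =
      (eLpNorm (F n - hfm.toLp f₀ : Lp ℂ p μ) p μ).toReal ^ t := by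
    intro n
    rw [← integral_rpow_eq ht (Lp.memLp _)]
    refine integral_congr_ae ?_
    filter_upwards [hFr n, hfm.coeFn_toLp, Lp.coeFn_sub (F n) (hfm.toLp f₀)] with z e1 e2 e3
    rw [e3, Pi.sub_apply, e1, e2]
  simp_rw [e]
  have h3 : Tendsto (fun n => (eLpNorm (F n - hfm.toLp f₀ : Lp ℂ p μ) p μ).toReal) atTop (𝓝 0) := by
    have h4 := (ENNReal.tendsto_toReal ENNReal.zero_ne_top).comp hlim
    refine (h4.congr fun n => ?_)
    simp only [Function.comp]
    congr 1
    exact eLpNorm_congr_ae (Lp.coeFn_sub _ _).symm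
  have h4 := h3.rpow_const (p := t) (Or.inr (by linarith))
  rwa [Real.zero_rpow (by linarith)] at h4

/-! ### A Poisson-type kernel -/

/-- The Poisson-type kernel `δ² / (δ² + |z - w|²)`. -/
def kern (w : ℂ) (δ : ℝ) (z : ℂ) : ℝ := δ ^ 2 / (δ ^ 2 + ‖z - w‖ ^ 2)

theorem kern_nonneg (w : ℂ) (δ : ℝ) (z : ℂ) : 0 ≤ kern w δ z := by unfold kern; positivity

theorem measurable_kern (w : ℂ) (δ : ℝ) : Measurable (kern w δ) := by unfold kern; fun_prop

/-- Domination of the kernel by a geometric sum over dyadic discs. -/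
theorem kern_le_tsum {w : ℂ} {δ : ℝ} (hδ : 0 < δ) (z : ℂ) :
    ENNReal.ofReal (kern w δ z) ≤ ∑' j : ℕ, ENNReal.ofReal (4 * (4 ^ j)⁻¹) *
      (closedBall w (2 ^ j * δ)).indicator 1 z := by
  classical
  have hex : ∃ j : ℕ, ‖z - w‖ ≤ 2 ^ j * δ := by
    obtain ⟨j, hj⟩ := pow_unbounded_of_one_lt (‖z - w‖ / δ) (one_lt_two)
    exact ⟨j, by rw [div_lt_iff₀ hδ] at hj; exact hj.le⟩
  set j := Nat.find hex with hj
  have hj1 : ‖z - w‖ ≤ 2 ^ j * δ := Nat.find_spec hex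
  refine le_trans ?_ (ENNReal.le_tsum j)
  have hmem : z ∈ closedBall w (2 ^ j * δ) := by rw [mem_closedBall, dist_eq_norm]; exact hj1
  rw [indicator_of_mem hmem, Pi.one_apply, mul_one]
  apply ENNReal.ofReal_le_ofReal
  unfold kern
  rw [div_le_iff₀ (by positivity)]
  rcases Nat.eq_zero_or_pos j with h0 | h0
  · rw [h0]
    norm_num
    nlinarith [sq_nonneg ‖z - w‖, sq_nonneg δ]
  · have h1 : ¬ ‖z - w‖ ≤ 2 ^ (j - 1) * δ := Nat.find_min hex (by omega)
    push Not at h1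
    have h2 : (2 ^ (j - 1) * δ) ^ 2 ≤ ‖z - w‖ ^ 2 := by gcongr
    have h3 : (4:ℝ) ^ j = 4 * (2 ^ (j - 1)) ^ 2 := by
      rw [← pow_mul, mul_comm (j - 1), pow_mul]
      norm_num
      rw [← pow_succ', Nat.sub_add_cancel h0]
    rw [h3]
    have h4 : (0:ℝ) < 2 ^ (j - 1) := by positivity
    rw [mul_inv, ← mul_assoc, mul_inv_cancel₀ (by norm_num), one_mul, ← div_eq_inv_mul,
      le_div_iff₀ (by positivity)]
    nlinarith [sq_nonneg δ]

/-- A measure of zero linear density at `w` and at most linear growth has kernel integrals `o(δ)`. -/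
theorem kern_tendsto {η : Measure ℂ} {w : ℂ} {C : ℝ≥0∞} (hC : C ≠ ∞)
    (hbd : ∀ r : ℝ, 0 < r → η (closedBall w r) ≤ C * (1 + ENNReal.ofReal r))
    (h0 : Tendsto (fun r : ℝ => η (closedBall w r) / ENNReal.ofReal r) (𝓝[>] 0) (𝓝 0)) :
    Tendsto (fun δ : ℝ => (∫⁻ z, ENNReal.ofReal (kern w δ z) ∂η) / ENNReal.ofReal δ)
      (𝓝[>] 0) (𝓝 0) := by
  -- a uniform bound for the densities at all scales
  obtain ⟨D, hD, hDb⟩ : ∃ D : ℝ≥0∞, D ≠ ∞ ∧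
      ∀ r : ℝ, 0 < r → η (closedBall w r) / ENNReal.ofReal r ≤ D := by
    have h1 : ∀ᶠ r in 𝓝[>] (0:ℝ), η (closedBall w r) / ENNReal.ofReal r < 1 :=
      h0.eventually (gt_mem_nhds zero_lt_one)
    obtain ⟨r₀, hr₀, h2⟩ := mem_nhdsGT_iff_exists_Ioo_subset.1 h1
    rw [mem_Ioi] at hr₀
    refine ⟨1 + C * (1 / ENNReal.ofReal r₀ + 1), ?_, fun r hr => ?_⟩
    · have : ENNReal.ofReal r₀ ≠ 0 := by simpa using hr₀
      finiteness
    · rcases lt_or_ge r r₀ with h | h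
      · exact (le_of_lt (h2 ⟨hr, h⟩)).trans le_self_add
      · refine le_trans ?_ le_add_self
        have hr' : ENNReal.ofReal r ≠ 0 := by simpa using hr
        rw [ENNReal.div_le_iff hr' ENNReal.ofReal_ne_top]
        refine (hbd r hr).trans ?_
        rw [mul_assoc]
        gcongr
        rw [add_mul, one_mul]
        gcongr
        rw [← ENNReal.div_le_iff hr' ENNReal.ofReal_ne_top]
        gcongr
  have key : ∀ δ : ℝ, 0 < δ → (∫⁻ z, ENNReal.ofReal (kern w δ z) ∂η) / ENNReal.ofReal δ ≤
      ∑' j : ℕ, ENNReal.ofReal (4 * (2 ^ j)⁻¹) *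
        (η (closedBall w (2 ^ j * δ)) / ENNReal.ofReal (2 ^ j * δ)) := by
    intro δ hδ
    have hδ' : ENNReal.ofReal δ ≠ 0 := by simpa using hδ
    rw [ENNReal.div_le_iff hδ' ENNReal.ofReal_ne_top]
    calc _ ≤ ∫⁻ z, ∑' j : ℕ, ENNReal.ofReal (4 * (4 ^ j)⁻¹) *
          (closedBall w (2 ^ j * δ)).indicator 1 z ∂η := lintegral_mono fun z => kern_le_tsum hδ z
      _ = ∑' j : ℕ, ENNReal.ofReal (4 * (4 ^ j)⁻¹) * η (closedBall w (2 ^ j * δ)) := by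
        rw [lintegral_tsum]
        · congr 1
          ext j
          rw [lintegral_const_mul _ (measurable_one.indicator measurableSet_closedBall),
            lintegral_indicator_one measurableSet_closedBall]
        · intro j
          exact ((measurable_one.indicator measurableSet_closedBall).const_mul _).aemeasurable
      _ = _ := by
        rw [← ENNReal.tsum_mul_right]
        congr 1
        ext j
        have h2 : ENNReal.ofReal (2 ^ j * δ) ≠ 0 := by simpa using by positivity
        have h3 : ENNReal.ofReal (4 * (2 ^ j)⁻¹) * ENNReal.ofReal δ =
            ENNReal.ofReal (4 * (4 ^ j)⁻¹) * ENNReal.ofReal (2 ^ j * δ) := by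
          rw [← ENNReal.ofReal_mul (by positivity), ← ENNReal.ofReal_mul (by positivity)]
          congr 1
          rw [show (4:ℝ) ^ j = 2 ^ j * 2 ^ j by rw [← mul_pow]; norm_num]
          field_simp
        rw [mul_right_comm, h3, mul_assoc, ENNReal.mul_div_cancel h2 ENNReal.ofReal_ne_top]
  refine tendsto_of_tendsto_of_tendsto_of_le_of_le' tendsto_const_nhds (h := fun δ : ℝ =>
    ∑' j : ℕ, ENNReal.ofReal (4 * (2 ^ j)⁻¹) *
        (η (closedBall w (2 ^ j * δ)) / ENNReal.ofReal (2 ^ j * δ))) ?_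
    (Eventually.of_forall fun _ => zero_le)
    (eventually_nhdsWithin_of_forall fun δ hδ => key δ hδ)
  simp_rw [← lintegral_count]
  rw [show (0:ℝ≥0∞) = ∫⁻ j : ℕ, 0 ∂Measure.count by simp]
  refine tendsto_lintegral_filter_of_dominated_convergence
    (fun j : ℕ => ENNReal.ofReal (4 * (2 ^ j)⁻¹) * D) (Eventually.of_forall fun _ => by fun_prop)
    (eventually_nhdsWithin_of_forall fun δ hδ => Eventually.of_forall fun j => ?_) ?_
    (Eventually.of_forall fun j => ?_)
  · have : (0:ℝ) < 2 ^ j * δ := mul_pos (by positivity) hδ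
    gcongr
    exact hDb _ this
  · rw [lintegral_count, ENNReal.tsum_mul_right]
    refine ENNReal.mul_ne_top ?_ hD
    rw [← ENNReal.ofReal_tsum_of_nonneg (fun j => by positivity)]
    · exact ENNReal.ofReal_ne_top
    · simp_rw [← inv_pow]
      exact (summable_geometric_of_lt_one (by norm_num) (by norm_num)).mul_left 4
  · have h5 : Tendsto (fun δ : ℝ => 2 ^ j * δ) (𝓝[>] 0) (𝓝[>] 0) := by
      refine tendsto_nhdsWithin_iff.2 ⟨?_, eventually_nhdsWithin_of_forall fun δ hδ =>
        show (0:ℝ) < 2 ^ j * δ from mul_pos (by positivity) hδ⟩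
      have : Tendsto (fun δ : ℝ => 2 ^ j * δ) (𝓝 0) (𝓝 (2 ^ j * 0)) := by
        exact (continuous_const.mul continuous_id).tendsto 0
      rw [mul_zero] at this
      exact this.mono_left nhdsWithin_le_nhds
    have := ENNReal.Tendsto.const_mul (a := ENNReal.ofReal (4 * (2 ^ j)⁻¹)) (h0.comp h5)
      (Or.inr ENNReal.ofReal_ne_top)
    rw [mul_zero] at this
    exact this

/-! ### Test functions -/

/-- The data from which a test function at scale `δ` near `w` is built: a function `f`, analytic
off a compact subset `F` of the truncated lower cone minus `K`, with `f(∞) = 0` and `f'(∞) = d`,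
together with the centre `l` of a disc of radius `ε δ` lying in the truncated upper cone and
off `K`. The values of `f` on `F` are irrelevant; they are only asked to keep `f` measurable and
bounded. -/
structure TestFn (K : Set ℂ) (w : ℂ) (α ε δ : ℝ) where
  F : Set ℂ
  f : ℂ → ℂ
  d : ℂ
  l : ℂ
  compact : IsCompact F
  subset : F ⊆ coneDownT δ w α \ K
  diff : DifferentiableOn ℂ f Fᶜ
  meas : Measurable f
  bdd : ∀ z, ‖f z‖ ≤ 2
  lim0 : Tendsto f (cobounded ℂ) (𝓝 0)
  limd : Tendsto (fun z => z * f z) (cobounded ℂ) (𝓝 d)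
  pole : ball l (ε * δ) ⊆ Kᶜ ∩ coneUpT δ w α

namespace TestFn

variable {K : Set ℂ} {w : ℂ} {α ε δ : ℝ}

/-- The test function `f(z) - d / (z - l)`, which vanishes to second order at infinity. -/
def P (T : TestFn K w α ε δ) (z : ℂ) : ℂ := T.f z - T.d / (z - T.l)

theorem measurable_P (T : TestFn K w α ε δ) : Measurable T.P := by
  have := T.meas
  unfold P
  fun_prop

theorem laurent (T : TestFn K w α ε δ) (hδ : 0 < δ) : ‖T.d‖ ≤ 2 * δ ∧
    ∀ z, δ < ‖z - w‖ → ‖T.f z - T.d / (z - w)‖ ≤ 4 * δ ^ 2 / ‖z - w‖ ^ 2 :=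
  laurent_bound hδ T.compact
    (fun _ hz => ball_subset_closedBall (T.subset hz).1.1) T.diff (fun z _ => T.bdd z) T.lim0 T.limd

theorem l_mem (T : TestFn K w α ε δ) (hε : 0 < ε) (hδ : 0 < δ) : T.l ∈ coneUpT δ w α :=
  (T.pole (mem_ball_self (mul_pos hε hδ))).2

/-- Subtracting the pole at `l` cancels the `1 / z` term of `f` at infinity, so that a test function
decays quadratically at scale `δ`. -/
theorem P_bound (T : TestFn K w α ε δ) (hε : 0 < ε) (hδ : 0 < δ) {z : ℂ}
    (hz : z ∉ ball T.l (ε * δ)) : ‖T.P z‖ ≤ (30 + 10 / ε) * kern w δ z := by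
  obtain ⟨hd, hL⟩ := T.laurent hδ
  have hl : ‖T.l - w‖ < δ := by
    have := (T.l_mem hε hδ).1
    rwa [mem_ball, dist_eq_norm] at this
  have hzl : ε * δ ≤ ‖z - T.l‖ := by
    rw [mem_ball, dist_eq_norm] at hz
    linarith
  have hεδ : 0 < ε * δ := mul_pos hε hδ
  unfold kern P
  rcases le_or_gt ‖z - w‖ (2 * δ) with h | h
  · have h1 : ‖T.f z - T.d / (z - T.l)‖ ≤ 2 + 2 / ε := by
      refine (norm_sub_le _ _).trans (add_le_add (T.bdd z) ?_)
      rw [norm_div]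
      calc ‖T.d‖ / ‖z - T.l‖ ≤ 2 * δ / (ε * δ) := by gcongr
        _ = 2 / ε := by field_simp
    have h2 : 1 / 5 ≤ δ ^ 2 / (δ ^ 2 + ‖z - w‖ ^ 2) := by
      rw [div_le_div_iff₀ (by norm_num) (by positivity)]
      nlinarith [norm_nonneg (z - w)]
    have h3 : 0 < 1 / ε := by positivity
    calc _ ≤ 2 + 2 / ε := h1
      _ ≤ (30 + 10 / ε) * (1 / 5) := by
        rw [show 2 / ε = 2 * (1 / ε) by ring, show 10 / ε = 10 * (1 / ε) by ring]; linarith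
      _ ≤ _ := by gcongr
  · have hzw : 0 < ‖z - w‖ := by linarith
    have hzl2 : ‖z - w‖ / 2 ≤ ‖z - T.l‖ := by
      have := norm_sub_le (z - T.l) (w - T.l)
      rw [show z - T.l - (w - T.l) = z - w by ring, norm_sub_rev w] at this
      linarith
    have hzl0 : 0 < ‖z - T.l‖ := by linarith
    have n1 : z - w ≠ 0 := norm_pos_iff.1 hzw
    have n2 : z - T.l ≠ 0 := norm_pos_iff.1 hzl0
    have e : T.f z - T.d / (z - T.l) = (T.f z - T.d / (z - w)) +
        T.d * (w - T.l) / ((z - w) * (z - T.l)) := by field_simp; ring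
    have h1 : ‖T.d * (w - T.l) / ((z - w) * (z - T.l))‖ ≤ 4 * δ ^ 2 / ‖z - w‖ ^ 2 := by
      rw [norm_div, norm_mul, norm_mul, norm_sub_rev w]
      calc _ ≤ (2 * δ) * δ / (‖z - w‖ * (‖z - w‖ / 2)) := by gcongr
        _ = _ := by field_simp; ring
    have h2 : δ ^ 2 / ‖z - w‖ ^ 2 ≤ 5 / 4 * (δ ^ 2 / (δ ^ 2 + ‖z - w‖ ^ 2)) := by
      rw [← mul_div_assoc, div_le_div_iff₀ (by positivity) (by positivity)]
      nlinarith [sq_nonneg δ, mul_pos (pow_pos hδ 2) (show 0 < ‖z - w‖ ^ 2 - 4 * δ ^ 2 by nlinarith)]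
    rw [e]
    have h3 : 0 ≤ δ ^ 2 / (δ ^ 2 + ‖z - w‖ ^ 2) := by positivity
    have h4 : 0 < 10 / ε := by positivity
    calc _ ≤ 4 * δ ^ 2 / ‖z - w‖ ^ 2 + 4 * δ ^ 2 / ‖z - w‖ ^ 2 :=
          (norm_add_le _ _).trans (add_le_add (hL z (by linarith)) h1)
      _ = 8 * (δ ^ 2 / ‖z - w‖ ^ 2) := by ring
      _ ≤ 8 * (5 / 4 * (δ ^ 2 / (δ ^ 2 + ‖z - w‖ ^ 2))) := by gcongr
      _ ≤ _ := by nlinarith [mul_nonneg h4.le h3]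

theorem P_diff (T : TestFn K w α ε δ) {z : ℂ} (hF : z ∉ T.F) (hl : z ≠ T.l) :
    DifferentiableAt ℂ T.P z := by
  have h1 : DifferentiableAt ℂ T.f z :=
    T.diff.differentiableAt (T.compact.isClosed.isOpen_compl.mem_nhds hF)
  unfold P
  exact h1.sub ((differentiableAt_const _).div (by fun_prop) (sub_ne_zero.2 hl))

/-- A residue computation: the integral of the test function along a line through `w` that
separates `F` from the pole `l`. -/
theorem integral_tangent (T : TestFn K w α ε δ) (hε : 0 < ε) (hδ : 0 < δ) {s L : ℝ}
    (hs : |s| ≤ L) (hαL : α * L < 1) :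
    ∫ u : ℝ, T.P (w + δ * (1 + s * I) * u) = -(2 * π * I) * (T.d / (δ * (1 + s * I))) := by
  obtain ⟨hd, hL⟩ := T.laurent hδ
  set c : ℂ := δ * (1 + s * I) with hc
  have hc0 : c ≠ 0 := by
    refine mul_ne_zero (by exact_mod_cast hδ.ne') ?_
    intro h
    have := congrArg Complex.re h
    simp at this
  have him : ∀ v : ℂ, (c * v).im - s * (c * v).re = δ * (1 + s ^ 2) * v.im := by
    intro v
    simp [hc]
    ring
  have hsx : ∀ x y : ℝ, |x| < α * |y| → |s * x| < |y| := by
    intro x y h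
    have hy : 0 < |y| := by
      by_contra h'
      have : |y| = 0 := le_antisymm (not_lt.1 h') (abs_nonneg _)
      rw [this] at h
      simp at h
      linarith [abs_nonneg x]
    have hL0 : 0 ≤ L := (abs_nonneg s).trans hs
    rw [abs_mul]
    calc |s| * |x| ≤ L * |x| := by gcongr
      _ ≤ L * (α * |y|) := by gcongr
      _ = (α * L) * |y| := by ring
      _ < 1 * |y| := by gcongr
      _ = |y| := one_mul _
  have hp : 0 < ((T.l - w) / c).im := by
    have h1 := T.l_mem hε hδ
    have h2 := hsx _ _ h1.2.1
    have h3 := h1.2.2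
    have h4 := him ((T.l - w) / c)
    rw [mul_div_cancel₀ _ hc0, Complex.sub_im, Complex.sub_re] at h4
    rw [abs_of_pos (a := T.l.im - w.im) (by linarith)] at h2
    have h5 : 0 < δ * (1 + s ^ 2) := by positivity
    have h6 : 0 < δ * (1 + s ^ 2) * ((T.l - w) / c).im := by
      rw [← h4]
      linarith [le_abs_self (s * (T.l.re - w.re))]
    exact pos_of_mul_pos_right h6 h5.le
  have hnF : ∀ v : ℂ, 0 ≤ v.im → w + c * v ∉ T.F := by
    intro v hv hmem
    have h1 := (T.subset hmem).1
    have h2 := hsx _ _ h1.2.1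
    have h3 := h1.2.2
    have h4 := him v
    rw [abs_of_neg (a := (w + c * v).im - w.im) (by linarith)] at h2
    rw [Complex.add_im, Complex.add_re, add_sub_cancel_left, add_sub_cancel_left] at h2
    have h5 : 0 ≤ δ * (1 + s ^ 2) * v.im := by positivity
    linarith [neg_abs_le (s * (c * v).re)]
  have := line_integral (φ := fun v => T.f (w + c * v)) (β := T.d / c) (p := (T.l - w) / c)
    (R := δ / ‖c‖) (B := 4 * δ ^ 2 / ‖c‖ ^ 2) (M := 2) hp ?_ (fun v _ => T.bdd _) ?_
  · rw [← this]
    congr 1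
    ext u
    unfold P
    congr 1
    have : w + c * u - T.l = c * (u - (T.l - w) / c) := by
      rw [mul_sub, mul_div_cancel₀ _ hc0]; ring
    rw [this, div_div]
  · intro v hv
    have h1 : DifferentiableAt ℂ T.f (w + c * v) :=
      T.diff.differentiableAt (T.compact.isClosed.isOpen_compl.mem_nhds (hnF v hv))
    exact h1.comp v (by fun_prop)
  · intro v hv hR
    have hcp : 0 < ‖c‖ := norm_pos_iff.2 hc0
    have := hL (w + c * v) (by
      rw [add_sub_cancel_left, norm_mul]
      rw [div_lt_iff₀ hcp] at hR
      linarith)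
    rw [add_sub_cancel_left, norm_mul, mul_pow] at this
    rw [div_div, div_div]
    exact this

end TestFn

/-- Positive upper density of the capacity yields test functions with `‖d‖` comparable with `δ` at
arbitrarily small scales. The value at infinity is subtracted from a nearly extremal function for
the capacity, which is why test functions are bounded by `2` and not by `1`. -/
theorem test_exists {K : Set ℂ} {w : ℂ} {α : ℝ} (ho : upperOuter K w α)
    (hl : 0 < Filter.limsup (fun δ : ℝ => anCap (coneDownT δ w α \ K) / δ) (𝓝[>] (0:ℝ))) :
    ∃ ε c : ℝ, 0 < ε ∧ 0 < c ∧ ∃ᶠ δ in 𝓝[>] (0:ℝ), ∃ T : TestFn K w α ε δ, c * δ < ‖T.d‖ := by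
  obtain ⟨δ₀, ε, hδ₀, hε, hout⟩ := ho
  set ℓ := Filter.limsup (fun δ : ℝ => anCap (coneDownT δ w α \ K) / δ) (𝓝[>] (0:ℝ)) with hℓ
  have hcapnn : ∀ E, 0 ≤ anCap E := fun E => by
    refine Real.sSup_nonneg ?_
    rintro _ ⟨F, -, -, rfl⟩
    refine Real.sSup_nonneg ?_
    rintro _ ⟨f, -, -, f0, d, -, -, rfl⟩
    exact norm_nonneg _
  have hcob : IsCoboundedUnder (· ≤ ·) (𝓝[>] (0:ℝ))
      (fun δ : ℝ => anCap (coneDownT δ w α \ K) / δ) := by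
    refine isCoboundedUnder_le_of_eventually_le (x := 0) _ ?_
    refine eventually_nhdsWithin_of_forall fun δ hδ => div_nonneg (hcapnn _) (le_of_lt hδ)
  have hfr := frequently_lt_of_lt_limsup hcob (show ℓ / 2 < ℓ by linarith)
  refine ⟨ε, ℓ / 2, hε, by linarith, ?_⟩
  have hev : ∀ᶠ δ in 𝓝[>] (0:ℝ), 0 < δ ∧ δ < δ₀ := by
    filter_upwards [Ioo_mem_nhdsGT hδ₀] with δ h using h
  refine (hfr.and_eventually hev).mono ?_
  rintro δ ⟨hcap, hδ, hδ'⟩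
  rw [lt_div_iff₀ hδ] at hcap
  have hpos : 0 ≤ ℓ / 2 * δ := by positivity
  obtain ⟨F, hFc, hFs, hF⟩ : ∃ F, IsCompact F ∧ F ⊆ coneDownT δ w α \ K ∧ ℓ / 2 * δ < capAux F := by
    by_contra hcon
    push Not at hcon
    refine absurd hcap (not_lt.2 (Real.sSup_le ?_ hpos))
    rintro _ ⟨F, h1, h2, rfl⟩
    exact hcon F h1 h2
  obtain ⟨f, hfd, hfb, f0, d, h0, h1, hd⟩ : ∃ f : ℂ → ℂ, DifferentiableOn ℂ f Fᶜ ∧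
      (∀ z ∈ Fᶜ, ‖f z‖ ≤ 1) ∧ ∃ f0 d : ℂ, Tendsto f (cobounded ℂ) (𝓝 f0) ∧
      Tendsto (fun z => z * (f z - f0)) (cobounded ℂ) (𝓝 d) ∧ ℓ / 2 * δ < ‖d‖ := by
    by_contra hcon
    push Not at hcon
    refine absurd hF (not_lt.2 (Real.sSup_le ?_ hpos))
    rintro _ ⟨f, h1, h2, f0, d, h3, h4, rfl⟩
    exact hcon f h1 h2 f0 d h3 h4
  have hcob : ∀ᶠ z in cobounded ℂ, z ∈ Fᶜ := by
    have := hFc.isBounded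
    rwa [isBounded_def] at this
  have hf0 : ‖f0‖ ≤ 1 := le_of_tendsto h0.norm (hcob.mono fun z hz => hfb z hz)
  obtain ⟨l, hball⟩ := hout δ hδ hδ'
  have hev : ∀ᶠ z in cobounded ℂ, f z - f0 = Fᶜ.indicator (fun z => f z - f0) z :=
    hcob.mono fun z hz => (indicator_of_mem hz (fun z => f z - f0)).symm
  refine ⟨⟨F, Fᶜ.indicator (fun z => f z - f0), d, l, hFc, hFs, ?_, ?_, ?_, ?_, ?_, hball⟩, hd⟩
  · exact (hfd.sub_const f0).congr fun z hz => indicator_of_mem hz _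
  · classical
    rw [← piecewise_eq_indicator]
    exact ContinuousOn.measurable_piecewise (hfd.sub_const f0).continuousOn continuousOn_const
      hFc.measurableSet.compl
  · intro z
    by_cases hz : z ∈ Fᶜ
    · rw [indicator_of_mem hz]
      linarith [norm_sub_le (f z) f0, hfb z hz]
    · rw [indicator_of_notMem hz]
      simp
  · have := h0.sub_const f0
    rw [sub_self] at this
    exact this.congr' hev
  · exact h1.congr' (hev.mono fun z hz => by rw [hz])

/-! ### Test functions along the graph -/

/-- A point joined to `w` by a segment of slope at most `L` is at a distance from the vertical cone
at `w` comparable with its horizontal distance to `w`. -/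
theorem cone_dist {w z ζ : ℂ} {α L : ℝ} (hα : 0 < α)
    (hz : |z.im - w.im| ≤ L * |z.re - w.re|) (hζ : ζ ∈ coneAt w α) :
    (1 - α * L) / (1 + α) * |z.re - w.re| ≤ ‖z - ζ‖ := by
  have h1 := Complex.abs_re_le_norm (z - ζ)
  have h2 := Complex.abs_im_le_norm (z - ζ)
  rw [Complex.sub_re] at h1
  rw [Complex.sub_im] at h2
  have hζ' : |ζ.re - w.re| < α * |ζ.im - w.im| := hζ
  have h3 : |z.re - w.re| ≤ |z.re - ζ.re| + |ζ.re - w.re| := abs_sub_le _ _ _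
  have h4 : |ζ.im - w.im| ≤ |z.im - ζ.im| + |z.im - w.im| := by
    rw [abs_sub_comm z.im ζ.im]; exact abs_sub_le _ _ _
  rw [div_mul_eq_mul_div, div_le_iff₀ (by positivity)]
  nlinarith [mul_le_mul_of_nonneg_left h4 hα.le, mul_le_mul_of_nonneg_left hz hα.le,
    mul_le_mul_of_nonneg_left h2 hα.le]

theorem not_mem_cone {w z : ℂ} {α L : ℝ} (hα : 0 < α) (hαL : α * L < 1)
    (hz : |z.im - w.im| ≤ L * |z.re - w.re|) : z ∉ coneAt w α := by
  intro h
  have h' : |z.re - w.re| < α * |z.im - w.im| := h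
  nlinarith [mul_le_mul_of_nonneg_left hz hα.le, abs_nonneg (z.re - w.re)]

/-- The Lipschitz factor of a test function at horizontal distance `δ |u|` from the vertex. -/
def lipFac (ρ u : ℝ) : ℝ := (2 + 4 / (ρ * |u|)) * (2 / (ρ * |u|))

/-- Vertical Lipschitz bound for a test function, from the Cauchy estimate on discs that avoid the
cone at `w`. -/
theorem TestFn.P_lip {K : Set ℂ} {w : ℂ} {α ε δ L : ℝ} (T : TestFn K w α ε δ) (hε : 0 < ε)
    (hδ : 0 < δ) (hα : 0 < α) (hαL : α * L < 1) {u : ℝ} (hu : u ≠ 0) {z₁ z₂ : ℂ}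
    (h₁ : z₁.re - w.re = δ * u) (h₂ : z₂.re - w.re = δ * u)
    (h₁' : |z₁.im - w.im| ≤ L * |δ * u|) (h₂' : |z₂.im - w.im| ≤ L * |δ * u|) :
    ‖T.P z₁ - T.P z₂‖ ≤ lipFac ((1 - α * L) / (1 + α)) u * (‖z₁ - z₂‖ / δ) := by
  set ρ := (1 - α * L) / (1 + α) with hρ
  have hρ0 : 0 < ρ := div_pos (by linarith) (by linarith)
  have hu' : 0 < |u| := abs_pos.2 hu
  set R := ρ * (δ * |u|) / 2 with hR
  have hR0 : 0 < R := by positivity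
  have hd := (T.laurent hδ).1
  set S : Set ℂ := {z | z.re - w.re = δ * u ∧ |z.im - w.im| ≤ L * |δ * u|} with hS
  have hScv : Convex ℝ S := by
    rintro x ⟨hx, hx'⟩ y ⟨hy, hy'⟩ a b ha hb hab
    rw [abs_le] at hx' hy'
    refine ⟨?_, ?_⟩
    · simp only [Complex.add_re, Complex.real_smul, Complex.re_ofReal_mul]
      linear_combination a * hx + b * hy + w.re * hab + δ * u * hab
    · simp only [Complex.add_im, Complex.real_smul, Complex.im_ofReal_mul]
      have e : a * x.im + b * y.im - w.im = a * (x.im - w.im) + b * (y.im - w.im) := by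
        linear_combination w.im * hab
      rw [e, abs_le]
      constructor <;> nlinarith
  have hfar : ∀ z ∈ S, ∀ ζ ∈ coneAt w α, 2 * R ≤ ‖z - ζ‖ := by
    intro z hz ζ hζ
    have := cone_dist (z := z) (L := L) hα (by rw [hz.1]; exact hz.2) hζ
    rw [hz.1, abs_mul, abs_of_pos hδ] at this
    rw [hR]
    linarith
  have hFfar : ∀ z ∈ S, ∀ ζ ∈ closedBall z R, ζ ∉ T.F := by
    intro z hz ζ hζ hF
    have := hfar z hz ζ (T.subset hF).1.2.1
    rw [mem_closedBall, dist_eq_norm, norm_sub_rev] at hζ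
    linarith
  have hlfar : ∀ z ∈ S, ∀ ζ ∈ closedBall z R, R ≤ ‖ζ - T.l‖ := by
    intro z hz ζ hζ
    have h1 := hfar z hz T.l (T.l_mem hε hδ).2.1
    rw [mem_closedBall, dist_eq_norm, norm_sub_rev] at hζ
    have := norm_add_le (z - ζ) (ζ - T.l)
    rw [sub_add_sub_cancel] at this
    linarith
  have hdiff : ∀ z ∈ S, ∀ ζ ∈ closedBall z R, DifferentiableAt ℂ T.P ζ := by
    intro z hz ζ hζ
    refine T.P_diff (hFfar z hz ζ hζ) ?_
    have := hlfar z hz ζ hζ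
    exact sub_ne_zero.1 (norm_pos_iff.1 (by linarith))
  have hder : ∀ z ∈ S, ‖deriv T.P z‖ ≤ (2 + 2 * δ / R) / R := by
    intro z hz
    refine Complex.norm_deriv_le_of_forall_mem_sphere_norm_le hR0 ?_ ?_
    · refine DifferentiableOn.diffContOnCl fun ζ hζ => ?_
      rw [closure_ball z hR0.ne'] at hζ
      exact (hdiff z hz ζ hζ).differentiableWithinAt
    · intro ζ hζ
      have h1 := hlfar z hz ζ (sphere_subset_closedBall hζ)
      refine (norm_sub_le _ _).trans (add_le_add (T.bdd ζ) ?_)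
      rw [norm_div]
      gcongr
  have := hScv.norm_image_sub_le_of_norm_deriv_le
    (fun z hz => hdiff z hz z (mem_closedBall_self hR0.le)) hder
    (show z₂ ∈ S from ⟨h₂, h₂'⟩) (show z₁ ∈ S from ⟨h₁, h₁'⟩)
  refine this.trans (le_of_eq ?_)
  rw [hR, lipFac]
  field_simp
  ring

/-- The parametrisation `x ↦ x + i A(x)` of the graph of `A`. -/
def graphMap (A : ℝ → ℝ) (x : ℝ) : ℂ := ⟨x, A x⟩

theorem graphMap_eq (A : ℝ → ℝ) (x : ℝ) : graphMap A x = x + A x * I := by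
  apply Complex.ext <;> simp [graphMap]

/-- An upper bound for the error made when the graph of `A` is replaced by its tangent at
`x₀`, at scale `δ`. -/
def tangErr (A : ℝ → ℝ) (x₀ s M ρ δ : ℝ) : ℝ :=
  ∫ u : ℝ, min (2 * M / (1 + u ^ 2)) (lipFac ρ u * |(A (x₀ + δ * u) - A x₀) / δ - s * u|)

theorem lipFac_nonneg {ρ : ℝ} (hρ : 0 < ρ) (u : ℝ) : 0 ≤ lipFac ρ u := by
  unfold lipFac; positivity

theorem measurable_tangErr {A : ℝ → ℝ} (hA : Continuous A) (x₀ s M ρ δ : ℝ) : Measurable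
    fun u : ℝ => min (2 * M / (1 + u ^ 2))
      (lipFac ρ u * |(A (x₀ + δ * u) - A x₀) / δ - s * u|) := by
  have := hA.measurable
  unfold lipFac
  simp_rw [← Real.norm_eq_abs]
  fun_prop

theorem integrable_bd (M : ℝ) : Integrable fun u : ℝ => 2 * M / (1 + u ^ 2) := by
  simp_rw [div_eq_mul_inv]
  exact integrable_inv_one_add_sq.const_mul _

theorem tangErr_norm_le {A : ℝ → ℝ} {x₀ s M ρ : ℝ} (hM : 0 ≤ M) (hρ : 0 < ρ) (δ u : ℝ) :
    ‖min (2 * M / (1 + u ^ 2)) (lipFac ρ u * |(A (x₀ + δ * u) - A x₀) / δ - s * u|)‖ ≤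
      2 * M / (1 + u ^ 2) := by
  have h1 := lipFac_nonneg hρ u
  rw [Real.norm_eq_abs, abs_of_nonneg (le_min (by positivity) (by positivity))]
  exact min_le_left _ _

theorem tangErr_tendsto {A : ℝ → ℝ} (hA : Continuous A) {x₀ s M ρ : ℝ} (hM : 0 ≤ M) (hρ : 0 < ρ)
    (hs : HasDerivAt A s x₀) : Tendsto (tangErr A x₀ s M ρ) (𝓝[>] 0) (𝓝 0) := by
  have h0 : (0:ℝ) = ∫ u : ℝ, (0:ℝ) := by simp
  suffices H : Tendsto (tangErr A x₀ s M ρ) (𝓝[>] 0) (𝓝 (∫ u : ℝ, (0:ℝ))) by rwa [← h0] at H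
  unfold tangErr
  refine tendsto_integral_filter_of_dominated_convergence (fun u : ℝ => 2 * M / (1 + u ^ 2))
    (Eventually.of_forall fun δ => (measurable_tangErr hA _ _ _ _ _).aestronglyMeasurable)
    (Eventually.of_forall fun δ => Eventually.of_forall fun u => tangErr_norm_le hM hρ δ u)
    (integrable_bd M) (Eventually.of_forall fun u => ?_)
  have h1 : Tendsto (fun δ : ℝ => (A (x₀ + δ * u) - A x₀) / δ) (𝓝[>] 0) (𝓝 (s * u)) := by
    have h2 : HasDerivAt (fun δ : ℝ => A (x₀ + δ * u)) (s * u) 0 := by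
      have h3 : HasDerivAt (fun δ : ℝ => x₀ + δ * u) u 0 := by
        simpa using ((hasDerivAt_id (0:ℝ)).mul_const u).const_add x₀
      have h4 : HasDerivAt A s (x₀ + 0 * u) := by simpa using hs
      exact h4.comp 0 h3
    have h5 := h2.tendsto_slope_zero_right
    simp only [zero_add, zero_mul, add_zero, smul_eq_mul] at h5
    refine h5.congr fun δ => ?_
    rw [div_eq_inv_mul]
  have h6 : Tendsto (fun δ : ℝ => lipFac ρ u * |(A (x₀ + δ * u) - A x₀) / δ - s * u|) (𝓝[>] 0)
      (𝓝 0) := by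
    have := ((h1.sub_const (s * u)).abs).const_mul (lipFac ρ u)
    simpa using this
  have h7 := (tendsto_const_nhds (x := 2 * M / (1 + u ^ 2)) (f := 𝓝[>] (0:ℝ))).min h6
  have e : min (2 * M / (1 + u ^ 2)) 0 = 0 := min_eq_right (by positivity)
  rw [e] at h7
  exact h7

/-- The integral of a test function along the graph is bounded below. -/
theorem TestFn.graph_integral {K : Set ℂ} {w : ℂ} {α ε δ : ℝ} (T : TestFn K w α ε δ)
    (hε : 0 < ε) (hδ : 0 < δ) (hα : 0 < α) {A : ℝ → ℝ} {L : ℝ≥0} (hA : LipschitzWith L A)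
    (hαL : α * L < 1) (hw : w = graphMap A w.re) {s : ℝ} (hs : HasDerivAt A s w.re) {c : ℝ}
    (hc : c * δ ≤ ‖T.d‖) :
    δ * (2 * π * c / ‖(1 + s * I : ℂ)‖ -
      tangErr A w.re s (30 + 10 / ε) ((1 - α * L) / (1 + α)) δ) ≤ ‖∫ x : ℝ, T.P (graphMap A x)‖ := by
  set M := 30 + 10 / ε with hM
  set ρ := (1 - α * L) / (1 + α) with hρ
  have hM0 : 0 ≤ M := by positivity
  have hρ0 : 0 < ρ := div_pos (by linarith) (by linarith)
  have hsL : |s| ≤ L := by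
    have := hs.le_of_lipschitz hA
    simpa using this
  have hlip : ∀ x y, |A x - A y| ≤ L * |x - y| := fun x y => by
    simpa [Real.dist_eq] using hA.dist_le_mul x y
  set p₁ : ℝ → ℂ := fun u => graphMap A (w.re + δ * u) with hp₁
  set p₂ : ℝ → ℂ := fun u => w + δ * (1 + s * I) * u with hp₂
  have hwim : w.im = A w.re := by
    have := congrArg Complex.im hw; simpa [graphMap] using this
  have r1 : ∀ u, (p₁ u).re - w.re = δ * u := fun u => by simp [hp₁, graphMap]
  have r2 : ∀ u, (p₂ u).re - w.re = δ * u := fun u => by simp [hp₂]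
  have i1 : ∀ u, |(p₁ u).im - w.im| ≤ L * |δ * u| := fun u => by
    have := hlip (w.re + δ * u) w.re
    simpa [hp₁, graphMap, hwim] using this
  have i2 : ∀ u, |(p₂ u).im - w.im| ≤ L * |δ * u| := fun u => by
    have e : (p₂ u).im - w.im = s * (δ * u) := by simp [hp₂]; ring
    rw [e, abs_mul]
    gcongr
  have hbd : ∀ z u, z.re - w.re = δ * u → |z.im - w.im| ≤ L * |δ * u| →
      ‖T.P z‖ ≤ M / (1 + u ^ 2) := by
    intro z u hz hz'
    have hn : z ∉ ball T.l (ε * δ) := fun h =>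
      not_mem_cone hα hαL (by rw [hz]; exact hz') (T.pole h).2.2.1
    refine (T.P_bound hε hδ hn).trans ?_
    rw [← hM, div_eq_mul_one_div M]
    refine mul_le_mul_of_nonneg_left ?_ hM0
    unfold kern
    have h1 : (δ * u) ^ 2 ≤ ‖z - w‖ ^ 2 := by
      rw [← sq_abs (δ * u), ← hz]
      have := Complex.abs_re_le_norm (z - w)
      rw [Complex.sub_re] at this
      gcongr
    rw [div_le_div_iff₀ (by positivity) (by positivity)]
    nlinarith
  have hgm : Measurable (graphMap A) := by
    have := hA.continuous
    have e : graphMap A = fun x : ℝ => (x + A x * I : ℂ) := funext (graphMap_eq A)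
    rw [e]
    exact Continuous.measurable (by fun_prop)
  have m1 : Measurable (fun u => T.P (p₁ u)) :=
    T.measurable_P.comp (hgm.comp (by fun_prop))
  have m2 : Measurable (fun u => T.P (p₂ u)) := T.measurable_P.comp (by fun_prop)
  have hMi : Integrable fun u : ℝ => M / (1 + u ^ 2) := by
    simp_rw [div_eq_mul_inv]
    exact integrable_inv_one_add_sq.const_mul _
  have int1 : Integrable (fun u => T.P (p₁ u)) :=
    hMi.mono' m1.aestronglyMeasurable (Eventually.of_forall fun u => hbd _ u (r1 u) (i1 u))
  have int2 : Integrable (fun u => T.P (p₂ u)) :=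
    hMi.mono' m2.aestronglyMeasurable (Eventually.of_forall fun u => hbd _ u (r2 u) (i2 u))
  have hdiff : ‖(∫ u, T.P (p₁ u)) - ∫ u, T.P (p₂ u)‖ ≤ tangErr A w.re s M ρ δ := by
    rw [← integral_sub int1 int2]
    have hae : ∀ᵐ u : ℝ, u ≠ 0 := by
      simp [ae_iff]
    refine norm_integral_le_of_norm_le ?_ (hae.mono fun u hu => le_min ?_ ?_)
    · exact (integrable_bd M).mono' (measurable_tangErr hA.continuous _ _ _ _ _).aestronglyMeasurable
        (Eventually.of_forall fun u => tangErr_norm_le hM0 hρ0 δ u)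
    · refine (norm_sub_le _ _).trans ?_
      have := hbd _ u (r1 u) (i1 u)
      have := hbd _ u (r2 u) (i2 u)
      rw [two_mul, add_div]
      linarith
    · refine (T.P_lip hε hδ hα hαL hu (r1 u) (r2 u) (i1 u) (i2 u)).trans (le_of_eq ?_)
      congr 1
      have e : p₁ u - p₂ u = ((A (w.re + δ * u) - A w.re - s * (δ * u) : ℝ) : ℂ) * I := by
        apply Complex.ext
        · simp [hp₁, hp₂, graphMap]
        · simp [hp₁, hp₂, graphMap, hwim]; ring
      rw [e, norm_mul, Complex.norm_I, mul_one, Complex.norm_real, Real.norm_eq_abs,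
        ← abs_of_pos hδ, ← abs_div, abs_of_pos hδ]
      congr 1
      field_simp
  have hres := T.integral_tangent hε hδ hsL hαL
  have hscale : ∫ x : ℝ, T.P (graphMap A x) = δ * ∫ u, T.P (p₁ u) := by
    have h1 := Measure.integral_comp_mul_left (fun x => T.P (graphMap A (w.re + x))) δ
    rw [integral_add_left_eq_self (fun x => T.P (graphMap A x))] at h1
    simp only [hp₁]
    rw [h1, abs_of_pos (by positivity), Complex.real_smul]
    have : (δ : ℂ) ≠ 0 := by exact_mod_cast hδ.ne'
    push_cast
    field_simp
  rw [hscale, norm_mul, Complex.norm_real, Real.norm_eq_abs, abs_of_pos hδ]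
  gcongr
  have hnr : ‖∫ u, T.P (p₂ u)‖ = 2 * π * (‖T.d‖ / (δ * ‖(1 + s * I : ℂ)‖)) := by
    rw [hres]
    simp [abs_of_pos Real.pi_pos, abs_of_pos hδ]
  have hn0 : 0 < ‖(1 + s * I : ℂ)‖ := by
    rw [norm_pos_iff]
    intro h
    have := congrArg Complex.re h
    simp at this
  have h3 : 2 * π * c / ‖(1 + s * I : ℂ)‖ ≤ ‖∫ u, T.P (p₂ u)‖ := by
    rw [hnr, mul_div_assoc]
    refine mul_le_mul_of_nonneg_left ?_ (by positivity)
    rw [div_le_div_iff₀ hn0 (by positivity)]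
    nlinarith
  have h4 := norm_sub_norm_le (∫ u, T.P (p₂ u)) (∫ u, T.P (p₁ u))
  rw [norm_sub_rev] at h4
  linarith

/-! ### The density of an annihilating measure at a single point -/

/-- Length measure in the `x`-coordinate, transported to the graph of `A`. -/
def graphMeas (A : ℝ → ℝ) : Measure ℂ := Measure.map (graphMap A) volume

theorem continuous_graphMap {A : ℝ → ℝ} (hA : Continuous A) : Continuous (graphMap A) := by
  have e : graphMap A = fun x : ℝ => (x + A x * I : ℂ) := funext (graphMap_eq A)
  rw [e]
  fun_prop

theorem graphMeas_closedBall_le {A : ℝ → ℝ} (hA : Continuous A) (z : ℂ) (r : ℝ) :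
    graphMeas A (closedBall z r) ≤ 2 * ENNReal.ofReal r := by
  unfold graphMeas
  rw [Measure.map_apply (continuous_graphMap hA).measurable measurableSet_closedBall]
  have hsub : graphMap A ⁻¹' closedBall z r ⊆ Icc (z.re - r) (z.re + r) := by
    intro x hx
    rw [mem_preimage, mem_closedBall, dist_eq_norm] at hx
    have h1 := (Complex.abs_re_le_norm (graphMap A x - z)).trans hx
    rw [Complex.sub_re, abs_le] at h1
    simp only [graphMap] at h1
    constructor <;> linarith
  refine (measure_mono hsub).trans (le_of_eq ?_)
  rw [Real.volume_Icc, show z.re + r - (z.re - r) = 2 * r by ring,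
    ENNReal.ofReal_mul (by norm_num)]
  simp

theorem graphMeas_locallyFinite {A : ℝ → ℝ} (hA : Continuous A) :
    IsLocallyFiniteMeasure (graphMeas A) :=
  ⟨fun z => ⟨closedBall z 1, closedBall_mem_nhds z one_pos,
    (graphMeas_closedBall_le hA z 1).trans_lt (by simp)⟩⟩

theorem graphMeas_singleton {A : ℝ → ℝ} (hA : Continuous A) (z : ℂ) : graphMeas A {z} = 0 := by
  unfold graphMeas
  rw [Measure.map_apply (continuous_graphMap hA).measurable (measurableSet_singleton z)]
  refine measure_mono_null (t := {z.re}) ?_ (by simp)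
  intro x hx
  have : graphMap A x = z := hx
  rw [← this]
  simp [graphMap]

theorem ae_graphMeas_graph {A : ℝ → ℝ} (hA : Continuous A) :
    ∀ᵐ z ∂(graphMeas A), z = graphMap A z.re := by
  unfold graphMeas
  rw [ae_map_iff (continuous_graphMap hA).aemeasurable]
  · exact Eventually.of_forall fun x => by simp [graphMap]
  · refine (isClosed_eq continuous_id ((continuous_graphMap hA).comp
      Complex.continuous_re)).measurableSet

theorem inv_sub_mem_ratOn {K : Set ℂ} {ζ : ℂ} (hζ : ζ ∉ K) :
    (fun z : ℂ => (z - ζ)⁻¹) ∈ RatOn K := by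
  refine ⟨1, Polynomial.X - Polynomial.C ζ, ?_, ?_⟩
  · intro z hz
    simp only [Polynomial.eval_sub, Polynomial.eval_X, Polynomial.eval_C]
    exact sub_ne_zero.2 fun h => hζ (h ▸ hz)
  · funext z
    simp

theorem kern_le_one (w : ℂ) (δ : ℝ) (z : ℂ) : kern w δ z ≤ 1 := by
  unfold kern
  refine div_le_one_of_le₀ ?_ (by positivity)
  nlinarith [sq_nonneg ‖z - w‖]

theorem graph_lip {A : ℝ → ℝ} {L : ℝ≥0} (hA : LipschitzWith L A) {w z : ℂ}
    (hw : w = graphMap A w.re) (hz : z = graphMap A z.re) :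
    |z.im - w.im| ≤ L * |z.re - w.re| := by
  have h1 : w.im = A w.re := by
    have := congrArg Complex.im hw; simpa [graphMap] using this
  have h2 : z.im = A z.re := by
    have := congrArg Complex.im hz; simpa [graphMap] using this
  rw [h1, h2]
  simpa [Real.dist_eq] using hA.dist_le_mul z.re w.re

theorem annih_testFn {K : Set ℂ} (hKc : IsCompact K) {μ : Measure ℂ} [IsFiniteMeasure μ]
    (hsupp : μ Kᶜ = 0) {g : ℂ → ℂ} (hg : Integrable g μ)
    (hann : ∀ r ∈ RatOn K, ∫ z, r z * g z ∂μ = 0)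
    {w : ℂ} {α ε δ : ℝ} (hε : 0 < ε) (hδ : 0 < δ) (T : TestFn K w α ε δ) :
    Integrable (fun z => T.P z * g z) μ ∧ ∫ z, T.P z * g z ∂μ = 0 := by
  have hlK : T.l ∉ K := (T.pole (mem_ball_self (mul_pos hε hδ))).1
  have hae : ∀ᵐ z ∂μ, z ∈ K := by rw [ae_iff]; exact hsupp
  have hr := inv_sub_mem_ratOn hlK
  have i1 : Integrable (fun z => T.f z * g z) μ :=
    hg.bdd_mul T.meas.aestronglyMeasurable (Eventually.of_forall T.bdd)
  have i2 : Integrable (fun z => (z - T.l)⁻¹ * g z) μ := by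
    refine hg.bdd_mul (c := (ε * δ)⁻¹) (by fun_prop) (hae.mono fun z hz => ?_)
    rw [norm_inv]
    refine inv_anti₀ (by positivity) ?_
    by_contra hlt
    push Not at hlt
    exact (T.pole (show z ∈ ball T.l (ε * δ) by rwa [mem_ball, dist_eq_norm])).1 hz
  have e : (fun z => T.P z * g z) = fun z => T.f z * g z - T.d * ((z - T.l)⁻¹ * g z) := by
    funext z
    simp only [TestFn.P]
    ring
  rw [e]
  refine ⟨i1.sub (i2.const_mul _), ?_⟩
  rw [integral_sub i1 (i2.const_mul _), integral_const_mul, hann _ hr,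
    annih_analytic μ K hKc hsupp g hg (fun ζ hζ => hann _ (inv_sub_mem_ratOn hζ)) T.F T.compact
      (disjoint_left.2 fun z hz hF => (T.subset hF).2 hz) T.f T.diff]
  simp

/-- Bound for an integral against a test function by the integral of the kernel. -/
theorem enorm_integral_le_kern {η : Measure ℂ} {P φ : ℂ → ℂ} {w : ℂ} {δ M : ℝ} (hM : 0 ≤ M)
    (hφ : Measurable φ) (hP : ∀ᵐ z ∂η, ‖P z‖ ≤ M * kern w δ z) :
    ‖∫ z, P z * φ z ∂η‖ₑ ≤
      ENNReal.ofReal M * ∫⁻ z, ENNReal.ofReal (kern w δ z) ∂(η.withDensity fun z => ‖φ z‖ₑ) := by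
  refine (enorm_integral_le_lintegral_enorm _).trans ?_
  have hk : Measurable fun z => ENNReal.ofReal (kern w δ z) := (measurable_kern w δ).ennreal_ofReal
  rw [lintegral_withDensity_eq_lintegral_mul _ hφ.enorm hk,
    ← lintegral_const_mul _ (hφ.enorm.mul hk)]
  refine lintegral_mono_ae (hP.mono fun z hz => ?_)
  rw [enorm_mul, Pi.mul_apply, mul_comm ‖φ z‖ₑ, ← mul_assoc, ← ENNReal.ofReal_mul hM]
  gcongr
  rw [← ofReal_norm]
  exact ENNReal.ofReal_le_ofReal hz

/-- At a point of the graph where the lower cone contains a large part of the complement of `K`,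
the density `ψ` of an annihilating measure vanishes, as soon as the point is a Lebesgue point. -/
theorem pointwise_zero {K : Set ℂ} (hKc : IsCompact K) {μ σ : Measure ℂ} [IsFiniteMeasure μ]
    (hsupp : μ Kᶜ = 0) (hσ : σ ≤ μ) {g ψ : ℂ → ℂ} (hg : Integrable g μ) (hgm : Measurable g)
    (hann : ∀ r ∈ RatOn K, ∫ z, r z * g z ∂μ = 0) {A : ℝ → ℝ} {L : ℝ≥0} (hA : LipschitzWith L A)
    (hψ : Integrable ψ (graphMeas A)) (hψm : Measurable ψ)
    (hdec : ∀ P : ℂ → ℂ, Measurable P → Integrable (fun z => P z * g z) μ →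
      ∫ z, P z * g z ∂μ = (∫ z, P z * g z ∂σ) + ∫ z, P z * ψ z ∂(graphMeas A))
    {α : ℝ} (hα : 0 < α) (hαL : α * L < 1) {w : ℂ} (hw : w = graphMap A w.re) {s : ℝ}
    (hs : HasDerivAt A s w.re) (ho : upperOuter K w α)
    (hl : 0 < Filter.limsup (fun δ : ℝ => anCap (coneDownT δ w α \ K) / δ) (𝓝[>] (0:ℝ)))
    (h1 : Tendsto (fun r : ℝ => (σ.withDensity fun z => ‖g z‖ₑ) (closedBall w r) /
      ENNReal.ofReal r) (𝓝[>] 0) (𝓝 0))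
    (h2 : Tendsto (fun r : ℝ => ((graphMeas A).withDensity fun z => ‖ψ z - ψ w‖ₑ)
      (closedBall w r) / ENNReal.ofReal r) (𝓝[>] 0) (𝓝 0)) : ψ w = 0 := by
  obtain ⟨ε, c, hε, hc, hfreq⟩ := test_exists ho hl
  set m := graphMeas A with hm
  set M := 30 + 10 / ε with hM
  have hM0 : 0 ≤ M := by positivity
  set ρ := (1 - α * L) / (1 + α) with hρ
  have hρ0 : 0 < ρ := div_pos (by linarith) (by linarith)
  set c₀ := 2 * π * c / ‖(1 + s * I : ℂ)‖ with hc₀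
  have hn0 : 0 < ‖(1 + s * I : ℂ)‖ := by
    rw [norm_pos_iff]
    intro h
    have := congrArg Complex.re h
    simp at this
  have hc₀0 : 0 < c₀ := by positivity
  have hσf : ∫⁻ z, ‖g z‖ₑ ∂σ < ∞ := (hg.mono_measure hσ).2
  have k1 := kern_tendsto (η := σ.withDensity fun z => ‖g z‖ₑ) (w := w) hσf.ne
    (fun r hr => by
      refine (measure_mono (subset_univ _)).trans ?_
      rw [withDensity_apply _ MeasurableSet.univ, Measure.restrict_univ]
      exact le_mul_of_one_le_right' le_self_add) h1
  have hψf : ∫⁻ z, ‖ψ z‖ₑ ∂m < ∞ := hψ.2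
  have k2 := kern_tendsto (η := m.withDensity fun z => ‖ψ z - ψ w‖ₑ) (w := w)
    (C := (∫⁻ z, ‖ψ z‖ₑ ∂m) + ‖ψ w‖ₑ * 2)
    (by
      refine ENNReal.add_ne_top.2 ⟨hψf.ne, ENNReal.mul_ne_top enorm_ne_top (by simp)⟩)
    (fun r hr => by
      rw [withDensity_apply _ measurableSet_closedBall]
      calc ∫⁻ z in closedBall w r, ‖ψ z - ψ w‖ₑ ∂m
          ≤ ∫⁻ z in closedBall w r, (‖ψ z‖ₑ + ‖ψ w‖ₑ) ∂m := lintegral_mono fun z => enorm_sub_le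
        _ = (∫⁻ z in closedBall w r, ‖ψ z‖ₑ ∂m) + ‖ψ w‖ₑ * m (closedBall w r) := by
            rw [lintegral_add_right _ measurable_const, lintegral_const, Measure.restrict_apply_univ]
        _ ≤ (∫⁻ z, ‖ψ z‖ₑ ∂m) + ‖ψ w‖ₑ * (2 * ENNReal.ofReal r) := by
            gcongr
            · exact Measure.restrict_le_self
            · exact graphMeas_closedBall_le hA.continuous w r
        _ ≤ (∫⁻ z, ‖ψ z‖ₑ ∂m) * (1 + ENNReal.ofReal r) + ‖ψ w‖ₑ * 2 * (1 + ENNReal.ofReal r) := by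
            rw [← mul_assoc]
            gcongr
            · exact le_mul_of_one_le_right' le_self_add
            · exact le_add_self
        _ = _ := by rw [add_mul]) h2
  have hD := tangErr_tendsto hA.continuous (x₀ := w.re) (s := s) hM0 hρ0 hs
  have hDlt : ∀ᶠ δ in 𝓝[>] (0:ℝ), tangErr A w.re s M ρ δ < c₀ := hD.eventually_lt_const hc₀0
  -- the two sides of the estimate obtained by pairing the test function with the measure
  have key : ∃ᶠ δ in 𝓝[>] (0:ℝ), ‖ψ w‖ₑ * ENNReal.ofReal (c₀ - tangErr A w.re s M ρ δ) ≤
      ENNReal.ofReal M * ((∫⁻ z, ENNReal.ofReal (kern w δ z) ∂(σ.withDensity fun z => ‖g z‖ₑ)) /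
        ENNReal.ofReal δ + (∫⁻ z, ENNReal.ofReal (kern w δ z)
          ∂(m.withDensity fun z => ‖ψ z - ψ w‖ₑ)) / ENNReal.ofReal δ) := by
    refine (hfreq.and_eventually (hDlt.and self_mem_nhdsWithin)).mono ?_
    rintro δ ⟨⟨T, hT⟩, hlt, hδ⟩
    have hδ : 0 < δ := hδ
    have hgi := T.graph_integral hε hδ hα hA hαL hw hs hT.le
    have haeK : ∀ᵐ z ∂μ, z ∈ K := by rw [ae_iff]; exact hsupp
    have hPK : ∀ᵐ z ∂σ, ‖T.P z‖ ≤ M * kern w δ z :=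
      (Measure.absolutelyContinuous_of_le hσ).ae_le (haeK.mono fun z hz =>
        T.P_bound hε hδ fun hb => (T.pole hb).1 hz)
    have hPm : ∀ᵐ z ∂m, ‖T.P z‖ ≤ M * kern w δ z :=
      (ae_graphMeas_graph hA.continuous).mono fun z hz => T.P_bound hε hδ fun hb =>
        not_mem_cone hα hαL (graph_lip hA hw hz) (T.pole hb).2.2.1
    have hmap : ∫ z, T.P z ∂m = ∫ x : ℝ, T.P (graphMap A x) :=
      integral_map (continuous_graphMap hA.continuous).aemeasurable
        T.measurable_P.aestronglyMeasurable
    rw [← hmap] at hgi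
    have hpos : 0 < δ * (c₀ - tangErr A w.re s M ρ δ) := mul_pos hδ (by linarith)
    have hPi : Integrable T.P m := by
      refine Integrable.of_integral_ne_zero fun h0 => ?_
      rw [h0, norm_zero] at hgi
      exact absurd hgi (not_le.2 hpos)
    have hPψ : Integrable (fun z => T.P z * ψ z) m :=
      hψ.bdd_mul (c := M) T.measurable_P.aestronglyMeasurable (hPm.mono fun z hz =>
        hz.trans (mul_le_of_le_one_right hM0 (kern_le_one w δ z)))
    have hPd : Integrable (fun z => T.P z * (ψ z - ψ w)) m := by
      simp_rw [mul_sub]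
      exact hPψ.sub (hPi.mul_const _)
    obtain ⟨hi, h0⟩ := annih_testFn hKc hsupp hg hann hε hδ T
    rw [hdec T.P T.measurable_P hi] at h0
    have hsplit : ∫ z, T.P z * ψ z ∂m = (∫ z, T.P z * (ψ z - ψ w) ∂m) + (∫ z, T.P z ∂m) * ψ w := by
      rw [← integral_mul_const, ← integral_add hPd (hPi.mul_const _)]
      congr 1
      funext z
      ring
    rw [hsplit] at h0
    have heq : (∫ z, T.P z ∂m) * ψ w =
        -((∫ z, T.P z * g z ∂σ) + ∫ z, T.P z * (ψ z - ψ w) ∂m) := by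
      linear_combination h0
    have hle : ENNReal.ofReal (δ * (c₀ - tangErr A w.re s M ρ δ)) * ‖ψ w‖ₑ ≤
        ENNReal.ofReal M * (∫⁻ z, ENNReal.ofReal (kern w δ z) ∂(σ.withDensity fun z => ‖g z‖ₑ)) +
        ENNReal.ofReal M * (∫⁻ z, ENNReal.ofReal (kern w δ z)
          ∂(m.withDensity fun z => ‖ψ z - ψ w‖ₑ)) := by
      calc _ ≤ ‖∫ z, T.P z ∂m‖ₑ * ‖ψ w‖ₑ := by
            gcongr
            rw [← ofReal_norm]
            exact ENNReal.ofReal_le_ofReal hgi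
        _ = ‖(∫ z, T.P z * g z ∂σ) + ∫ z, T.P z * (ψ z - ψ w) ∂m‖ₑ := by
            rw [← enorm_mul, heq, enorm_neg]
        _ ≤ _ := (enorm_add_le _ _).trans (add_le_add (enorm_integral_le_kern hM0 hgm hPK)
            (enorm_integral_le_kern (φ := fun z => ψ z - ψ w) hM0 (hψm.sub_const _) hPm))
    have hδ0 : ENNReal.ofReal δ ≠ 0 := by simpa using hδ
    rw [← ENNReal.add_div, ← mul_div_assoc, mul_add,
      ENNReal.le_div_iff_mul_le (Or.inl hδ0) (Or.inl ENNReal.ofReal_ne_top)]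
    refine le_trans (le_of_eq ?_) hle
    rw [ENNReal.ofReal_mul hδ.le]
    ring
  have t1 : Tendsto (fun δ => ‖ψ w‖ₑ * ENNReal.ofReal (c₀ - tangErr A w.re s M ρ δ)) (𝓝[>] (0:ℝ))
      (𝓝 (‖ψ w‖ₑ * ENNReal.ofReal (c₀ - 0))) :=
    ENNReal.Tendsto.const_mul (ENNReal.tendsto_ofReal (hD.const_sub c₀)) (Or.inr enorm_ne_top)
  have t2 := ENNReal.Tendsto.const_mul (a := ENNReal.ofReal M) (k1.add k2)
    (Or.inr ENNReal.ofReal_ne_top)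
  have hfin := le_of_tendsto_of_tendsto_of_frequently t1 t2 key
  rw [add_zero, mul_zero, sub_zero, nonpos_iff_eq_zero, mul_eq_zero] at hfin
  rcases hfin with h | h
  · exact enorm_eq_zero.1 h
  · rw [ENNReal.ofReal_eq_zero] at h
    linarith

/-! ### Conclusion -/

theorem inv_ofReal_le {A : ℝ → ℝ} (hA : Continuous A) (w : ℂ) (r : ℝ) :
    (ENNReal.ofReal r)⁻¹ ≤ 2 * (graphMeas A (closedBall w r))⁻¹ := by
  have h1 := ENNReal.inv_le_inv.2 (graphMeas_closedBall_le hA w r)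
  rw [ENNReal.mul_inv (by simp) (by simp)] at h1
  calc (ENNReal.ofReal r)⁻¹ = 2 * (2⁻¹ * (ENNReal.ofReal r)⁻¹) := by
        rw [← mul_assoc, ENNReal.mul_inv_cancel (by simp) (by simp), one_mul]
    _ ≤ _ := by gcongr

/-- Averages over discs with respect to `graphMeas` dominate averages with respect to the
radius. -/
theorem tendsto_div_radius {A : ℝ → ℝ} (hA : Continuous A) {w : ℂ} {φ : ℝ → ℝ≥0∞}
    (h : Tendsto (fun r => φ r / graphMeas A (closedBall w r)) (𝓝[>] 0) (𝓝 0)) :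
    Tendsto (fun r => φ r / ENNReal.ofReal r) (𝓝[>] 0) (𝓝 0) := by
  have h2 := ENNReal.Tendsto.const_mul (a := 2) h (Or.inr (by simp))
  rw [mul_zero] at h2
  refine tendsto_of_tendsto_of_tendsto_of_le_of_le tendsto_const_nhds h2 (fun _ => zero_le) ?_
  intro r
  calc φ r / ENNReal.ofReal r = φ r * (ENNReal.ofReal r)⁻¹ := rfl
    _ ≤ φ r * (2 * (graphMeas A (closedBall w r))⁻¹) := by
        gcongr
        exact inv_ofReal_le hA w r
    _ = _ := by rw [mul_left_comm]; rfl

theorem ae_differentiable_graph {A : ℝ → ℝ} {L : ℝ≥0} (hA : LipschitzWith L A) :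
    ∀ᵐ w ∂(graphMeas A), DifferentiableAt ℝ A w.re := by
  unfold graphMeas
  rw [ae_map_iff (continuous_graphMap hA.continuous).aemeasurable]
  · exact hA.ae_differentiableAt_real
  · exact Complex.measurable_re (measurableSet_of_differentiableAt ℝ A)

/-- The density, with respect to `graphMeas`, of an annihilating measure `g μ` vanishes almost
everywhere on the set where the lower cone contains a large part of the complement of `K`. -/
theorem annih_ae_zero {K : Set ℂ} (hKc : IsCompact K) {μ : Measure ℂ} [IsFiniteMeasure μ]
    (hsupp : μ Kᶜ = 0) {g : ℂ → ℂ} (hg : Integrable g μ) (hgm : Measurable g)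
    (hann : ∀ r ∈ RatOn K, ∫ z, r z * g z ∂μ = 0) {A : ℝ → ℝ} {L : ℝ≥0} (hA : LipschitzWith L A)
    {α : ℝ} (hα : 0 < α) (hαL : α * L < 1) :
    ∀ᵐ w ∂((graphMeas A).withDensity (μ.rnDeriv (graphMeas A))),
      upperOuter K w α →
      0 < Filter.limsup (fun δ : ℝ => anCap (coneDownT δ w α \ K) / δ) (𝓝[>] (0:ℝ)) →
      g w = 0 := by
  have := graphMeas_locallyFinite hA.continuous
  set m := graphMeas A with hm
  set k := μ.rnDeriv m with hk
  set σ := μ.singularPart m with hσdef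
  have hkm : Measurable k := Measure.measurable_rnDeriv μ m
  have hkfin : ∀ᵐ z ∂m, k z < ∞ := Measure.rnDeriv_lt_top μ m
  have hsum : σ + m.withDensity k = μ := Measure.singularPart_add_rnDeriv μ m
  have hσ : σ ≤ μ := Measure.singularPart_le μ m
  have hkle : m.withDensity k ≤ μ := Measure.withDensity_rnDeriv_le μ m
  set ψ : ℂ → ℂ := fun z => (k z).toReal • g z with hψdef
  have hψm : Measurable ψ := hkm.ennreal_toReal.smul hgm
  have hψ : Integrable ψ m :=
    (integrable_withDensity_iff_integrable_smul' hkm hkfin).1 (hg.mono_measure hkle)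
  have hdec : ∀ P : ℂ → ℂ, Measurable P → Integrable (fun z => P z * g z) μ →
      ∫ z, P z * g z ∂μ = (∫ z, P z * g z ∂σ) + ∫ z, P z * ψ z ∂m := by
    intro P _ hi
    conv_lhs => rw [← hsum]
    rw [integral_add_measure (hi.mono_measure hσ) (hi.mono_measure hkle),
      integral_withDensity_eq_integral_toReal_smul hkm hkfin]
    congr 2
    funext z
    simp only [hψdef, Complex.real_smul]
    ring
  have hfin : IsFiniteMeasure (σ.withDensity fun z => ‖g z‖ₑ) :=
    isFiniteMeasure_withDensity (hg.mono_measure hσ).2.ne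
  have hms : (σ.withDensity fun z => ‖g z‖ₑ) ⟂ₘ m :=
    (Measure.mutuallySingular_singularPart μ m).withDensity
  have g1 := Besicovitch.ae_tendsto_rnDeriv (σ.withDensity fun z => ‖g z‖ₑ) m
  have g2 := hms.rnDeriv_ae_eq_zero
  have g3 := (Besicovitch.vitaliFamily m).ae_tendsto_lintegral_enorm_sub_div_of_integrable hψ
  rw [ae_withDensity_iff hkm]
  filter_upwards [g1, g2, g3, ae_differentiable_graph hA, ae_graphMeas_graph hA.continuous, hkfin]
    with w w1 w2 w3 w4 w5 w6 hk0 ho hl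
  rw [w2] at w1
  have w3' := w3.comp (Besicovitch.tendsto_filterAt m w)
  have hzero : ψ w = 0 := by
    refine pointwise_zero hKc hsupp hσ hg hgm hann hA hψ hψm hdec hα hαL w5 w4.hasDerivAt ho hl
      (tendsto_div_radius hA.continuous w1) (tendsto_div_radius (w := w) hA.continuous ?_)
    refine w3'.congr fun r => ?_
    rw [withDensity_apply _ measurableSet_closedBall]
    rfl
  rcases smul_eq_zero.1 hzero with h | h
  · rcases (ENNReal.toReal_eq_zero_iff _).1 h with h | h
    · exact absurd h hk0
    · exact absurd h w6.ne
  · exact h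

/-- If every bounded function lies in `R^t(K, μ)` and `μ` has no atom at `l`, evaluation at `l` is
not bounded: approximating `1 / (z - l)` off a small disc makes `1 - (z - l) r(z)` small in
norm while it equals `1` at `l`. -/
theorem not_evalBound {t : ℝ} (ht : 1 ≤ t) {K : Set ℂ} (hKc : IsCompact K) {μ : Measure ℂ}
    [IsFiniteMeasure μ] (hsupp : μ Kᶜ = 0)
    (hall : ∀ f : ℂ → ℂ, Measurable f → ∀ B : ℝ, (∀ z, ‖f z‖ ≤ B) → RtMem t K μ f)
    {l : ℂ} (hl : l ∈ K) (hatom : μ {l} = 0) (C : ℝ) : ¬ EvalBound t K μ l C := by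
  intro hC
  have ht0 : 0 < t := by linarith
  have hae : ∀ᵐ z ∂μ, z ∈ K := by rw [ae_iff]; exact hsupp
  obtain ⟨D, hD⟩ := hKc.isBounded.subset_closedBall l
  have hD0 : 0 ≤ D := by
    have := hD hl
    rw [mem_closedBall, dist_self] at this
    exact this
  have hC0 : 0 < C := by
    by_contra h
    push Not at h
    have h1 := hC (fun _ => 1) ⟨1, 1, by simp, by simp⟩
    have h2 : 0 ≤ tnorm t μ (fun _ => 1) := by unfold tnorm; positivity
    rw [norm_one] at h1
    nlinarith
  have hbound : ∀ δ : ℝ, 0 < δ → 1 ≤ C ^ t * (2 ^ t * μ.real (closedBall l δ)) := by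
    intro δ hδ
    set f₀ : ℂ → ℂ := (closedBall l δ)ᶜ.indicator fun z => (z - l)⁻¹ with hf₀
    have hf₀m : Measurable f₀ :=
      Measurable.indicator (by fun_prop) measurableSet_closedBall.compl
    have hf₀b : ∀ z, ‖f₀ z‖ ≤ δ⁻¹ := by
      intro z
      by_cases hz : z ∈ closedBall l δ
      · rw [hf₀, indicator_of_notMem (by simpa using hz), norm_zero]
        positivity
      · rw [hf₀, indicator_of_mem hz, norm_inv]
        rw [mem_closedBall, dist_eq_norm, not_le] at hz
        exact inv_anti₀ hδ hz.le
    obtain ⟨r, hr, hlim⟩ := hall f₀ hf₀m _ hf₀b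
    have hlim2 : Tendsto (fun n => C ^ t * (2 ^ t * (μ.real (closedBall l δ) +
        D ^ t * ∫ z, ‖r n z - f₀ z‖ ^ t ∂μ))) atTop
        (𝓝 (C ^ t * (2 ^ t * (μ.real (closedBall l δ) + D ^ t * 0)))) :=
      ((((hlim.const_mul _).const_add _).const_mul _).const_mul _)
    rw [mul_zero, add_zero] at hlim2
    refine ge_of_tendsto' hlim2 fun n => ?_
    obtain ⟨B, hB0, hB⟩ := ratOn_bdd hKc (hr n)
    have hrm := ratOn_measurable (hr n)
    have hint : Integrable (fun z => ‖r n z - f₀ z‖ ^ t) μ := by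
      refine Integrable.of_bound (C := (B + δ⁻¹) ^ t)
        (Measurable.aestronglyMeasurable (by fun_prop)) (hae.mono fun z hz => ?_)
      rw [Real.norm_eq_abs, abs_of_nonneg (by positivity)]
      refine Real.rpow_le_rpow (by positivity) ?_ ht0.le
      exact (norm_sub_le _ _).trans (add_le_add (hB z hz) (hf₀b z))
    obtain ⟨p, q, hq, hpq⟩ := hr n
    set F : ℂ → ℂ := fun z => (q - (Polynomial.X - Polynomial.C l) * p).eval z / q.eval z with hF
    have hFmem : F ∈ RatOn K := ⟨_, q, hq, rfl⟩
    have hFeq : ∀ z ∈ K, F z = 1 - (z - l) * r n z := by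
      intro z hz
      have := hq z hz
      rw [hpq, hF]
      simp only [Polynomial.eval_sub, Polynomial.eval_mul, Polynomial.eval_X, Polynomial.eval_C]
      field_simp
    have hpt : ∀ z ∈ K, ‖F z‖ ^ t ≤ 2 ^ t * ((closedBall l δ).indicator 1 z +
        D ^ t * ‖r n z - f₀ z‖ ^ t) := by
      intro z hz
      set a : ℝ := (closedBall l δ).indicator 1 z with ha
      have ha01 : a = 0 ∨ a = 1 := by
        by_cases h : z ∈ closedBall l δ
        · right; rw [ha, indicator_of_mem h]; rfl
        · left; rw [ha, indicator_of_notMem h]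
      have ha0 : 0 ≤ a := by rcases ha01 with h | h <;> rw [h] <;> norm_num
      have hat : a ^ t = a := by
        rcases ha01 with h | h
        · rw [h, Real.zero_rpow ht0.ne']
        · rw [h, Real.one_rpow]
      have e : F z = (a : ℂ) - (z - l) * (r n z - f₀ z) := by
        rw [hFeq z hz]
        by_cases h : z ∈ closedBall l δ
        · rw [ha, hf₀, indicator_of_mem h, indicator_of_notMem (by simpa using h)]
          simp
        · have hne : z - l ≠ 0 := by
            rw [mem_closedBall, dist_eq_norm, not_le] at h
            exact norm_pos_iff.1 (hδ.trans h)
          rw [ha, hf₀, indicator_of_notMem h, indicator_of_mem (show z ∈ (closedBall l δ)ᶜ from h)]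
          rw [mul_sub, mul_inv_cancel₀ hne]
          simp
      set b := D * ‖r n z - f₀ z‖ with hb
      have hb0 : 0 ≤ b := by positivity
      have h1 : ‖F z‖ ≤ a + b := by
        rw [e]
        refine (norm_sub_le _ _).trans (add_le_add ?_ ?_)
        · rw [Complex.norm_real, Real.norm_eq_abs, abs_of_nonneg ha0]
        · rw [norm_mul]
          have := hD hz
          rw [mem_closedBall, dist_eq_norm] at this
          exact mul_le_mul_of_nonneg_right this (norm_nonneg _)
      have h2 : a + b ≤ 2 * max a b := by
        rw [two_mul]; exact add_le_add (le_max_left _ _) (le_max_right _ _)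
      calc ‖F z‖ ^ t ≤ (2 * max a b) ^ t :=
            Real.rpow_le_rpow (norm_nonneg _) (h1.trans h2) ht0.le
        _ = 2 ^ t * (max a b) ^ t := Real.mul_rpow (by norm_num) (le_max_of_le_left ha0)
        _ ≤ 2 ^ t * (a ^ t + b ^ t) := by
            gcongr
            rcases max_choice a b with h | h <;> rw [h]
            · exact le_add_of_nonneg_right (by positivity)
            · exact le_add_of_nonneg_left (by positivity)
        _ = _ := by rw [hat, hb, Real.mul_rpow hD0 (norm_nonneg _)]
    have hindi : Integrable ((closedBall l δ).indicator (1 : ℂ → ℝ)) μ :=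
      (integrable_const (1:ℝ)).indicator measurableSet_closedBall
    have hI : ∫ z, ‖F z‖ ^ t ∂μ ≤ 2 ^ t * (μ.real (closedBall l δ) +
        D ^ t * ∫ z, ‖r n z - f₀ z‖ ^ t ∂μ) := by
      refine (integral_mono_of_nonneg (Eventually.of_forall fun z => by positivity)
        ((hindi.add (hint.const_mul _)).const_mul _) (hae.mono hpt)).trans (le_of_eq ?_)
      rw [integral_const_mul]
      congr 1
      rw [← integral_const_mul, ← integral_indicator_one measurableSet_closedBall]
      exact integral_add hindi (hint.const_mul _)
    have hev := hC F hFmem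
    rw [hFeq l hl, sub_self, zero_mul, sub_zero, norm_one] at hev
    have h3 : (1:ℝ) ≤ C ^ t * ∫ z, ‖F z‖ ^ t ∂μ := by
      have hnn : 0 ≤ ∫ z, ‖F z‖ ^ t ∂μ := by positivity
      have := Real.rpow_le_rpow zero_le_one hev ht0.le
      rw [Real.one_rpow, tnorm, Real.mul_rpow hC0.le (by positivity), ← Real.rpow_mul hnn,
        one_div, inv_mul_cancel₀ ht0.ne', Real.rpow_one] at this
      exact this
    exact h3.trans (by gcongr)
  have hlim : Tendsto (fun δ : ℝ => μ.real (closedBall l δ)) (𝓝[>] 0) (𝓝 0) := by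
    have h1 : Tendsto (fun δ : ℝ => μ (closedBall l δ)) (𝓝[>] 0) (𝓝 0) := by
      have h2 := tendsto_measure_biInter_gt (μ := μ) (s := fun δ : ℝ => closedBall l δ) (a := 0)
        (fun _ _ => measurableSet_closedBall.nullMeasurableSet)
        (fun i j _ hij => closedBall_subset_closedBall hij) ⟨1, one_pos, measure_ne_top _ _⟩
      have h3 : ⋂ δ > (0:ℝ), closedBall l δ = {l} := by
        ext z
        simp only [mem_iInter, mem_closedBall, mem_singleton_iff]
        constructor
        · intro h
          exact dist_le_zero.1 (le_of_forall_gt_imp_ge_of_dense h)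
        · rintro rfl δ hδ
          rw [dist_self]; exact hδ.le
      rw [h3, hatom] at h2
      exact h2
    have := (ENNReal.tendsto_toReal ENNReal.zero_ne_top).comp h1
    exact this
  have hl2 : Tendsto (fun δ : ℝ => C ^ t * (2 ^ t * μ.real (closedBall l δ))) (𝓝[>] 0)
      (𝓝 (C ^ t * (2 ^ t * 0))) := (hlim.const_mul _).const_mul _
  have := ge_of_tendsto hl2 (eventually_mem_nhdsWithin.mono fun δ hδ => hbound δ hδ)
  norm_num at this

/-- `ℋ¹` restricted to a part of the graph is absolutely continuous with respect to
`graphMeas`. -/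
theorem hausdorff_ac {A : ℝ → ℝ} {L : ℝ≥0} (hA : LipschitzWith L A) {E : Set ℂ}
    (hE : E ⊆ lipGraph A) : H1m.restrict E ≪ graphMeas A := by
  have hG : LipschitzWith (1 + L) (graphMap A) := by
    refine LipschitzWith.of_dist_le_mul fun x y => ?_
    rw [dist_eq_norm, graphMap_eq, graphMap_eq]
    have h1 := hA.dist_le_mul x y
    rw [Real.dist_eq, Real.dist_eq] at h1
    rw [Real.dist_eq]
    have e : (x + A x * I - (y + A y * I) : ℂ) = ((x - y : ℝ) : ℂ) + ((A x - A y : ℝ) : ℂ) * I := by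
      push_cast; ring
    rw [e]
    refine (norm_add_le _ _).trans ?_
    rw [norm_mul, Complex.norm_I, mul_one, Complex.norm_real, Complex.norm_real, Real.norm_eq_abs,
      Real.norm_eq_abs]
    push_cast
    linarith
  refine Measure.AbsolutelyContinuous.mk fun S hS h0 => ?_
  rw [graphMeas, Measure.map_apply (continuous_graphMap hA.continuous).measurable hS] at h0
  rw [Measure.restrict_apply hS]
  have hsub : S ∩ E ⊆ graphMap A '' (graphMap A ⁻¹' S) := by
    rintro z ⟨hz, hzE⟩
    have e : graphMap A z.re = z := by
      apply Complex.ext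
      · rfl
      · exact (hE hzE).symm
    exact ⟨z.re, by rw [mem_preimage, e]; exact hz, e⟩
  refine measure_mono_null hsub (le_antisymm ?_ zero_le)
  refine (hG.hausdorffMeasure_image_le zero_le_one _).trans ?_
  rw [hausdorffMeasure_real, h0, mul_zero]

/-- Theorem 3(a) (SBTheorem a): if `R^t(K,μ)` is irreducible with
`abpe(R^t(K,μ)) = Ω`, `K = Ω̄`, the upper cones along `∂_I^{LG}K` are outer, and
`μ = μ_a + μ_s` with `μ_a = (1/2π) h ℋ¹|_{∂_I^{LG}K}` and `μ_s ⊥ ℋ¹|_{∂_I^{LG}K}`,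
then `μ_a(E) = 0` where `E` is the set of `w ∈ ∂_I^{LG}K` at which the lower
cone contains a capacitarily large part of `ℂ ∖ K`. -/
theorem stmt13
    (t : ℝ) (ht : 1 ≤ t)
    (Ω : Set ℂ) (hΩo : IsOpen Ω)
    (K : Set ℂ) (hK : K = closure Ω) (hKc : IsCompact K)
    (μ : Measure ℂ) [IsFiniteMeasure μ] (hsupp : μ Kᶜ = 0)
    (hirr : RtIrred t K μ) (habpe : abpeSet t K μ = Ω)
    (A : ℝ → ℝ) (L : ℝ≥0) (hA : LipschitzWith L A)
    (α : ℝ) (hα : 0 < α) (hαL : α * (L:ℝ) < 1)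
    (houter : ∀ w ∈ typeI K A α, upperOuter K w α)
    (h : ℂ → ℝ) (μa μs : Measure ℂ)
    (hμa : μa = (H1m.restrict (typeI K A α)).withDensity
      (fun z => ENNReal.ofReal (h z / (2 * Real.pi))))
    (hdec : μ = μa + μs)
    (hsing : μs.MutuallySingular (H1m.restrict (typeI K A α))) :
    μa {w | w ∈ typeI K A α ∧
      0 < Filter.limsup (fun δ : ℝ => anCap (coneDownT δ w α \ K) / δ) (𝓝[>] (0:ℝ))} = 0 := by
  set E : Set ℂ := {w | w ∈ typeI K A α ∧
    0 < Filter.limsup (fun δ : ℝ => anCap (coneDownT δ w α \ K) / δ) (𝓝[>] (0:ℝ))} with hE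
  have := graphMeas_locallyFinite hA.continuous
  set m := graphMeas A with hm
  set κ := m.withDensity (μ.rnDeriv m) with hκ
  set σ := μ.singularPart m with hσ
  have hsum : σ + κ = μ := Measure.singularPart_add_rnDeriv μ m
  have hac : μa ≪ m := by
    rw [hμa]
    exact (withDensity_absolutelyContinuous _ _).trans (hausdorff_ac hA fun z hz => hz.1)
  have hle : μa ≤ μ := by rw [hdec]; exact Measure.le_add_right le_rfl
  obtain ⟨N, hN, hσN, hmN⟩ := Measure.mutuallySingular_singularPart μ m
  have hNc : m Nᶜ = 0 := hmN
  -- `N` is `σ`-null with `m`-null complement, so `μ` restricted to `N` is `κ`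
  set E' := toMeasurable κ E ∩ N with hE'
  have hE'm : MeasurableSet E' := (measurableSet_toMeasurable _ _).inter hN
  have hσE' : σ E' = 0 := measure_mono_null inter_subset_right hσN
  have hann : ∀ g : ℂ → ℂ, Measurable g → Integrable g μ →
      (∀ r ∈ RatOn K, ∫ z, r z * g z ∂μ = 0) → ∀ᵐ z ∂μ, z ∈ E' → g z = 0 := by
    intro g hgm hg hgann
    have h1 := annih_ae_zero hKc hsupp hg hgm hgann hA hα hαL
    have hgs : MeasurableSet {z | g z ≠ 0} := (hgm (measurableSet_singleton 0)).compl
    have h2 : κ (E ∩ {z | g z ≠ 0}) = 0 := by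
      refine measure_mono_null ?_ (ae_iff.1 h1)
      rintro z ⟨hz, hgz⟩ hcon
      exact hgz (hcon (houter z hz.1) hz.2)
    rw [← Measure.measure_toMeasurable_inter_of_sFinite hgs] at h2
    rw [ae_iff, ← hsum, Measure.add_apply]
    have hset : {z | ¬ (z ∈ E' → g z = 0)} ⊆ E' ∩ {z | g z ≠ 0} := fun z hz => by
      simpa using hz
    rw [measure_mono_null (hset.trans inter_subset_left) hσE',
      measure_mono_null (hset.trans (inter_subset_inter_left _ inter_subset_left)) h2, add_zero]
  have hmem : RtMem t K μ (E'.indicator 1) := by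
    refine rtMem_of_annih ht hKc hsupp (measurable_one.indicator hE'm) (B := 1) ?_ ?_
    · intro z
      by_cases hz : z ∈ E'
      · rw [indicator_of_mem hz]; simp
      · rw [indicator_of_notMem hz]; simp
    · intro g hgm hg hgann
      refine integral_eq_zero_of_ae ((hann g hgm hg hgann).mono fun z hz => ?_)
      by_cases hzE : z ∈ E'
      · simp [hz hzE]
      · simp [indicator_of_notMem hzE]
  rcases hirr E' hE'm hmem with h0 | h0
  · refine measure_mono_null (t := E' ∪ Nᶜ) ?_ (measure_union_null (le_antisymm
      ((hle E').trans h0.le) zero_le) (hac hNc))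
    intro z hz
    by_cases hzN : z ∈ N
    · exact Or.inl ⟨subset_toMeasurable _ _ hz, hzN⟩
    · exact Or.inr hzN
  · rcases Ω.eq_empty_or_nonempty with hΩ | ⟨l, hl⟩
    · have : E = ∅ := by
        rw [eq_empty_iff_forall_notMem]
        rintro z ⟨⟨-, hz, -⟩, -⟩
        rw [hK, hΩ] at hz
        simp at hz
      rw [this, measure_empty]
    · exfalso
      have hlK : l ∈ K := by rw [hK]; exact subset_closure hl
      rw [← habpe] at hl
      obtain ⟨δ, hδ, C, hC⟩ := hl
      refine not_evalBound ht hKc hsupp ?_ hlK ?_ C (hC l (mem_ball_self hδ))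
      · intro f hf B hB
        refine rtMem_of_annih ht hKc hsupp hf hB fun g hgm hg hgann => ?_
        have hE'ae : ∀ᵐ z ∂μ, z ∈ E' := by rw [ae_iff]; exact h0
        refine integral_eq_zero_of_ae ?_
        filter_upwards [hann g hgm hg hgann, hE'ae] with z hz hzE
        simp [hz hzE]
      · by_cases hlE : l ∈ E'
        · rw [← hsum, Measure.add_apply, measure_mono_null (singleton_subset_iff.2 hlE) hσE',
            zero_add]
          exact withDensity_absolutelyContinuous _ _ (graphMeas_singleton hA.continuous l)
        · exact measure_mono_null (singleton_subset_iff.2 hlE) h0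

end
end

section
/- Let K = closure(𝔻) ∖ ⋃_{n=1}^∞ B(a_n, r_n) be a Swiss cheese: B(a_n, r_n) ⊂ 𝔻, the closed discs B̄(a_i, r_i) are pairwise disjoint, Σ_{n=1}^∞ r_n < ∞, and K has empty interior. Let μ be the sum of the arc-length measures of ∂𝔻 and of all circles ∂B(a_n, r_n). Then limsup_{δ→0} γ(Γ^δ(e^{iθ}) ∖ K)/δ = 0 for m-almost every e^{iθ} ∈ ∂𝔻. -/
/-!
The argument covers the holes near a boundary point by discs and counts their radii.

* `exists_capAux_le`: if a compact set is covered by finitely many discs, its analytic capacity is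
  at most a universal constant times the sum of their radii. For an admissible `f`, multiply by a
  cutoff `φ` vanishing on the discs and equal to `1` far away, and apply Green's formula to `φ f`
  on a large square: the contour integral recovers `f'(∞)` up to a constant, while
  `∂̄(φ f) = f ∂̄φ` has size at most about `1 / r n` on a disc of radius `2 r n`, for a total of
  order `∑ r n`.
* `ae_density_zero`: the measure `∑ r n • δ_{a n}` is finite and purely atomic, hence singular to
  `m`. By the Besicovitch differentiation theorem, and since `m (B(z, δ)) ≤ δ`, it gives mass
  `o(δ)` to the disc of radius `δ` about almost every `z` on the circle.

By Borel–Cantelli, almost every `z` lies in only finitely many of the discs `B(a n, 2 r n)`. Almost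
every `z` also lies in none of the closed discs `B̄(a n, r n)`, as each of them touches the circle
in at most one point. For such `z` and small `δ`, every hole meeting `B(z, δ)` has radius below `δ`
and so its centre lies within `2 δ` of `z`. As the approach region lies in the open unit disc, a
compact subset of `Γ^δ(z) ∖ K` is covered by these holes, whose radii add up to `o(δ)`.
-/

open MeasureTheory Metric Filter Set Complex Topology Bornology
open scoped ENNReal NNReal Real

noncomputable section

/-! ### Contour integrals along large squares and Green's formula -/

/-- The four sides of the square of half-width `R` centred at `0`, parametrized simultaneously by
`t ∈ [-R, R]`: the integral of `sqSides g R` over `[-R, R]` is the counterclockwise contour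
integral of `g` along the boundary of the square. -/
def sqSides (g : ℂ → ℂ) (R t : ℝ) : ℂ :=
  g (t - R * I) - g (t + R * I) + I * g (R + t * I) - I * g (-R + t * I)

lemma continuous_sqSides {g : ℂ → ℂ} (hg : Continuous g) (R : ℝ) :
    Continuous (sqSides g R) := by
  unfold sqSides
  fun_prop

lemma sqSides_inv {R : ℝ} (hR : 0 < R) (t : ℝ) (d : ℂ) :
    sqSides (fun z => d / z) R t = d * (((4 * R / (t ^ 2 + R ^ 2) : ℝ) : ℂ) * I) := by
  have hpos : (0:ℝ) < t ^ 2 + R ^ 2 := by positivity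
  have h0 : ((t:ℂ) ^ 2 + (R:ℂ) ^ 2) ≠ 0 := by exact_mod_cast hpos.ne'
  have hI : (I:ℂ) ^ 2 = -1 := I_sq
  have hf : ((t:ℂ) - R * I) * (t + R * I) = t ^ 2 + R ^ 2 := by ring_nf; rw [hI]; ring
  have h1 : ((t:ℂ) - R * I) ≠ 0 := fun h => h0 (by rw [← hf, h, zero_mul])
  have h2 : ((t:ℂ) + R * I) ≠ 0 := fun h => h0 (by rw [← hf, h, mul_zero])
  have e3 : ((R:ℂ) + t * I) = I * (t - R * I) := by ring_nf; rw [hI]; ring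
  have e4 : (-(R:ℂ) + t * I) = I * (t + R * I) := by ring_nf; rw [hI]; ring
  unfold sqSides
  push_cast
  rw [e3, e4, ← hf]
  field_simp
  ring

/-- The residue at infinity of a continuous function is controlled by its contour integrals along
large squares. The factor `4` is a lower bound for `|∮ dz / z| = 2π`. -/
lemma norm_le_of_sqSides {g : ℂ → ℂ} (hg : Continuous g) {g0 d : ℂ} {B : ℝ}
    (hd : Tendsto (fun z => z * (g z - g0)) (cobounded ℂ) (𝓝 d))
    (hB : ∀ R : ℝ, 0 < R → ‖∫ t in (-R)..R, sqSides g R t‖ ≤ B) : 4 * ‖d‖ ≤ B := by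
  refine le_of_forall_pos_le_add fun ε hε => ?_
  have hev : ∀ᶠ z in cobounded ℂ, ‖z * (g z - g0) - d‖ < ε / 8 := by
    have := (Metric.tendsto_nhds.1 hd) (ε / 8) (by positivity)
    simpa [dist_eq_norm] using this
  rw [(hasBasis_cobounded_norm (E := ℂ)).eventually_iff] at hev
  obtain ⟨R0, -, hR0⟩ := hev
  set R : ℝ := max R0 1 with hRdef
  have hR : 0 < R := lt_of_lt_of_le one_pos (le_max_right _ _)
  have key : ∀ z : ℂ, R ≤ ‖z‖ → ‖(g z - g0) - d / z‖ ≤ ε / 8 / R := by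
    intro z hz
    have hzpos : 0 < ‖z‖ := hR.trans_le hz
    have hz0 : z ≠ 0 := norm_pos_iff.1 hzpos
    have h1 : ‖z * (g z - g0) - d‖ < ε / 8 := hR0 (le_trans (le_max_left _ _) hz)
    have h2 : (g z - g0) - d / z = (z * (g z - g0) - d) / z := by field_simp
    rw [h2, norm_div]
    gcongr
  have hside : ∀ t : ℝ, ‖sqSides g R t - sqSides (fun z => d / z) R t‖ ≤ 4 * (ε / 8 / R) := by
    intro t
    have n1 : R ≤ ‖(t:ℂ) - R * I‖ := by
      have := abs_im_le_norm ((t:ℂ) - R * I)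
      simpa [abs_of_pos hR] using this
    have n2 : R ≤ ‖(t:ℂ) + R * I‖ := by
      have := abs_im_le_norm ((t:ℂ) + R * I)
      simpa [abs_of_pos hR] using this
    have n3 : R ≤ ‖(R:ℂ) + t * I‖ := by
      have := abs_re_le_norm ((R:ℂ) + t * I)
      simpa [abs_of_pos hR] using this
    have n4 : R ≤ ‖-(R:ℂ) + t * I‖ := by
      have := abs_re_le_norm (-(R:ℂ) + t * I)
      simpa [abs_of_pos hR] using this
    -- the constant `g0` cancels on opposite sides of the square
    have e : sqSides g R t - sqSides (fun z => d / z) R t =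
        ((g (t - R * I) - g0) - d / (t - R * I)) - ((g (t + R * I) - g0) - d / (t + R * I))
        + I * ((g (R + t * I) - g0) - d / (R + t * I))
        - I * ((g (-R + t * I) - g0) - d / (-R + t * I)) := by
      unfold sqSides; ring
    rw [e]
    refine (norm_sub_le _ _).trans ?_
    grw [norm_add_le, norm_sub_le]
    rw [norm_mul, norm_mul, norm_I, one_mul, one_mul]
    linarith [key _ n1, key _ n2, key _ n3, key _ n4]
  have hc2 : Continuous (sqSides (fun z => d / z) R) := by
    have : sqSides (fun z => d / z) R =
        fun t : ℝ => d * (((4 * R / (t ^ 2 + R ^ 2) : ℝ) : ℂ) * I) := by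
      ext t; exact sqSides_inv hR t d
    rw [this]
    have : ∀ t : ℝ, t ^ 2 + R ^ 2 ≠ 0 := fun t => by positivity
    fun_prop (disch := assumption)
  have hdiff : ‖(∫ t in (-R)..R, sqSides g R t) - ∫ t in (-R)..R, sqSides (fun z => d / z) R t‖
      ≤ ε := by
    rw [← intervalIntegral.integral_sub ((continuous_sqSides hg R).intervalIntegrable _ _)
      (hc2.intervalIntegrable _ _)]
    refine (intervalIntegral.norm_integral_le_of_norm_le_const fun t _ => hside t).trans ?_
    rw [abs_of_pos (by linarith)]
    field_simp
    norm_num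
  have hmain : 4 * ‖d‖ ≤ ‖∫ t in (-R)..R, sqSides (fun z => d / z) R t‖ := by
    simp_rw [sqSides_inv hR]
    rw [intervalIntegral.integral_const_mul, intervalIntegral.integral_mul_const,
      intervalIntegral.integral_ofReal]
    rw [norm_mul, norm_mul, norm_I, mul_one, norm_real, mul_comm]
    refine mul_le_mul_of_nonneg_left ?_ (norm_nonneg _)
    refine le_trans ?_ (le_abs_self _)
    have hcont : Continuous fun t : ℝ => 4 * R / (t ^ 2 + R ^ 2) := by
      have : ∀ t : ℝ, t ^ 2 + R ^ 2 ≠ 0 := fun t => by positivity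
      fun_prop (disch := assumption)
    have : ∫ t in (-R)..R, (2 / R : ℝ) ≤ ∫ t in (-R)..R, 4 * R / (t ^ 2 + R ^ 2) := by
      refine intervalIntegral.integral_mono_on (by linarith) (by simp)
        (hcont.intervalIntegrable _ _) fun t ht => ?_
      have : t ^ 2 ≤ R ^ 2 := sq_le_sq' ht.1 ht.2
      rw [div_le_div_iff₀ hR (by positivity)]
      nlinarith
    refine le_trans (le_of_eq ?_) this
    rw [intervalIntegral.integral_const, smul_eq_mul]
    field_simp
    norm_num
  have := hB R hR
  have h3 := norm_sub_norm_le (∫ t in (-R)..R, sqSides (fun z => d / z) R t)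
    (∫ t in (-R)..R, sqSides g R t)
  rw [norm_sub_rev] at h3
  linarith

/-- Green's formula on a square, with the `∂̄`-derivative of `g` dominated by a sum of multiples of
indicators of discs. -/
lemma sqSides_le_of_dbar {g : ℂ → ℂ} (hg : ContDiff ℝ 1 g) (s : Finset ℕ) (a : ℕ → ℂ)
    (r : ℕ → ℝ) (hr : ∀ n, 0 < r n) (c : ℝ≥0)
    (hb : ∀ z, ‖I • fderiv ℝ g z 1 - fderiv ℝ g z I‖ ≤
      ∑ n ∈ s, (closedBall (a n) (2 * r n)).indicator (fun _ => (c / r n : ℝ)) z)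
    (R : ℝ) : ‖∫ t in (-R)..R, sqSides g R t‖ ≤ 16 * c * ∑ n ∈ s, r n := by
  have hcd : Continuous (fun z => I • fderiv ℝ g z 1 - fderiv ℝ g z I) := by
    have := hg.continuous_fderiv one_ne_zero
    fun_prop
  have hgc := hg.continuous
  have green := Complex.integral_boundary_rect_of_differentiableOn_real g (-R - R * I) (R + R * I)
    (hg.differentiable one_ne_zero).differentiableOn
    (hcd.continuousOn.integrableOn_compact (isCompact_uIcc.reProdIm isCompact_uIcc))
  have e1 : ((-R - R * I : ℂ)).re = -R := by simp
  have e2 : ((-R - R * I : ℂ)).im = -R := by simp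
  have e3 : ((R + R * I : ℂ)).re = R := by simp
  have e4 : ((R + R * I : ℂ)).im = R := by simp
  rw [e1, e2, e3, e4] at green
  have eq : ∫ t in (-R)..R, sqSides g R t = ∫ x : ℝ in (-R)..R, ∫ y : ℝ in (-R)..R,
        (I • fderiv ℝ g (x + y * I) 1 - fderiv ℝ g (x + y * I) I) := by
    rw [← green]
    unfold sqSides
    have i1 : Continuous fun t : ℝ => g (t - R * I) := by fun_prop
    have i2 : Continuous fun t : ℝ => g (t + R * I) := by fun_prop
    have i3 : Continuous fun t : ℝ => I * g (R + t * I) := by fun_prop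
    have i4 : Continuous fun t : ℝ => I * g (-R + t * I) := by fun_prop
    have i12 : Continuous fun t : ℝ => g (t - R * I) - g (t + R * I) := i1.sub i2
    have i123 : Continuous fun t : ℝ => g (t - R * I) - g (t + R * I) + I * g (R + t * I) :=
      i12.add i3
    rw [intervalIntegral.integral_sub (i123.intervalIntegrable _ _) (i4.intervalIntegrable _ _),
      intervalIntegral.integral_add (i12.intervalIntegrable _ _)
      (i3.intervalIntegrable _ _),
      intervalIntegral.integral_sub (i1.intervalIntegrable _ _) (i2.intervalIntegrable _ _),
      intervalIntegral.integral_const_mul, intervalIntegral.integral_const_mul]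
    simp [sub_eq_add_neg]
  rw [eq]
  set G : ℂ → ℂ := fun z => I • fderiv ℝ g z 1 - fderiv ℝ g z I with hG
  -- the disc of radius `2 r n` sits in a square of side `4 r n`
  set J : ℕ → Set ℝ := fun n => Icc ((a n).re - 2 * r n) ((a n).re + 2 * r n)
  set J' : ℕ → Set ℝ := fun n => Icc ((a n).im - 2 * r n) ((a n).im + 2 * r n)
  have hpt : ∀ x y : ℝ, ‖G (x + y * I)‖ₑ ≤ ∑ n ∈ s,
      (J n).indicator (fun _ => ENNReal.ofReal (c / r n)) x * (J' n).indicator 1 y := by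
    intro x y
    rw [← ofReal_norm]
    refine (ENNReal.ofReal_le_ofReal (hb _)).trans ?_
    rw [ENNReal.ofReal_sum_of_nonneg]
    · refine Finset.sum_le_sum fun n _ => ?_
      by_cases h : (x + y * I : ℂ) ∈ closedBall (a n) (2 * r n)
      · rw [mem_closedBall, dist_eq_norm] at h
        have h1 := (abs_re_le_norm _).trans h
        have h2 := (abs_im_le_norm _).trans h
        simp only [sub_re, add_re, ofReal_re, mul_re, I_re, mul_zero, ofReal_im, I_im, mul_one,
          sub_self, add_zero, sub_im, add_im, mul_im, zero_add] at h1 h2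
        rw [abs_le] at h1 h2
        have m1 : x ∈ J n := ⟨by linarith, by linarith⟩
        have m2 : y ∈ J' n := ⟨by linarith, by linarith⟩
        rw [indicator_of_mem m1, indicator_of_mem m2, Pi.one_apply, mul_one,
          indicator_of_mem (by rwa [mem_closedBall, dist_eq_norm])]
      · rw [indicator_of_notMem h]; simp
    · intro n _
      exact indicator_nonneg (fun _ _ => div_nonneg c.2 (hr n).le) _
  have hfin : ‖∫ x : ℝ in (-R)..R, ∫ y : ℝ in (-R)..R, G (x + y * I)‖ₑ ≤
      ENNReal.ofReal (16 * c * ∑ n ∈ s, r n) := by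
    calc ‖∫ x : ℝ in (-R)..R, ∫ y : ℝ in (-R)..R, G (x + y * I)‖ₑ
        ≤ ∫⁻ x : ℝ, ∫⁻ y : ℝ, ‖G (x + y * I)‖ₑ := by
          rw [intervalIntegral.intervalIntegral_eq_integral_uIoc, enorm_smul]
          refine le_trans (mul_le_of_le_one_left (zero_le) (by split_ifs <;> simp)) ?_
          refine (enorm_integral_le_lintegral_enorm _).trans ?_
          refine (setLIntegral_le_lintegral _ _).trans (lintegral_mono fun x => ?_)
          rw [intervalIntegral.intervalIntegral_eq_integral_uIoc, enorm_smul]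
          refine le_trans (mul_le_of_le_one_left (zero_le) (by split_ifs <;> simp)) ?_
          refine (enorm_integral_le_lintegral_enorm _).trans ?_
          exact setLIntegral_le_lintegral _ _
      _ ≤ ∫⁻ x : ℝ, ∫⁻ y : ℝ, ∑ n ∈ s,
          (J n).indicator (fun _ => ENNReal.ofReal (c / r n)) x * (J' n).indicator 1 y :=
          lintegral_mono fun x => lintegral_mono fun y => hpt x y
      _ = ∑ n ∈ s, ENNReal.ofReal (c / r n) * volume (J n) * volume (J' n) := by
          have hm : ∀ n, Measurable ((J' n).indicator (1 : ℝ → ℝ≥0∞)) :=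
            fun n => measurable_one.indicator measurableSet_Icc
          have hm' : ∀ n, Measurable ((J n).indicator
              (fun _ : ℝ => ENNReal.ofReal (c / r n))) :=
            fun n => measurable_const.indicator measurableSet_Icc
          have : ∀ x, ∫⁻ y : ℝ, ∑ n ∈ s,
              (J n).indicator (fun _ => ENNReal.ofReal (c / r n)) x * (J' n).indicator 1 y
              = ∑ n ∈ s, (J n).indicator (fun _ => ENNReal.ofReal (c / r n)) x *
                volume (J' n) := by
            intro x
            rw [lintegral_finsetSum _ fun n _ => (hm n).const_mul _]
            refine Finset.sum_congr rfl fun n _ => ?_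
            rw [lintegral_const_mul _ (hm n), lintegral_indicator_one measurableSet_Icc]
          simp_rw [this]
          rw [lintegral_finsetSum _ fun n _ => (hm' n).mul_const _]
          refine Finset.sum_congr rfl fun n _ => ?_
          rw [lintegral_mul_const _ (hm' n), lintegral_indicator_const measurableSet_Icc]
      _ = ENNReal.ofReal (16 * c * ∑ n ∈ s, r n) := by
          have hnn : ∀ n ∈ s, 0 ≤ 16 * (c : ℝ) * r n :=
            fun n _ => mul_nonneg (by positivity) (hr n).le
          rw [Finset.mul_sum, ENNReal.ofReal_sum_of_nonneg hnn]
          refine Finset.sum_congr rfl fun n _ => ?_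
          have := hr n
          simp only [J, J', Real.volume_Icc]
          rw [← ENNReal.ofReal_mul (by positivity), ← ENNReal.ofReal_mul (by
            have : 0 ≤ (a n).re + 2 * r n - ((a n).re - 2 * r n) := by linarith
            positivity)]
          congr 1
          field_simp
          ring
  rw [← ofReal_norm] at hfin
  refine (ENNReal.ofReal_le_ofReal_iff ?_).1 hfin
  exact mul_nonneg (by positivity) (Finset.sum_nonneg fun n _ => (hr n).le)

/-! ### Analytic capacity and coverings by discs -/

/-- Simultaneous cutoff for finitely many discs of arbitrary radii, which may overlap. The constant
`c` is universal: each disc contributes a gradient of size at most `c / r n` near itself. -/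
lemma exists_cutoff : ∃ c : ℝ≥0, ∀ (s : Finset ℕ) (a : ℕ → ℂ) (r : ℕ → ℝ), (∀ n, 0 < r n) →
    ∃ φ : ℂ → ℝ, ContDiff ℝ 1 φ ∧
      (∀ n ∈ s, ∀ z ∈ ball (a n) (r n), φ z = 0) ∧
      (∀ z, (∀ n ∈ s, z ∉ closedBall (a n) (2 * r n)) → φ z = 1) ∧
      ∀ z, ‖fderiv ℝ φ z‖ ≤
        ∑ n ∈ s, (closedBall (a n) (2 * r n)).indicator (fun _ => (c / r n : ℝ)) z := by
  classical
  let b : ContDiffBump (0 : ℂ) := ⟨1, 2, by norm_num, by norm_num⟩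
  have hbd : ContDiff ℝ 1 (b : ℂ → ℝ) := b.contDiff
  obtain ⟨M, hM⟩ := (b.hasCompactSupport.fderiv ℝ).exists_bound_of_continuous
    (hbd.continuous_fderiv one_ne_zero)
  have hM0 : 0 ≤ M := (norm_nonneg _).trans (hM 0)
  refine ⟨⟨M, hM0⟩, fun s a r hr => ?_⟩
  set ψ : ℕ → ℂ → ℝ := fun n z => 1 - b ((r n)⁻¹ • (z - a n)) with hψ
  set ψ' : ℕ → ℂ → ℂ →L[ℝ] ℝ := fun n z =>
    -((fderiv ℝ b ((r n)⁻¹ • (z - a n))).comp ((r n)⁻¹ • ContinuousLinearMap.id ℝ ℂ)) with hψ'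
  have hnorm : ∀ n z, ‖(r n)⁻¹ • (z - a n)‖ = dist z (a n) / r n := by
    intro n z
    rw [norm_smul, norm_inv, Real.norm_of_nonneg (hr n).le, dist_eq_norm]
    field_simp
  have hder : ∀ n z, HasFDerivAt (ψ n) (ψ' n z) z := by
    intro n z
    have h1 : HasFDerivAt (fun z : ℂ => (r n)⁻¹ • (z - a n))
        ((r n)⁻¹ • ContinuousLinearMap.id ℝ ℂ) z :=
      ((hasFDerivAt_id (𝕜 := ℝ) z).sub_const (a n)).const_smul ((r n)⁻¹)
    have h2 := ((hbd.differentiable one_ne_zero) ((r n)⁻¹ • (z - a n))).hasFDerivAt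
    exact (h2.comp z h1).const_sub 1
  have hsm : ∀ n, ContDiff ℝ 1 (ψ n) := by
    intro n
    refine contDiff_const.sub (hbd.comp ?_)
    fun_prop
  have h01 : ∀ n z, |ψ n z| ≤ 1 := by
    intro n z
    have h1 := b.nonneg (x := (r n)⁻¹ • (z - a n))
    have h2 := b.le_one (x := (r n)⁻¹ • (z - a n))
    rw [abs_le]
    constructor <;> simp only [hψ] <;> linarith
  have hder_le : ∀ n z, ‖ψ' n z‖ ≤ (closedBall (a n) (2 * r n)).indicator (fun _ => M / r n) z := by
    intro n z
    by_cases hz : z ∈ closedBall (a n) (2 * r n)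
    · rw [indicator_of_mem hz]
      simp only [hψ', norm_neg]
      refine (ContinuousLinearMap.opNorm_comp_le _ _).trans ?_
      rw [div_eq_mul_inv]
      refine mul_le_mul (hM _) ?_ (norm_nonneg _) hM0
      rw [norm_smul, norm_inv, Real.norm_of_nonneg (hr n).le]
      exact mul_le_of_le_one_right (inv_nonneg.2 (hr n).le) ContinuousLinearMap.norm_id_le
    · rw [indicator_of_notMem hz]
      have : fderiv ℝ b ((r n)⁻¹ • (z - a n)) = 0 := by
        by_contra hne
        have hmem := support_fderiv_subset ℝ (f := (b : ℂ → ℝ)) (Function.mem_support.2 hne)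
        rw [b.tsupport_eq, mem_closedBall_zero_iff, hnorm, div_le_iff₀ (hr n)] at hmem
        exact hz hmem
      simp only [hψ', this, ContinuousLinearMap.zero_comp, neg_zero, norm_zero, le_refl]
  refine ⟨fun z => ∏ n ∈ s, ψ n z, contDiff_prod fun n _ => hsm n, ?_, ?_, ?_⟩
  · intro n hn z hz
    refine Finset.prod_eq_zero hn ?_
    have : b ((r n)⁻¹ • (z - a n)) = 1 := by
      apply b.one_of_mem_closedBall
      rw [mem_closedBall_zero_iff, hnorm, div_le_iff₀ (hr n)]
      simpa [b] using (mem_ball.1 hz).le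
    simp only [hψ, this, sub_self]
  · intro z hz
    refine Finset.prod_eq_one fun n hn => ?_
    have : b ((r n)⁻¹ • (z - a n)) = 0 := by
      apply b.zero_of_le_dist
      rw [dist_zero_right, hnorm, le_div_iff₀ (hr n)]
      have := hz n hn
      rw [mem_closedBall, not_le] at this
      exact this.le
    simp only [hψ, this, sub_zero]
  · intro z
    rw [(HasFDerivAt.finsetProd (u := s) fun n _ => hder n z).fderiv]
    refine (norm_sum_le _ _).trans (Finset.sum_le_sum fun n _ => ?_)
    rw [norm_smul]
    refine (mul_le_of_le_one_left (norm_nonneg _) ?_).trans (hder_le n z)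
    rw [norm_prod]
    exact Finset.prod_le_one (fun _ _ => norm_nonneg _) fun m _ => h01 m z

/-- Analytic capacity of a compact set is at most a universal constant times the sum of the radii
of any finite family of discs covering it. -/
lemma exists_capAux_le : ∃ C : ℝ, 0 ≤ C ∧ ∀ (s : Finset ℕ) (a : ℕ → ℂ) (r : ℕ → ℝ),
    (∀ n, 0 < r n) → ∀ F : Set ℂ, IsCompact F → F ⊆ ⋃ n ∈ s, ball (a n) (r n) →
      capAux F ≤ C * ∑ n ∈ s, r n := by
  obtain ⟨c, hc⟩ := exists_cutoff
  refine ⟨8 * c, by positivity, fun s a r hr F hF hFs => ?_⟩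
  have hsum0 : 0 ≤ ∑ n ∈ s, r n := Finset.sum_nonneg fun n _ => (hr n).le
  refine Real.sSup_le ?_ (by positivity)
  rintro _ ⟨f, hfd, hf1, f0, d, -, hd, rfl⟩
  obtain ⟨φ, hφ, hφ0, hφ1, hφd⟩ := hc s a r hr
  set g : ℂ → ℂ := fun z => φ z • f z with hg
  have hFo : IsOpen Fᶜ := hF.isClosed.isOpen_compl
  have hzero : ∀ z ∈ F, g =ᶠ[𝓝 z] fun _ => 0 := by
    intro z hz
    obtain ⟨n, hn, hzn⟩ := mem_iUnion₂.1 (hFs hz)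
    filter_upwards [isOpen_ball.mem_nhds hzn] with w hw
    simp [hg, hφ0 n hn w hw]
  have hgc : ContDiff ℝ 1 g := by
    rw [contDiff_iff_contDiffAt]
    intro z
    by_cases hz : z ∈ F
    · exact contDiffAt_const.congr_of_eventuallyEq (hzero z hz)
    · have : AnalyticAt ℂ f z := hfd.analyticAt (hFo.mem_nhds hz)
      exact hφ.contDiffAt.smul (this.contDiffAt.restrict_scalars ℝ)
  -- off `F`, holomorphy of `f` leaves only the term `f ∂̄φ` in `∂̄(φ f)`
  have hdbar : ∀ z, ‖I • fderiv ℝ g z 1 - fderiv ℝ g z I‖ ≤ 2 * ‖fderiv ℝ φ z‖ := by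
    intro z
    by_cases hz : z ∈ F
    · rw [(hzero z hz).fderiv_eq]
      simp
    · have hfz := (hfd.differentiableAt (hFo.mem_nhds hz)).hasFDerivAt
      have hgz := ((hφ.differentiable one_ne_zero) z).hasFDerivAt.smul
        (hfz.restrictScalars ℝ)
      rw [HasFDerivAt.fderiv (f := g) hgz]
      have hI : fderiv ℂ f z I = I * fderiv ℂ f z 1 := by
        simpa only [smul_eq_mul, mul_one] using (fderiv ℂ f z).map_smul I 1
      have e : I • ((φ z • (fderiv ℂ f z).restrictScalars ℝ +
          (fderiv ℝ φ z).smulRight (f z)) 1) - (φ z • (fderiv ℂ f z).restrictScalars ℝ +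
          (fderiv ℝ φ z).smulRight (f z)) I
          = (I * (fderiv ℝ φ z 1 : ℝ) - (fderiv ℝ φ z I : ℝ)) * f z := by
        simp [hI]
        ring
      rw [e, norm_mul]
      have h1 : ‖fderiv ℝ φ z 1‖ ≤ ‖fderiv ℝ φ z‖ := by
        simpa using (fderiv ℝ φ z).le_opNorm 1
      have h2 : ‖fderiv ℝ φ z I‖ ≤ ‖fderiv ℝ φ z‖ := by
        simpa using (fderiv ℝ φ z).le_opNorm I
      refine (mul_le_of_le_one_right (norm_nonneg _) (hf1 z hz)).trans ?_
      refine (norm_sub_le _ _).trans ?_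
      rw [norm_mul, norm_I, one_mul, norm_real, norm_real]
      linarith
  have hgd : Tendsto (fun z => z * (g z - f0)) (cobounded ℂ) (𝓝 d) := by
    refine hd.congr' ?_
    have hbdd : Bornology.IsBounded (⋃ n ∈ s, closedBall (a n) (2 * r n)) :=
      (isBounded_biUnion_finset s).2 fun n _ => isBounded_closedBall
    filter_upwards [(isBounded_def.1 hbdd)] with z hz
    have : φ z = 1 := hφ1 z fun n hn hzn => hz (mem_biUnion hn hzn)
    simp [hg, this]
  have := norm_le_of_sqSides hgc.continuous hgd (B := 16 * ((2 * c : ℝ≥0) : ℝ) * ∑ n ∈ s, r n)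
    fun R _ => sqSides_le_of_dbar hgc s a r hr (2 * c) (fun z => (hdbar z).trans ?_) R
  · push_cast at this
    linarith
  · refine (mul_le_mul_of_nonneg_left (hφd z) zero_le_two).trans (le_of_eq ?_)
    rw [Finset.mul_sum]
    refine Finset.sum_congr rfl fun n _ => ?_
    by_cases hz : z ∈ closedBall (a n) (2 * r n)
    · simp only [indicator_of_mem hz]
      push_cast
      ring
    · simp only [indicator_of_notMem hz, mul_zero]

/-! ### Arc length on the circle and densities of atomic measures -/

lemma dist_exp_lower {s t : ℝ} (h : |s - t| ≤ π) :
    2 / π * |s - t| ≤ dist (exp (s * I)) (exp (t * I)) := by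
  have e : exp (s * I) - exp (t * I) = exp (t * I) * (exp (I * ((s - t : ℝ) : ℂ)) - 1) := by
    rw [mul_sub, ← Complex.exp_add, mul_one]
    congr 2
    push_cast
    ring
  rw [dist_eq_norm, e, norm_mul, norm_exp_ofReal_mul_I, one_mul, norm_exp_I_mul_ofReal_sub_one,
    norm_mul, Real.norm_eq_abs, Real.norm_eq_abs, abs_two]
  have h2 : |(s - t) / 2| ≤ π / 2 := by
    rw [abs_div, abs_two]; linarith
  have := Real.mul_abs_le_abs_sin h2
  rw [abs_div, abs_two] at this
  linarith

/-- Within a half-circle the angle is comparable to the chord, so the part of a disc of radius `δ`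
in each of two complementary half-circles has length at most `π δ`. -/
lemma circleMeasure_closedBall_le (w : ℂ) (δ : ℝ) :
    circleMeasure (closedBall w δ) ≤ ENNReal.ofReal δ := by
  have hmeas : Measurable fun θ : ℝ => exp ((θ : ℂ) * I) := by fun_prop
  set A : Set ℝ := (fun θ : ℝ => exp ((θ : ℂ) * I)) ⁻¹' closedBall w δ with hA
  have hAm : MeasurableSet A := hmeas measurableSet_closedBall
  have half : ∀ u : ℝ, volume (A ∩ Ico u (u + π)) ≤ ENNReal.ofReal (π * δ) := by
    intro u
    refine (Real.volume_le_diam _).trans (ediam_le fun x hx y hy => ?_)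
    rw [edist_dist]
    refine ENNReal.ofReal_le_ofReal ?_
    have h1 : |x - y| ≤ π := by
      rw [abs_le]
      constructor <;> linarith [hx.2.1, hx.2.2, hy.2.1, hy.2.2]
    have h2 := dist_exp_lower h1
    have h3 : dist (exp (x * I)) (exp (y * I)) ≤ δ + δ :=
      dist_triangle_right _ _ w |>.trans (add_le_add hx.1 hy.1)
    have h4 := h2.trans h3
    rw [Real.dist_eq]
    have hpi := Real.pi_pos
    rw [div_mul_eq_mul_div, div_le_iff₀ hpi] at h4
    linarith
  have hpi := Real.pi_pos
  have hsub : A ∩ Ico 0 (2 * π) ⊆ (A ∩ Ico 0 (0 + π)) ∪ (A ∩ Ico π (π + π)) := by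
    rintro x ⟨hx, h0, h1⟩
    rcases lt_or_ge x π with h | h
    · exact Or.inl ⟨hx, h0, by linarith⟩
    · exact Or.inr ⟨hx, h, by linarith⟩
  have hvol : volume (A ∩ Ico 0 (2 * π)) ≤ ENNReal.ofReal (2 * π) * ENNReal.ofReal δ := by
    refine (measure_mono hsub).trans ((measure_union_le _ _).trans ?_)
    refine (add_le_add (half 0) (half π)).trans (le_of_eq ?_)
    rw [← two_mul, ← ENNReal.ofReal_ofNat 2, ← ENNReal.ofReal_mul (by norm_num),
      ← ENNReal.ofReal_mul (by positivity), mul_assoc]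
  unfold circleMeasure
  rw [Measure.smul_apply, Measure.map_apply hmeas measurableSet_closedBall,
    Measure.restrict_apply hAm, smul_eq_mul]
  refine (mul_le_mul_right hvol _).trans (le_of_eq ?_)
  rw [← mul_assoc, ENNReal.inv_mul_cancel, one_mul]
  · simpa using hpi
  · exact ENNReal.ofReal_ne_top

lemma circleMeasure_singleton (w : ℂ) : circleMeasure {w} = 0 := by
  have := circleMeasure_closedBall_le w 0
  simpa using this

lemma ae_circleMeasure_norm : ∀ᵐ z ∂circleMeasure, ‖z‖ = 1 := by
  unfold circleMeasure
  refine Measure.ae_smul_measure ?_ _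
  rw [ae_map_iff (by fun_prop) (measurableSet_eq_fun (by fun_prop) (by fun_prop))]
  exact Eventually.of_forall fun θ => norm_exp_ofReal_mul_I θ

instance isFiniteMeasure_circleMeasure : IsFiniteMeasure circleMeasure := by
  refine ⟨lt_of_le_of_lt ?_ (ENNReal.ofReal_lt_top (r := 1))⟩
  refine le_trans (measure_mono_ae ?_) (circleMeasure_closedBall_le 0 1)
  filter_upwards [ae_circleMeasure_norm] with z hz _
  change z ∈ closedBall (0:ℂ) 1
  rw [mem_closedBall_zero_iff, hz]

/-- The discrete measure placing mass `r n` at the centre `a n`. -/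
def massAt (a : ℕ → ℂ) (r : ℕ → ℝ) : Measure ℂ :=
  Measure.sum fun n => ENNReal.ofReal (r n) • Measure.dirac (a n)

lemma isFiniteMeasure_massAt (a : ℕ → ℂ) {r : ℕ → ℝ} (hsum : Summable r) :
    IsFiniteMeasure (massAt a r) := by
  refine ⟨?_⟩
  rw [massAt, Measure.sum_apply _ MeasurableSet.univ]
  simp only [Measure.smul_apply, measure_univ, smul_eq_mul, mul_one]
  exact hsum.tsum_ofReal_lt_top

lemma massAt_mutuallySingular (a : ℕ → ℂ) (r : ℕ → ℝ) : massAt a r ⟂ₘ circleMeasure := by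
  have hm : MeasurableSet (range a) := (countable_range a).measurableSet
  refine ⟨(range a)ᶜ, hm.compl, ?_, ?_⟩
  · rw [massAt, Measure.sum_apply _ hm.compl]
    simp
  · rw [compl_compl, ← biUnion_of_singleton (range a)]
    exact (measure_biUnion_null_iff (countable_range a)).2 fun w _ => circleMeasure_singleton w

/-- A purely atomic measure has zero linear density at almost every point of the circle. -/
lemma ae_density_zero (a : ℕ → ℂ) {r : ℕ → ℝ} (hsum : Summable r) :
    ∀ᵐ z ∂circleMeasure, Tendsto
      (fun δ : ℝ => massAt a r (closedBall z δ) / ENNReal.ofReal δ) (𝓝[>] 0) (𝓝 0) := by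
  have := isFiniteMeasure_massAt a hsum
  filter_upwards [Besicovitch.ae_tendsto_rnDeriv (massAt a r) circleMeasure,
    (Measure.rnDeriv_eq_zero _ _).2 (massAt_mutuallySingular a r)] with z hz h0
  rw [h0] at hz
  exact tendsto_of_tendsto_of_tendsto_of_le_of_le tendsto_const_nhds hz (fun _ => zero_le)
    fun δ => ENNReal.div_le_div_left (circleMeasure_closedBall_le z δ) _

lemma sum_le_massAt (a : ℕ → ℂ) {r : ℕ → ℝ} (hr : ∀ n, 0 < r n) (s : Finset ℕ) (B : Set ℂ)
    (hB : MeasurableSet B) (hs : ∀ n ∈ s, a n ∈ B) :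
    ENNReal.ofReal (∑ n ∈ s, r n) ≤ massAt a r B := by
  rw [massAt, Measure.sum_apply _ hB, ENNReal.ofReal_sum_of_nonneg fun n _ => (hr n).le]
  refine le_trans (Finset.sum_le_sum fun n hn => ?_) (ENNReal.sum_le_tsum s)
  simp [Measure.dirac_apply' _ hB, hs n hn]

/-! ### Geometry of the holes and of the approach region -/

/-- A closed disc inside the closed unit disc, other than the unit disc itself, touches the unit
circle in at most one point. -/
lemma eq_of_mem_closedBall_of_norm_eq_one {a z : ℂ} {r : ℝ} (har : ‖a‖ + r ≤ 1) (hr1 : r < 1)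
    (hz : ‖z‖ = 1) (hza : z ∈ closedBall a r) : z = ‖a‖⁻¹ • a := by
  rw [mem_closedBall, dist_eq_norm] at hza
  have hadd : ‖a + (z - a)‖ = ‖a‖ + ‖z - a‖ := by
    apply le_antisymm (norm_add_le _ _)
    rw [add_sub_cancel, hz]
    linarith
  have ha : ‖a‖ ≠ 0 := by
    intro h0
    have : a = 0 := norm_eq_zero.1 h0
    rw [this, sub_zero, hz] at hza
    linarith
  have hray : SameRay ℝ a (a + (z - a)) := (SameRay.refl a).add_right (sameRay_iff_norm_add.2 hadd)
  rw [add_sub_cancel] at hray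
  have := hray.norm_smul_eq
  rw [hz, one_smul] at this
  rw [eq_inv_smul_iff₀ ha, this]

lemma norm_add_le_one {a : ℂ} {r : ℝ} (hr : 0 < r) (h : ball a r ⊆ ball (0:ℂ) 1) :
    ‖a‖ + r ≤ 1 := by
  have hcl : closedBall a r ⊆ closedBall (0:ℂ) 1 := by
    rw [← closure_ball a hr.ne', ← closure_ball (0:ℂ) one_ne_zero]
    exact closure_mono h
  by_cases ha : a = 0
  · have : (r : ℂ) ∈ closedBall a r := by
      simp [ha, abs_of_pos hr]
    have := hcl this
    rw [mem_closedBall_zero_iff, norm_real, Real.norm_of_nonneg hr.le] at this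
    simpa [ha] using this
  · have hn : 0 < ‖a‖ := norm_pos_iff.2 ha
    have hmem : a + (r / ‖a‖) • a ∈ closedBall a r := by
      rw [mem_closedBall, dist_eq_norm, add_sub_cancel_left, norm_smul, norm_div, norm_norm,
        Real.norm_of_nonneg hr.le, div_mul_cancel₀ _ hn.ne']
    have := hcl hmem
    have e : a + (r / ‖a‖) • a = (1 + r / ‖a‖) • a := by rw [add_smul, one_smul]
    rw [e, mem_closedBall_zero_iff, norm_smul, Real.norm_of_nonneg (by positivity)] at this
    have e2 : (1 + r / ‖a‖) * ‖a‖ = ‖a‖ + r := by field_simp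
    linarith

lemma ntRegion_subset {z : ℂ} (hz : ‖z‖ = 1) : ntRegion (1/2) z ⊆ ball (0:ℂ) 1 := by
  rw [← interior_closedBall (0:ℂ) one_ne_zero]
  refine interior_mono (convexHull_min ?_ (convex_closedBall _ _))
  refine union_subset ?_ ((ball_subset_ball (by norm_num)).trans ball_subset_closedBall)
  rw [singleton_subset_iff, mem_closedBall_zero_iff, hz]

lemma anCap_nonneg (E : Set ℂ) : 0 ≤ anCap E := by
  refine Real.sSup_nonneg ?_
  rintro _ ⟨F, -, -, rfl⟩
  refine Real.sSup_nonneg ?_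
  rintro _ ⟨f, -, -, f0, d, -, -, rfl⟩
  exact norm_nonneg d

/-- The Swiss cheese example: although `K = 𝔻̄ ∖ ⋃ B(a_n,r_n)` has empty
interior, for `m`-almost every point of the unit circle the nontangential
region meets `ℂ ∖ K` in a set of vanishing relative analytic capacity:
`limsup_{δ→0} γ(Γ^δ(e^{iθ}) ∖ K)/δ = 0`. -/
theorem stmt15
    (a : ℕ → ℂ) (r : ℕ → ℝ) (hr : ∀ n, 0 < r n)
    (hsub : ∀ n, ball (a n) (r n) ⊆ ball (0:ℂ) 1)
    (hdisj : Pairwise fun i j => Disjoint (closedBall (a i) (r i)) (closedBall (a j) (r j)))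
    (hsum : Summable r)
    (K : Set ℂ) (hK : K = closedBall (0:ℂ) 1 \ ⋃ n, ball (a n) (r n))
    (hint : interior K = ∅) :
    ∀ᵐ z ∂circleMeasure,
      Filter.limsup (fun δ : ℝ => anCap ((ntRegion (1/2) z ∩ ball z δ) \ K) / δ)
        (𝓝[>] (0:ℝ)) = 0 := by
  obtain ⟨C, hC0, hC⟩ := exists_capAux_le
  have har : ∀ n, ‖a n‖ + r n ≤ 1 := fun n => norm_add_le_one (hr n) (hsub n)
  -- a hole equal to the whole unit disc would leave no room for the next one
  have hr1 : ∀ n, r n < 1 := by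
    intro n
    by_contra hn
    have h0 : ‖a n‖ = 0 := le_antisymm (by linarith [har n]) (norm_nonneg _)
    have hbig : a (n + 1) ∈ closedBall (a n) (r n) := by
      rw [norm_eq_zero.1 h0, mem_closedBall_zero_iff]
      linarith [har (n + 1), hr (n + 1)]
    exact Set.disjoint_left.1 (hdisj (Nat.lt_succ_self n).ne) hbig
      (mem_closedBall_self (hr (n + 1)).le)
  have htouch : ∀ᵐ z ∂circleMeasure, ∀ n, z ∉ closedBall (a n) (r n) := by
    rw [ae_all_iff]
    intro n
    have hne : ∀ᵐ z ∂circleMeasure, z ≠ ‖a n‖⁻¹ • a n := by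
      rw [ae_iff]
      simpa using circleMeasure_singleton _
    filter_upwards [hne, ae_circleMeasure_norm] with z hz hz1 hmem
    exact hz (eq_of_mem_closedBall_of_norm_eq_one (har n) (hr1 n) hz1 hmem)
  have hfin : ∀ᵐ z ∂circleMeasure, {n | z ∈ closedBall (a n) (2 * r n)}.Finite := by
    refine ae_finite_setOfPred_mem (ne_top_of_le_ne_top ?_
      (ENNReal.tsum_le_tsum fun n => circleMeasure_closedBall_le (a n) (2 * r n)))
    exact (hsum.mul_left 2).tsum_ofReal_lt_top.ne
  filter_upwards [htouch, hfin, ae_circleMeasure_norm, ae_density_zero a hsum]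
    with z hz hzfin hz1 hdens
  -- holes whose doubled disc contains `z` stay at a positive distance from `z`
  have hfar : ∀ᶠ δ : ℝ in 𝓝[>] 0, ∀ n ∈ {n | z ∈ closedBall (a n) (2 * r n)},
      δ < dist z (a n) - r n := by
    rw [eventually_all_finite hzfin]
    intro n _
    refine nhdsWithin_le_nhds (Iio_mem_nhds ?_)
    have := hz n
    rw [mem_closedBall, not_le] at this
    linarith
  have hdens2 : Tendsto (fun δ : ℝ =>
      (massAt a r (closedBall z (2 * δ)) / ENNReal.ofReal (2 * δ)).toReal) (𝓝[>] 0) (𝓝 0) := by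
    have h2 : Tendsto (fun δ : ℝ => 2 * δ) (𝓝[>] 0) (𝓝[>] 0) := by
      refine tendsto_nhdsWithin_iff.2 ⟨?_, ?_⟩
      · refine (Continuous.tendsto' (by fun_prop) 0 0 (by simp)).mono_left nhdsWithin_le_nhds
      · filter_upwards [self_mem_nhdsWithin] with δ hδ
        have : 0 < δ := hδ
        simpa using this
    exact (ENNReal.tendsto_toReal ENNReal.zero_ne_top).comp (hdens.comp h2)
  have := isFiniteMeasure_massAt a hsum
  refine Tendsto.limsup_eq (squeeze_zero' (g := fun δ : ℝ => C * 2 *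
      (massAt a r (closedBall z (2 * δ)) / ENNReal.ofReal (2 * δ)).toReal) ?_ ?_ ?_)
  · filter_upwards [self_mem_nhdsWithin] with δ hδ
    exact div_nonneg (anCap_nonneg _) (le_of_lt hδ)
  · filter_upwards [self_mem_nhdsWithin, hfar] with δ hδ hδfar
    have hδ0 : (0:ℝ) < δ := hδ
    rw [div_le_iff₀ hδ0, ENNReal.toReal_div, ENNReal.toReal_ofReal (by positivity)]
    have e : C * 2 * ((massAt a r (closedBall z (2 * δ))).toReal / (2 * δ)) * δ =
        C * (massAt a r (closedBall z (2 * δ))).toReal := by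
      field_simp
    rw [e]
    refine Real.sSup_le ?_ (mul_nonneg hC0 ENNReal.toReal_nonneg)
    rintro _ ⟨F, hF, hFE, rfl⟩
    have hcover : F ⊆ ⋃ n, ball (a n) (r n) := by
      intro w hw
      obtain ⟨⟨hwn, -⟩, hwK⟩ := hFE hw
      by_contra hno
      refine hwK ?_
      rw [hK]
      exact ⟨ball_subset_closedBall (ntRegion_subset hz1 hwn), hno⟩
    obtain ⟨t, ht⟩ := hF.elim_finite_subcover _ (fun n => isOpen_ball) hcover
    classical
    set s := t.filter fun n => (ball (a n) (r n) ∩ F).Nonempty with hs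
    have hFs : F ⊆ ⋃ n ∈ s, ball (a n) (r n) := by
      intro w hw
      obtain ⟨n, hn, hwn⟩ := mem_iUnion₂.1 (ht hw)
      exact mem_iUnion₂.2 ⟨n, Finset.mem_filter.2 ⟨hn, w, hwn, hw⟩, hwn⟩
    refine (hC s a r hr F hF hFs).trans (mul_le_mul_of_nonneg_left ?_ hC0)
    rw [← ENNReal.ofReal_le_iff_le_toReal (measure_ne_top _ _)]
    refine sum_le_massAt a hr s _ measurableSet_closedBall fun n hn => ?_
    obtain ⟨w, hwn, hwF⟩ := (Finset.mem_filter.1 hn).2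
    have hwz : dist w z < δ := (hFE hwF).1.2
    have hwa : dist w (a n) < r n := hwn
    have htri : dist z (a n) ≤ dist w z + dist w (a n) := dist_triangle_left _ _ _
    -- a hole meeting `B(z, δ)` is not one of the exceptional ones, hence has radius below `δ`
    have hnot : ¬ dist z (a n) ≤ 2 * r n := fun hmem => by
      have := hδfar n hmem
      linarith
    rw [mem_closedBall, dist_comm]
    linarith
  · simpa using hdens2.const_mul (C * 2)

end
end
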